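/- arXiv:2311.11475 — 5 statements merged into one kernel-verified Lean document; each statement's English description precedes it below -/
import Mathlib

section
/- Let ν be a probability measure on ℝ^d that is absolutely continuous with respect to Lebesgue measure and has finite second moment. Then for every smooth compactly supported test function φ : (0,1) × ℝ^d → ℝ, one has ∫_0^1 ∫_{ℝ^d} (∂_t φ(t,x) + ⟨v(t,x), ∇_x φ(t,x)⟩) p_t(x) dx dt = 0; that is, the marginal flow (p_t) satisfies the continuity equation ∂_t p_t + ∇_x·(p_t v) = 0 in the weak (distributional) sense on (0,1) × ℝ^d. -/
open MeasureTheory Real Set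
open scoped RealInnerProductSpace ENNReal

noncomputable section

section Aux

variable {E : Type*} [NormedAddCommGroup E] [InnerProductSpace ℝ E] [FiniteDimensional ℝ E]
  [MeasurableSpace E] [BorelSpace E]

/-- Gradient of the Gaussian mixture density. -/
lemma aux_hasFDerivAt_p (ν : Measure E) [IsProbabilityMeasure ν]
    (hmom : Integrable (fun y : E => ‖y‖) ν) (A B c : ℝ) (x : E) :
    HasFDerivAt (fun x : E => ∫ y, c * exp (-‖x - B • y‖ ^ 2 / (2 * A ^ 2)) ∂ν)
      (∫ y, (c * exp (-‖x - B • y‖ ^ 2 / (2 * A ^ 2)) * (-(1 / A ^ 2))) •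
        innerSL ℝ (x - B • y) ∂ν) x := by
  have hle : ∀ r : ℝ, exp (-r ^ 2 / (2 * A ^ 2)) ≤ 1 := fun r => by
    rw [exp_le_one_iff]
    exact div_nonpos_of_nonpos_of_nonneg (by nlinarith [sq_nonneg r]) (by positivity)
  refine hasFDerivAt_integral_of_dominated_of_fderiv_le (s := Metric.ball x 1)
    (F' := fun x y => (c * exp (-‖x - B • y‖ ^ 2 / (2 * A ^ 2)) * (-(1 / A ^ 2))) •
        innerSL ℝ (x - B • y))
    (bound := fun y => |c| * (1 / A ^ 2) * (‖x‖ + 1 + |B| * ‖y‖))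
    (Metric.ball_mem_nhds x one_pos) ?_ ?_ ?_ ?_ ?_ ?_
  · exact Filter.Eventually.of_forall fun z => Continuous.aestronglyMeasurable (by fun_prop)
  · refine Integrable.mono' (integrable_const |c|)
      (Continuous.aestronglyMeasurable (by fun_prop)) (Filter.Eventually.of_forall fun y => ?_)
    rw [norm_mul, Real.norm_eq_abs, Real.norm_eq_abs, abs_exp]
    exact mul_le_of_le_one_right (abs_nonneg _) (hle _)
  · exact Continuous.aestronglyMeasurable (by fun_prop)
  · refine Filter.Eventually.of_forall fun y z hz => ?_
    rw [norm_smul, innerSL_apply_norm, norm_mul, norm_mul, Real.norm_eq_abs, Real.norm_eq_abs,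
      Real.norm_eq_abs, abs_exp, abs_neg, abs_of_nonneg (by positivity : 0 ≤ 1 / A ^ 2)]
    have h1 : ‖z - B • y‖ ≤ ‖x‖ + 1 + |B| * ‖y‖ := by
      have h2 : ‖z‖ ≤ ‖x‖ + 1 := by
        have := norm_sub_norm_le z x
        rw [mem_ball_iff_norm] at hz
        linarith
      calc ‖z - B • y‖ ≤ ‖z‖ + ‖B • y‖ := norm_sub_le _ _
        _ ≤ _ := by rw [norm_smul, Real.norm_eq_abs]; linarith
    gcongr
    exact mul_le_of_le_one_right (abs_nonneg _) (hle _)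
  · exact ((integrable_const _).add (hmom.const_mul _)).const_mul _
  · refine Filter.Eventually.of_forall fun y z hz => ?_
    have h1 : HasFDerivAt (fun z : E => z - B • y) (ContinuousLinearMap.id ℝ E) z :=
      (hasFDerivAt_id z).sub_const _
    have h2 := h1.norm_sq
    have h3 : HasFDerivAt (fun z : E => -‖z - B • y‖ ^ 2 / (2 * A ^ 2)) _ z :=
      (h2.neg.mul_const (2 * A ^ 2)⁻¹)
    refine (h3.exp.const_mul c).congr_fderiv ?_
    ext w
    simp only [smul_apply, neg_apply,
      ContinuousLinearMap.comp_apply, smul_eq_mul, innerSL_apply_apply,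
      ContinuousLinearMap.id_apply, mul_inv, one_div, nsmul_eq_mul, Nat.cast_ofNat]
    ring

lemma aux_integrable_gauss {b : ℝ} (hb : 0 < b) :
    Integrable (fun z : E => exp (-b * ‖z‖ ^ 2)) := by
  have h := (GaussianFourier.integrable_cexp_neg_mul_sq_norm_add (V := E) (b := (b : ℂ))
    (by simpa using hb) 0 0).re
  refine h.congr (Filter.Eventually.of_forall fun z => ?_)
  simp only [zero_mul, add_zero]
  rw [show (-(b : ℂ) * (‖z‖ : ℂ) ^ 2) = ((-b * ‖z‖ ^ 2 : ℝ) : ℂ) by push_cast; ring]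
  rw [← Complex.ofReal_exp]
  exact Complex.ofReal_re _

lemma aux_integrable_gauss1 :
    Integrable (fun z : E => (1 + ‖z‖) * exp (-‖z‖ ^ 2 / 2)) := by
  refine Integrable.mono' ((aux_integrable_gauss (E := E) (b := 1 / 4) (by norm_num)).const_mul 2)
      (Continuous.aestronglyMeasurable (by fun_prop)) (Filter.Eventually.of_forall fun z => ?_)
  rw [Real.norm_eq_abs, abs_of_nonneg (by positivity)]
  have h1 : exp (-‖z‖ ^ 2 / 2) = exp (-(1/4) * ‖z‖ ^ 2) * exp (-(1/4) * ‖z‖ ^ 2) := by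
    rw [← exp_add]; congr 1; ring
  have h2 : (1 + ‖z‖) * exp (-(1/4) * ‖z‖ ^ 2) ≤ 2 := by
    have h3 : (1 + ‖z‖) ≤ 2 * exp ((1/4) * ‖z‖ ^ 2) := by
      nlinarith [add_one_le_exp ((1/4) * ‖z‖ ^ 2), sq_nonneg (‖z‖ - 1)]
    calc _ ≤ 2 * exp ((1/4) * ‖z‖ ^ 2) * exp (-(1/4) * ‖z‖ ^ 2) := by gcongr
      _ = 2 := by rw [mul_assoc, ← exp_add]; simp
  rw [h1, ← mul_assoc]
  gcongr

/-- Change of variables. -/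
lemma aux_change (h : E → ℝ) (A c : ℝ) (hA : 0 < A) (m : E) :
    ∫ x, h x * (c * exp (-‖x - m‖ ^ 2 / (2 * A ^ 2)))
      = ∫ z, h (m + A • z) * (c * A ^ Module.finrank ℝ E * exp (-‖z‖ ^ 2 / 2)) := by
  rw [← integral_add_left_eq_self _ m]
  have h1 := Measure.integral_comp_smul (volume : Measure E)
    (fun x => h (m + x) * (c * exp (-‖(m + x) - m‖ ^ 2 / (2 * A ^ 2)))) A
  have hA' : 0 < A ^ Module.finrank ℝ E := by positivity
  rw [abs_of_pos (by positivity), smul_eq_mul, eq_comm, inv_mul_eq_iff_eq_mul₀ hA'.ne',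
    ← integral_const_mul] at h1
  rw [h1]
  congr 1 with z
  rw [add_sub_cancel_left, norm_smul, Real.norm_eq_abs, mul_pow, sq_abs,
    show -(A ^ 2 * ‖z‖ ^ 2) / (2 * A ^ 2) = -‖z‖ ^ 2 / 2 by field_simp]
  ring

/-- Differentiation under the integral sign, along the coupling. -/
lemma aux_hasDerivAt (ν : Measure E) [IsProbabilityMeasure ν]
    (hmom : Integrable (fun y : E => ‖y‖) ν) (φ : ℝ × E → ℝ) (hφ : ContDiff ℝ 1 φ)
    (hc : HasCompactSupport φ) (a b : ℝ → ℝ) (t : ℝ)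
    (ha : ContDiffAt ℝ 1 a t) (hb : ContDiffAt ℝ 1 b t) :
    Integrable (fun q : E × E => fderiv ℝ φ (t, b t • q.1 + a t • q.2)
      (1, deriv b t • q.1 + deriv a t • q.2) * exp (-‖q.2‖ ^ 2 / 2)) (ν.prod volume) ∧
    HasDerivAt (fun t => ∫ q : E × E, φ (t, b t • q.1 + a t • q.2) * exp (-‖q.2‖ ^ 2 / 2)
        ∂(ν.prod volume))
      (∫ q : E × E, fderiv ℝ φ (t, b t • q.1 + a t • q.2)
      (1, deriv b t • q.1 + deriv a t • q.2) * exp (-‖q.2‖ ^ 2 / 2) ∂(ν.prod volume)) t := by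
  obtain ⟨K, hK⟩ := hφ.lipschitzWith_of_hasCompactSupport hc one_ne_zero
  obtain ⟨M, hM⟩ := hφ.continuous.bounded_above_of_compact_support hc
  have hcD : Continuous (fderiv ℝ φ) := hφ.continuous_fderiv one_ne_zero
  have key : ∀ f : ℝ → ℝ, ContDiffAt ℝ 1 f t →
      ∃ C : ℝ, 0 ≤ C ∧ ∀ᶠ u in nhds t, DifferentiableAt ℝ f u ∧ |deriv f u| ≤ C := by
    intro f hf
    refine ⟨|deriv f t| + 1, by positivity, ?_⟩
    have h1 : ∀ᶠ u in nhds t, ContDiffAt ℝ 1 f u := hf.eventually (by simp)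
    have h2 : ContinuousAt (deriv f) t := by
      have h3 : ContDiffAt ℝ 0 (deriv f) t := hf.derivWithin (by simp)
      exact h3.continuousAt
    have h4 := (h2.abs).eventually_lt continuousAt_const (lt_add_one |deriv f t|)
    filter_upwards [h1, h4] with u hu hu'
    exact ⟨hu.differentiableAt one_ne_zero, hu'.le⟩
  obtain ⟨Ca, hCa0, hCa⟩ := key a ha
  obtain ⟨Cb, hCb0, hCb⟩ := key b hb
  have hg1 : Integrable (fun z : E => exp (-‖z‖ ^ 2 / 2)) := by
    refine (aux_integrable_gauss (E := E) (b := 1 / 2) (by norm_num)).congr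
      (Filter.Eventually.of_forall fun z => ?_)
    simp only
    congr 1; ring
  refine hasDerivAt_integral_of_dominated_loc_of_deriv_le
    (F := fun t (q : E × E) => φ (t, b t • q.1 + a t • q.2) * exp (-‖q.2‖ ^ 2 / 2))
    (F' := fun t (q : E × E) => fderiv ℝ φ (t, b t • q.1 + a t • q.2)
      (1, deriv b t • q.1 + deriv a t • q.2) * exp (-‖q.2‖ ^ 2 / 2))
    (bound := fun q => (K * (1 + Cb + Ca)) * ((1 + ‖q.1‖) * ((1 + ‖q.2‖) * exp (-‖q.2‖ ^ 2 / 2))))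
    (Filter.inter_mem hCa hCb) ?_ ?_ ?_ ?_ ?_ ?_
  · exact Filter.Eventually.of_forall fun u => 
      (Continuous.mul (hφ.continuous.comp (by fun_prop)) (by fun_prop)).aestronglyMeasurable
  · refine Integrable.mono' (((integrable_const (1:ℝ)).mul_prod hg1).const_mul M)
      (Continuous.mul (hφ.continuous.comp (by fun_prop)) (by fun_prop)).aestronglyMeasurable
      (Filter.Eventually.of_forall fun q => ?_)
    rw [norm_mul, Real.norm_eq_abs (exp _), abs_exp, one_mul]
    gcongr
    exact hM _
  · refine (Continuous.mul (Continuous.clm_apply (hcD.comp (by fun_prop)) (by fun_prop))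
      (by fun_prop)).aestronglyMeasurable
  · refine Filter.Eventually.of_forall fun q u hu => ?_
    rw [norm_mul, Real.norm_eq_abs (exp _), abs_exp]
    have hn : ‖((1:ℝ), deriv b u • q.1 + deriv a u • q.2)‖ ≤ 1 + Cb * ‖q.1‖ + Ca * ‖q.2‖ := by
      have h2 : ‖deriv b u • q.1 + deriv a u • q.2‖ ≤ Cb * ‖q.1‖ + Ca * ‖q.2‖ := by
        refine (norm_add_le _ _).trans ?_
        rw [norm_smul, norm_smul, Real.norm_eq_abs, Real.norm_eq_abs]
        gcongr
        · exact hu.2.2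
        · exact hu.1.2
      rw [Prod.norm_def]
      refine max_le ?_ ?_
      · simp only [norm_one]
        have : 0 ≤ Cb * ‖q.1‖ + Ca * ‖q.2‖ := by positivity
        linarith
      · simp only; linarith
    have h3 : 1 + Cb * ‖q.1‖ + Ca * ‖q.2‖ ≤ (1 + Cb + Ca) * ((1 + ‖q.1‖) * (1 + ‖q.2‖)) := by
      have e1 := norm_nonneg q.1
      have e2 := norm_nonneg q.2
      have : (1 + Cb + Ca) * ((1 + ‖q.1‖) * (1 + ‖q.2‖)) - (1 + Cb * ‖q.1‖ + Ca * ‖q.2‖)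
        = ‖q.1‖ + ‖q.2‖ + ‖q.1‖ * ‖q.2‖ + Cb + Cb * ‖q.2‖ + Cb * (‖q.1‖ * ‖q.2‖)
          + Ca + Ca * ‖q.1‖ + Ca * (‖q.1‖ * ‖q.2‖) := by ring
      have : 0 ≤ ‖q.1‖ + ‖q.2‖ + ‖q.1‖ * ‖q.2‖ + Cb + Cb * ‖q.2‖ + Cb * (‖q.1‖ * ‖q.2‖)
          + Ca + Ca * ‖q.1‖ + Ca * (‖q.1‖ * ‖q.2‖) := by positivity
      linarith
    calc _ ≤ (K * ((1 + Cb + Ca) * ((1 + ‖q.1‖) * (1 + ‖q.2‖)))) * exp (-‖q.2‖ ^ 2 / 2) := by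
          gcongr
          refine (ContinuousLinearMap.le_opNorm _ _).trans ?_
          exact mul_le_mul (norm_fderiv_le_of_lipschitz ℝ hK) (hn.trans h3) (norm_nonneg _)
            K.coe_nonneg
      _ = _ := by ring
  · exact (((integrable_const (1:ℝ)).add hmom).mul_prod aux_integrable_gauss1).const_mul _
  · refine Filter.Eventually.of_forall fun q u hu => ?_
    have h1 : HasDerivAt (fun u => (u, b u • q.1 + a u • q.2))
        (1, deriv b u • q.1 + deriv a u • q.2) u :=
      (hasDerivAt_id u).prodMk
        ((hu.2.1.hasDerivAt.smul_const _).add (hu.1.1.hasDerivAt.smul_const _))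
    exact (((hφ.differentiable one_ne_zero _).hasFDerivAt.comp_hasDerivAt u h1)).mul_const _

lemma aux_exp_le (A r : ℝ) : exp (-r ^ 2 / (2 * A ^ 2)) ≤ 1 := by
  rw [exp_le_one_iff]
  exact div_nonpos_of_nonpos_of_nonneg (by nlinarith [sq_nonneg r]) (by positivity)

lemma aux_pointwise (ν : Measure E) [IsProbabilityMeasure ν]
    (hmom : Integrable (fun y : E => ‖y‖) ν) (A B A' B' c : ℝ) (hA : 0 < A) (hB : 0 < B)
    (hc : 0 < c) (p : E → ℝ)
    (hp : ∀ x, p x = ∫ y, c * exp (-‖x - B • y‖ ^ 2 / (2 * A ^ 2)) ∂ν) (x w : E) (r : ℝ) :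
    (r + ⟪(B' / B) • x + ((B' / B) * A ^ 2 - A' * A) • gradient (fun z => Real.log (p z)) x, w⟫)
        * p x
      = ∫ y, (r + ⟪B' • y + (A' / A) • (x - B • y), w⟫) *
        (c * exp (-‖x - B • y‖ ^ 2 / (2 * A ^ 2))) ∂ν := by
  have hp' : p = fun x => ∫ y, c * exp (-‖x - B • y‖ ^ 2 / (2 * A ^ 2)) ∂ν := funext hp
  have hk : Integrable (fun y => c * exp (-‖x - B • y‖ ^ 2 / (2 * A ^ 2))) ν := by
    refine Integrable.mono' (integrable_const |c|)
      (Continuous.aestronglyMeasurable (by fun_prop)) (Filter.Eventually.of_forall fun y => ?_)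
    rw [norm_mul, Real.norm_eq_abs, Real.norm_eq_abs, abs_exp]
    exact mul_le_of_le_one_right (abs_nonneg _) (aux_exp_le _ _)
  have hpos : 0 < p x := by
    rw [hp, integral_const_mul]
    refine mul_pos hc (integral_exp_pos ?_)
    simpa [hc.ne'] using hk.const_mul c⁻¹
  have hl : Integrable (fun y => (c * exp (-‖x - B • y‖ ^ 2 / (2 * A ^ 2)) * (-(1 / A ^ 2))) •
        innerSL ℝ (x - B • y)) ν := by
    refine Integrable.mono' (g := fun y => |c| * (1 / A ^ 2) * (‖x‖ + |B| * ‖y‖))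
      (((integrable_const _).add (hmom.const_mul _)).const_mul _)
      (Continuous.aestronglyMeasurable (by fun_prop)) (Filter.Eventually.of_forall fun y => ?_)
    rw [norm_smul, innerSL_apply_norm, norm_mul, norm_mul, Real.norm_eq_abs, Real.norm_eq_abs,
      Real.norm_eq_abs, abs_exp, abs_neg, abs_of_nonneg (by positivity : 0 ≤ 1 / A ^ 2)]
    have h1 : ‖x - B • y‖ ≤ ‖x‖ + |B| * ‖y‖ := by
      refine (norm_sub_le _ _).trans ?_
      rw [norm_smul, Real.norm_eq_abs]
    gcongr
    exact mul_le_of_le_one_right (abs_nonneg _) (aux_exp_le _ _)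
  have hd := aux_hasFDerivAt_p ν hmom A B c x
  rw [← hp'] at hd
  have hlog := hd.log hpos.ne'
  have hgrad : ⟪gradient (fun z => Real.log (p z)) x, w⟫ = (p x)⁻¹ *
      ∫ y, (c * exp (-‖x - B • y‖ ^ 2 / (2 * A ^ 2)) * (-(1 / A ^ 2))) * ⟪x - B • y, w⟫ ∂ν := by
    rw [inner_gradient_left, hlog.fderiv]
    simp only [smul_apply, smul_eq_mul]
    rw [ContinuousLinearMap.integral_apply hl]
    rfl
  have hl' : Integrable (fun y => (c * exp (-‖x - B • y‖ ^ 2 / (2 * A ^ 2)) * (-(1 / A ^ 2))) *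
      ⟪x - B • y, w⟫) ν := hl.apply_continuousLinearMap w
  have e1 : ∀ y, (r + ⟪B' • y + (A' / A) • (x - B • y), w⟫) *
        (c * exp (-‖x - B • y‖ ^ 2 / (2 * A ^ 2)))
      = (r + B' / B * ⟪x, w⟫) * (c * exp (-‖x - B • y‖ ^ 2 / (2 * A ^ 2)))
        + ((B' / B) * A ^ 2 - A' * A) *
          ((c * exp (-‖x - B • y‖ ^ 2 / (2 * A ^ 2)) * (-(1 / A ^ 2))) * ⟪x - B • y, w⟫) := by
    intro y
    generalize (c * exp (-‖x - B • y‖ ^ 2 / (2 * A ^ 2))) = k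
    simp only [inner_add_left, inner_sub_left, real_inner_smul_left]
    field_simp
    ring
  simp_rw [e1]
  rw [integral_add (hk.const_mul _) (hl'.const_mul _), integral_const_mul,
    ← hp x, integral_const_mul, inner_add_left, real_inner_smul_left, real_inner_smul_left, hgrad]
  field_simp
  ring

lemma aux_F (ν : Measure E) [IsProbabilityMeasure ν]
    (hmom : Integrable (fun y : E => ‖y‖) ν) (φ : ℝ × E → ℝ) (hφ : ContDiff ℝ 1 φ)
    (hcs : HasCompactSupport φ) (t A B A' B' c : ℝ) (hA : 0 < A)
    (hIntg : Integrable (fun q : E × E => fderiv ℝ φ (t, B • q.1 + A • q.2)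
      (1, B' • q.1 + A' • q.2) * exp (-‖q.2‖ ^ 2 / 2)) (ν.prod volume)) :
    ∫ x, ∫ y, fderiv ℝ φ (t, x) (1, B' • y + (A' / A) • (x - B • y)) *
        (c * exp (-‖x - B • y‖ ^ 2 / (2 * A ^ 2))) ∂ν
      = c * A ^ Module.finrank ℝ E * ∫ q : E × E, fderiv ℝ φ (t, B • q.1 + A • q.2)
      (1, B' • q.1 + A' • q.2) * exp (-‖q.2‖ ^ 2 / 2) ∂(ν.prod volume) := by
  have hcD : Continuous (fderiv ℝ φ) := hφ.continuous_fderiv one_ne_zero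
  obtain ⟨K, hK⟩ := hφ.lipschitzWith_of_hasCompactSupport hcs one_ne_zero
  have hS : IsCompact (Set.image Prod.snd (tsupport (fderiv ℝ φ))) :=
    (hcs.fderiv ℝ).isCompact.image continuous_snd
  set S : Set E := Set.image Prod.snd (tsupport (fderiv ℝ φ)) with hSdef
  set N : E → ℝ := S.indicator (fun _ => (K : ℝ)) with hN
  have hN0 : ∀ x, 0 ≤ N x := fun x => indicator_nonneg (fun _ _ => K.coe_nonneg) x
  have hNb : ∀ (x : E) (w : ℝ × E), ‖fderiv ℝ φ (t, x) w‖ ≤ N x * ‖w‖ := by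
    intro x w
    by_cases hx : x ∈ S
    · rw [hN, indicator_of_mem hx]
      refine (ContinuousLinearMap.le_opNorm _ _).trans ?_
      exact mul_le_mul_of_nonneg_right (norm_fderiv_le_of_lipschitz ℝ hK) (norm_nonneg _)
    · have h2 : fderiv ℝ φ (t, x) = 0 := by
        by_contra hne
        exact hx ⟨(t, x), subset_tsupport _ hne, rfl⟩
      rw [hN, indicator_of_notMem hx, h2]
      simp
  have hD : Integrable (fun x : E => N x * (1 + ‖x‖)) := by
    have h1 : IntegrableOn (fun x : E => (K : ℝ) * (1 + ‖x‖)) S :=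
      ContinuousOn.integrableOn_compact hS (by fun_prop)
    rw [← integrable_indicator_iff hS.measurableSet] at h1
    refine h1.congr (Filter.Eventually.of_forall fun x => ?_)
    simp only [hN, indicator]
    split_ifs <;> simp
  rw [integral_integral_swap]
  · rw [integral_prod _ hIntg, ← integral_const_mul]
    congr 1 with y
    rw [aux_change (fun x => fderiv ℝ φ (t, x) (1, B' • y + (A' / A) • (x - B • y))) A c hA,
      ← integral_const_mul]
    congr 1 with z
    rw [add_sub_cancel_left, smul_smul, div_mul_cancel₀ _ hA.ne']
    ring
  · refine Integrable.mono' ((hD.mul_prod ((integrable_const (1:ℝ)).add hmom)).const_mul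
      ((1 + |B'| + |A' / A| * (1 + |B|)) * |c|)) ?_ (Filter.Eventually.of_forall fun q => ?_)
    · refine Continuous.aestronglyMeasurable ?_
      refine Continuous.mul (Continuous.clm_apply (hcD.comp (by fun_prop)) (by fun_prop))
        (by fun_prop)
    · obtain ⟨x, y⟩ := q
      simp only [Function.uncurry_apply_pair, Pi.add_apply]
      rw [norm_mul, norm_mul, Real.norm_eq_abs c, Real.norm_eq_abs (exp _), abs_exp]
      have h1 : ‖((1:ℝ), B' • y + (A' / A) • (x - B • y))‖
          ≤ (1 + |B'| + |A' / A| * (1 + |B|)) * ((1 + ‖x‖) * (1 + ‖y‖)) := by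
        have hx := norm_nonneg x
        have hy := norm_nonneg y
        have h2 : ‖B' • y + (A' / A) • (x - B • y)‖
            ≤ |B'| * ‖y‖ + |A' / A| * (‖x‖ + |B| * ‖y‖) := by
          refine (norm_add_le _ _).trans ?_
          rw [norm_smul, norm_smul, Real.norm_eq_abs, Real.norm_eq_abs]
          gcongr
          refine (norm_sub_le _ _).trans ?_
          rw [norm_smul, Real.norm_eq_abs]
        have a1 : 1 ≤ (1 + ‖x‖) * (1 + ‖y‖) := by nlinarith [mul_nonneg hx hy]
        have a2 : ‖y‖ ≤ (1 + ‖x‖) * (1 + ‖y‖) := by nlinarith [mul_nonneg hx hy]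
        have a3 : ‖x‖ ≤ (1 + ‖x‖) * (1 + ‖y‖) := by nlinarith [mul_nonneg hx hy]
        have h3 : |B'| * ‖y‖ + |A' / A| * (‖x‖ + |B| * ‖y‖) ≤
          |B'| * ((1 + ‖x‖) * (1 + ‖y‖)) + |A' / A| * ((1 + ‖x‖) * (1 + ‖y‖)
            + |B| * ((1 + ‖x‖) * (1 + ‖y‖))) := by gcongr
        rw [Prod.norm_def]
        refine max_le ?_ ?_
        · have : 0 ≤ |B'| * ((1 + ‖x‖) * (1 + ‖y‖)) + |A' / A| * ((1 + ‖x‖) * (1 + ‖y‖)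
            + |B| * ((1 + ‖x‖) * (1 + ‖y‖))) := by positivity
          simp only [norm_one]
          linarith
        · simp only
          linarith
      calc _ ≤ (N x * ((1 + |B'| + |A' / A| * (1 + |B|)) *
            ((1 + ‖x‖) * (1 + ‖y‖)))) * (|c| * 1) := by
            gcongr
            · exact mul_nonneg (hN0 x) (by positivity)
            · exact (hNb _ _).trans (mul_le_mul_of_nonneg_left h1 (hN0 x))
            · exact aux_exp_le _ _
        _ = _ := by ring

lemma aux_bound (ν : Measure E) [IsProbabilityMeasure ν] (φ : ℝ × E → ℝ) (hφ : ContDiff ℝ 1 φ)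
    (hcs : HasCompactSupport φ) (a b : ℝ → ℝ) (t₀ : ℝ) (h0 : ∀ x, φ (t₀, x) = 0) :
    Filter.Tendsto (fun t => ∫ q : E × E, φ (t, b t • q.1 + a t • q.2) * exp (-‖q.2‖ ^ 2 / 2)
        ∂(ν.prod volume)) (nhds t₀) (nhds 0) := by
  obtain ⟨K, hK⟩ := hφ.lipschitzWith_of_hasCompactSupport hcs one_ne_zero
  have hg1 : Integrable (fun z : E => exp (-‖z‖ ^ 2 / 2)) := by
    refine (aux_integrable_gauss (E := E) (b := 1 / 2) (by norm_num)).congr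
      (Filter.Eventually.of_forall fun z => ?_)
    simp only
    congr 1; ring
  have hg2 : Integrable (fun q : E × E => exp (-‖q.2‖ ^ 2 / 2)) (ν.prod volume) := by
    simpa using (integrable_const (μ := ν) (1:ℝ)).mul_prod hg1
  refine squeeze_zero_norm (a := fun t => K * |t - t₀| *
    ∫ q : E × E, exp (-‖q.2‖ ^ 2 / 2) ∂(ν.prod volume)) (fun t => ?_) ?_
  · rw [← integral_const_mul]
    refine norm_integral_le_of_norm_le (hg2.const_mul _) (Filter.Eventually.of_forall fun q => ?_)
    rw [norm_mul, Real.norm_eq_abs (exp _), abs_exp]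
    gcongr
    have := hK.dist_le_mul (t, b t • q.1 + a t • q.2) (t₀, b t • q.1 + a t • q.2)
    rwa [h0, dist_zero_right, Prod.dist_eq, dist_self, max_eq_left dist_nonneg,
      Real.dist_eq] at this
  · have : Continuous (fun t => K * |t - t₀| *
      ∫ q : E × E, exp (-‖q.2‖ ^ 2 / 2) ∂(ν.prod volume)) := by fun_prop
    simpa using this.tendsto t₀

end Aux

/-- **Continuity equation in the weak sense for the Gaussian interpolation marginals.**
If `ν` is a probability measure on `ℝ^d`, absolutely continuous w.r.t. Lebesgue measure and
with finite second moment, then for every smooth compactly supported test function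
`φ : (0,1) × ℝ^d → ℝ`,
`∫_0^1 ∫ (∂_t φ + ⟨v(t,x), ∇_x φ⟩) p_t(x) dx dt = 0`. -/
theorem gif_continuity_equation_weak
    (d : ℕ) (hd : 1 ≤ d)
    (ν : Measure (EuclideanSpace ℝ (Fin d))) [IsProbabilityMeasure ν]
    (hac : ν ≪ volume)
    (hmom : Integrable (fun y => ‖y‖ ^ 2) ν)
    -- interpolation coefficients
    (a b : ℝ → ℝ)
    (ha'_nonpos : ∀ t ∈ Icc (0:ℝ) 1, deriv a t ≤ 0)
    (hb'_nonneg : ∀ t ∈ Icc (0:ℝ) 1, 0 ≤ deriv b t)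
    (ha0 : 0 < a 0) (hb0 : 0 ≤ b 0) (ha1 : a 1 = 0) (hb1 : b 1 = 1)
    (ha_pos : ∀ t ∈ Ioo (0:ℝ) 1, 0 < a t)
    (hb_pos : ∀ t ∈ Ioo (0:ℝ) 1, 0 < b t)
    (ha_C2 : ContDiffOn ℝ 2 a (Ico 0 1))
    (hb_C2 : ContDiffOn ℝ 2 b (Ico 0 1))
    (ha2_C1 : ContDiffOn ℝ 1 (fun t => (a t) ^ 2) (Icc 0 1))
    (hb_C1 : ContDiffOn ℝ 1 b (Icc 0 1))
    -- marginal density, score and velocity field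
    (p : ℝ → EuclideanSpace ℝ (Fin d) → ℝ)
    (hp : ∀ t x, p t x =
      ∫ y, (2 * π * (a t) ^ 2) ^ (-(d:ℝ)/2) * exp (-‖x - b t • y‖ ^ 2 / (2 * (a t) ^ 2)) ∂ν)
    (s : ℝ → EuclideanSpace ℝ (Fin d) → EuclideanSpace ℝ (Fin d))
    (hs : ∀ t ∈ Ioo (0:ℝ) 1, ∀ x, s t x = gradient (fun z => Real.log (p t z)) x)
    (v : ℝ → EuclideanSpace ℝ (Fin d) → EuclideanSpace ℝ (Fin d))
    (hv : ∀ t ∈ Ioo (0:ℝ) 1, ∀ x,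
      v t x = (deriv b t / b t) • x
        + ((deriv b t / b t) * (a t) ^ 2 - deriv a t * a t) • s t x)
    -- test function, smooth and compactly supported inside (0,1) × ℝ^d
    (φ : ℝ × EuclideanSpace ℝ (Fin d) → ℝ)
    (hφ_smooth : ContDiff ℝ (⊤ : ℕ∞) φ)
    (hφ_cpt : HasCompactSupport φ)
    (hφ_supp : Function.support φ ⊆ (Ioo (0:ℝ) 1) ×ˢ (univ : Set (EuclideanSpace ℝ (Fin d)))) :
    ∫ t in Ioo (0:ℝ) 1, ∫ x,
      (deriv (fun u => φ (u, x)) t + ⟪v t x, gradient (fun z => φ (t, z)) x⟫) * p t x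
      = 0 := by
  have hφ1 : ContDiff ℝ 1 φ := hφ_smooth.of_le (by exact_mod_cast le_top)
  have hmom1 : Integrable (fun y : EuclideanSpace ℝ (Fin d) => ‖y‖) ν := by
    refine Integrable.mono' ((integrable_const (1:ℝ)).add hmom)
      (Continuous.aestronglyMeasurable (by fun_prop)) (Filter.Eventually.of_forall fun y => ?_)
    simp only [norm_norm, Pi.add_apply]
    nlinarith [sq_nonneg (‖y‖ - 1)]
  have hz : ∀ t, t ∉ Ioo (0:ℝ) 1 → ∀ x, φ (t, x) = 0 := fun t ht x => by
    by_contra hne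
    exact ht (hφ_supp hne).1
  set C : ℝ := (2 * π) ^ (-(d:ℝ)/2) with hC
  set G : ℝ → ℝ := fun t => C * ∫ q : EuclideanSpace ℝ (Fin d) × EuclideanSpace ℝ (Fin d),
    φ (t, b t • q.1 + a t • q.2) * exp (-‖q.2‖ ^ 2 / 2) ∂(ν.prod volume) with hG
  have hder : ∀ t ∈ Ioo (0:ℝ) 1, HasDerivAt G (∫ x,
      (deriv (fun u => φ (u, x)) t + ⟪v t x, gradient (fun z => φ (t, z)) x⟫) * p t x) t := by
    intro t ht
    have hA := ha_pos t ht
    have hB := hb_pos t ht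
    have hnhds : Ico (0:ℝ) 1 ∈ nhds t := Ico_mem_nhds ht.1 ht.2
    obtain ⟨hIntg, hd⟩ := aux_hasDerivAt ν hmom1 φ hφ1 hφ_cpt a b t
      ((ha_C2.contDiffAt hnhds).of_le (by norm_num)) ((hb_C2.contDiffAt hnhds).of_le (by norm_num))
    refine (hd.const_mul C).congr_deriv ?_
    have hCA : C = (2 * π * (a t) ^ 2) ^ (-(d:ℝ)/2) *
        a t ^ Module.finrank ℝ (EuclideanSpace ℝ (Fin d)) := by
      rw [finrank_euclideanSpace_fin, Real.mul_rpow (by positivity) (by positivity),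
        ← Real.rpow_natCast (a t) 2, ← Real.rpow_mul hA.le, mul_assoc, ← Real.rpow_natCast (a t) d,
        ← Real.rpow_add hA]
      rw [show ((2:ℕ):ℝ) * (-(d:ℝ) / 2) + d = 0 by push_cast; ring, Real.rpow_zero, mul_one]
    rw [hCA, ← aux_F ν hmom1 φ hφ1 hφ_cpt t (a t) (b t) (deriv a t) (deriv b t) _ hA hIntg]
    congr 1 with x
    rw [hv t ht x, hs t ht x, aux_pointwise ν hmom1 (a t) (b t) (deriv a t) (deriv b t)
      ((2 * π * (a t) ^ 2) ^ (-(d:ℝ)/2)) hA hB (by positivity) (p t) (hp t)]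
    congr 1 with y
    congr 1
    have hf : HasFDerivAt φ (fderiv ℝ φ (t, x)) (t, x) :=
      (hφ1.differentiable one_ne_zero _).hasFDerivAt
    have h1 : HasDerivAt (fun u => φ (u, x)) (fderiv ℝ φ (t, x) (1, 0)) t :=
      hf.comp_hasDerivAt t ((hasDerivAt_id t).prodMk (hasDerivAt_const t x))
    have h2 : HasFDerivAt (fun z => φ (t, z)) ((fderiv ℝ φ (t, x)).comp
        (ContinuousLinearMap.inr ℝ ℝ (EuclideanSpace ℝ (Fin d)))) x :=
      hf.comp x (hasFDerivAt_prodMk_right t x)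
    rw [h1.deriv, real_inner_comm, inner_gradient_left, h2.fderiv,
      ContinuousLinearMap.comp_apply, ContinuousLinearMap.inr_apply, ← map_add]
    simp
  have hlim : ∀ t₀, t₀ ∉ Ioo (0:ℝ) 1 → Filter.Tendsto G (nhds t₀) (nhds 0) := by
    intro t₀ h
    simpa using (aux_bound ν φ hφ1 hφ_cpt a b t₀ (hz t₀ h)).const_mul C
  by_cases hI : IntegrableOn (fun t => ∫ x,
      (deriv (fun u => φ (u, x)) t + ⟪v t x, gradient (fun z => φ (t, z)) x⟫) * p t x)
      (Ioo (0:ℝ) 1)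
  · have hI' := (intervalIntegrable_iff_integrableOn_Ioo_of_le (μ := volume) zero_le_one).2 hI
    have := intervalIntegral.integral_eq_sub_of_hasDerivAt_of_tendsto zero_lt_one hder hI'
      ((hlim 0 (by simp)).mono_left nhdsWithin_le_nhds)
      ((hlim 1 (by simp)).mono_left nhdsWithin_le_nhds)
    rw [intervalIntegral.integral_of_le zero_le_one, integral_Ioc_eq_integral_Ioo, sub_zero] at this
    exact this
  · exact integral_undef hI
end
end

section
/- Suppose ν(dy) = exp(−U(y)) dy is a probability measure on ℝ^d with finite second moment, U ∈ C²(ℝ^d), and ∇²U(y) ⪯ β I_d for all y (ν is β-semi-log-convex) for some β > 0. Then for every t ∈ (0,1) and every x ∈ ℝ^d, ∇_x v(t,x) ⪰ ((β a_t ȧ_t + b_t ḃ_t)/(β a_t² + b_t²)) I_d. -/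
open MeasureTheory Real Set
open scoped RealInnerProductSpace ENNReal

noncomputable section

/-- Differentiation under the integral sign for `x ↦ ∫ k (x - b y) dν`. -/
lemma hasFDerivAt_integral_kernel {E F : Type*} [NormedAddCommGroup E] [NormedSpace ℝ E]
    [MeasurableSpace E] [BorelSpace E] [SecondCountableTopology E]
    [NormedAddCommGroup F] [NormedSpace ℝ F]
    (ν : Measure E) [IsProbabilityMeasure ν] (b : ℝ) (k : E → F) (k' : E → E →L[ℝ] F)
    (hk : ∀ z, HasFDerivAt k (k' z) z) (hk' : Continuous k') (M M' : ℝ)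
    (hM : ∀ z, ‖k z‖ ≤ M) (hM' : ∀ z, ‖k' z‖ ≤ M') (x : E) :
    HasFDerivAt (fun x => ∫ y, k (x - b • y) ∂ν) (∫ y, k' (x - b • y) ∂ν) x := by
  have hkc : Continuous k := continuous_iff_continuousAt.2 fun z => (hk z).continuousAt
  have hm : ∀ x, AEStronglyMeasurable (fun y => k (x - b • y)) ν := fun x =>
    (hkc.comp (by fun_prop : Continuous fun y : E => x - b • y)).aestronglyMeasurable
  refine hasFDerivAt_integral_of_dominated_of_fderiv_le (F := fun x y => k (x - b • y))
    (F' := fun x y => k' (x - b • y)) (bound := fun _ => M') (s := univ) Filter.univ_mem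
    (Filter.Eventually.of_forall hm) ?_ ?_ ?_ (integrable_const _) ?_
  · exact Integrable.of_bound (hm x) M (Filter.Eventually.of_forall fun y => hM _)
  · exact (hk'.comp (by fun_prop : Continuous fun y : E => x - b • y)).aestronglyMeasurable
  · exact Filter.Eventually.of_forall fun y z _ => hM' _
  · refine Filter.Eventually.of_forall fun y z _ => ?_
    have h1 : HasFDerivAt (fun z : E => z - b • y) (ContinuousLinearMap.id ℝ E) z :=
      (hasFDerivAt_id z).sub_const _
    simpa [Function.comp_def] using (hk (z - b • y)).comp z h1

lemma gauss_bound (c : ℝ) (hc : 0 < c) (r : ℝ) : r ^ 2 * exp (-(c * r ^ 2)) ≤ 1 / c := by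
  rw [exp_neg, ← div_eq_mul_inv, div_le_div_iff₀ (exp_pos _) hc]
  have := add_one_le_exp (c * r ^ 2)
  linarith

lemma gauss_le_one (c : ℝ) (hc : 0 < c) (r : ℝ) : exp (-(c * r ^ 2)) ≤ 1 := by
  rw [exp_le_one_iff]; have := mul_nonneg hc.le (sq_nonneg r); linarith

lemma gauss_bound1 (c : ℝ) (hc : 0 < c) (r : ℝ) (hr : 0 ≤ r) :
    exp (-(c * r ^ 2)) * r ≤ 1 + 1 / c := by
  have h1 := gauss_bound c hc r
  have h2 := gauss_le_one c hc r
  have h3 : r ≤ 1 + r ^ 2 := by nlinarith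
  have h4 := mul_le_mul_of_nonneg_left h3 (exp_pos (-(c * r ^ 2))).le
  linarith

lemma continuous_smul_const_add {E G : Type*} [TopologicalSpace E] [NormedAddCommGroup G]
    [NormedSpace ℝ G] {s : E → ℝ} {f : E → G} (A : G) (hs : Continuous s) (hf : Continuous f) :
    Continuous fun z => s z • A + f z := by fun_prop

lemma norm_smul_const_add_le {G : Type*} [NormedAddCommGroup G]
    [NormedSpace ℝ G] (s : ℝ) (A f : G) : ‖s • A + f‖ ≤ ‖s‖ * ‖A‖ + ‖f‖ :=
  (norm_add_le _ _).trans (by rw [norm_smul])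

/-- Gaussian smoothing of a probability measure is twice differentiable. -/
lemma gauss_smooth {E : Type*} [NormedAddCommGroup E] [InnerProductSpace ℝ E]
    [MeasurableSpace E] [BorelSpace E] [SecondCountableTopology E]
    (ν : Measure E) [IsProbabilityMeasure ν] (b c : ℝ) (hc : 0 < c) :
    Differentiable ℝ (fun x => ∫ y, exp (-(c * ‖x - b • y‖ ^ 2)) ∂ν) ∧
    Differentiable ℝ (fderiv ℝ (fun x => ∫ y, exp (-(c * ‖x - b • y‖ ^ 2)) ∂ν)) := by
  let g : E → ℝ := fun z => exp (-(c * ‖z‖ ^ 2))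
  let J : E →L[ℝ] E →L[ℝ] ℝ := innerSL ℝ
  have nJ : ∀ z, ‖J z‖ = ‖z‖ := fun z => innerSL_apply_norm ℝ z
  have aJ : ∀ z w, J z w = inner ℝ z w := fun z w => rfl
  let g' : E → E →L[ℝ] ℝ := fun z => (-(2 * c) * g z) • J z
  let g'' : E → E →L[ℝ] E →L[ℝ] ℝ := fun z =>
    (-(2 * c) * g z) • J
      + ((-(2 * c)) • g' z).smulRight (J z)
  have hg : ∀ z, HasFDerivAt g (g' z) z := by
    intro z
    have h1 := ((hasFDerivAt_id (𝕜 := ℝ) z).norm_sq.const_mul c).neg.exp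
    refine h1.congr_fderiv ?_
    ext w
    simp [g', g, aJ]
    ring
  have hg' : ∀ z, HasFDerivAt g' (g'' z) z := by
    intro z
    exact ((hg z).const_mul (-(2 * c))).smul J.hasFDerivAt
  have cg : Continuous g := by fun_prop
  have cg' : Continuous g' := by fun_prop
  have cg'' : Continuous g'' := by
    have : Continuous fun z => ((-(2 * c)) • g' z).smulRight (J z) := by
      have := (ContinuousLinearMap.smulRightL ℝ E (E →L[ℝ] ℝ)).continuous₂.comp
        ((cg'.const_smul (-(2 * c))).prodMk J.continuous)
      exact this
    exact continuous_smul_const_add J (continuous_const.mul cg) this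
  have ng : ∀ z, ‖g z‖ ≤ 1 := fun z => by
    rw [norm_of_nonneg (exp_pos _).le]; exact gauss_le_one c hc _
  have nn' : ∀ z, ‖g' z‖ = 2 * c * (g z * ‖z‖) := fun z => by
    simp only [g', norm_smul, nJ, norm_mul, norm_neg]
    rw [norm_of_nonneg (exp_pos _).le, norm_of_nonneg hc.le]; simp; ring
  have ng' : ∀ z, ‖g' z‖ ≤ 2 * c * (1 + 1 / c) := fun z => by
    rw [nn' z]
    exact mul_le_mul_of_nonneg_left (gauss_bound1 c hc _ (norm_nonneg _)) (by positivity)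
  have ng'' : ∀ z, ‖g'' z‖ ≤ 2 * c * 1 * ‖J‖
      + 2 * c * (2 * c * (1 / c)) := fun z => by
    refine (norm_smul_const_add_le (-(2 * c) * g z) J
      (((-(2 * c)) • g' z).smulRight (J z))).trans (add_le_add ?_ ?_)
    · rw [norm_mul, norm_neg, norm_of_nonneg (by positivity : 0 ≤ 2 * c)]
      gcongr
      exact ng z
    · rw [ContinuousLinearMap.norm_smulRight_apply, norm_smul, norm_neg,
        norm_of_nonneg (by positivity : 0 ≤ 2 * c), nn' z, nJ]
      have := gauss_bound c hc ‖z‖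
      calc 2 * c * (2 * c * (g z * ‖z‖)) * ‖z‖ = 2 * c * (2 * c * (‖z‖ ^ 2 * g z)) := by ring
        _ ≤ _ := by gcongr
  have H1 := fun x => hasFDerivAt_integral_kernel ν b g g' hg cg' _ _ ng ng' x
  have H2 := fun x => hasFDerivAt_integral_kernel ν b g' g'' hg' cg'' _ _ ng' ng'' x
  refine ⟨fun x => (H1 x).differentiableAt, ?_⟩
  have : fderiv ℝ (fun x => ∫ y, exp (-(c * ‖x - b • y‖ ^ 2)) ∂ν)
      = fun x => ∫ y, g' (x - b • y) ∂ν := funext fun x => (H1 x).fderiv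
  rw [this]
  exact fun x => (H2 x).differentiableAt

/-- First and second derivatives along a line. -/
lemma line_derivs {E : Type*} [NormedAddCommGroup E] [InnerProductSpace ℝ E]
    (f : E → ℝ) (m : ℝ) (hf : Differentiable ℝ f) (hf' : Differentiable ℝ (fderiv ℝ f)) (x w : E) :
    (∀ r : ℝ, HasDerivAt (fun r : ℝ => f (x + r • w) + m / 2 * ‖x + r • w‖ ^ 2)
      (fderiv ℝ f (x + r • w) w + m * (inner ℝ x w + r * ‖w‖ ^ 2)) r) ∧
    (∀ r : ℝ, HasDerivAt
      (fun r : ℝ => fderiv ℝ f (x + r • w) w + m * (inner ℝ x w + r * ‖w‖ ^ 2))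
      (fderiv ℝ (fderiv ℝ f) (x + r • w) w w + m * ‖w‖ ^ 2) r) := by
  have hl : ∀ r : ℝ, HasDerivAt (fun r : ℝ => x + r • w) w r := fun r => by
    simpa using ((hasDerivAt_id r).smul_const w).const_add x
  constructor
  · intro r
    have h1 := (hf (x + r • w)).hasFDerivAt.comp_hasDerivAt r (hl r)
    have h2 := (hl r).norm_sq.const_mul (m / 2)
    refine (h1.add h2).congr_deriv ?_
    rw [inner_add_left, inner_smul_left, real_inner_self_eq_norm_sq]
    simp
    ring
  · intro r
    have h0 : HasDerivAt (fun r : ℝ => fderiv ℝ f (x + r • w))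
        (fderiv ℝ (fderiv ℝ f) (x + r • w) w) r :=
      (hf' (x + r • w)).hasFDerivAt.comp_hasDerivAt r (hl r)
    have h1 : HasDerivAt (fun r : ℝ => fderiv ℝ f (x + r • w) w)
        (fderiv ℝ (fderiv ℝ f) (x + r • w) w w) r :=
      (ContinuousLinearMap.apply ℝ ℝ w).hasFDerivAt.comp_hasDerivAt r h0
    have h2 := (((hasDerivAt_id r).mul_const (‖w‖ ^ 2)).const_add (inner ℝ x w)).const_mul m
    refine (h1.add h2).congr_deriv ?_
    simp

lemma line_convex {E : Type*} [NormedAddCommGroup E] [InnerProductSpace ℝ E]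
    (f : E → ℝ) (m : ℝ) (hf : Differentiable ℝ f) (hf' : Differentiable ℝ (fderiv ℝ f))
    (h : ∀ x w, 0 ≤ fderiv ℝ (fderiv ℝ f) x w w + m * ‖w‖ ^ 2) (x w : E) :
    ConvexOn ℝ univ (fun r : ℝ => f (x + r • w) + m / 2 * ‖x + r • w‖ ^ 2) := by
  obtain ⟨h1, h2⟩ := line_derivs f m hf hf' x w
  have e1 := funext fun r => (h1 r).deriv
  refine convexOn_univ_of_deriv2_nonneg (fun r => (h1 r).differentiableAt) ?_ ?_
  · rw [e1]; exact fun r => (h2 r).differentiableAt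
  · intro r
    change 0 ≤ deriv (deriv _) r
    rw [e1, (h2 r).deriv]
    exact h _ _

lemma hess_of_line_convex {E : Type*} [NormedAddCommGroup E] [InnerProductSpace ℝ E]
    (f : E → ℝ) (m : ℝ) (hf : Differentiable ℝ f) (hf' : Differentiable ℝ (fderiv ℝ f)) (x w : E)
    (h : ConvexOn ℝ univ (fun r : ℝ => f (x + r • w) + m / 2 * ‖x + r • w‖ ^ 2)) :
    0 ≤ fderiv ℝ (fderiv ℝ f) x w w + m * ‖w‖ ^ 2 := by
  obtain ⟨h1, h2⟩ := line_derivs f m hf hf' x w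
  have e1 := funext fun r => (h1 r).deriv
  have hm := h.monotoneOn_deriv (fun r _ => (h1 r).differentiableAt)
  rw [monotoneOn_univ] at hm
  have := hm.deriv_nonneg (x := (0 : ℝ))
  rw [e1, (h2 0).deriv] at this
  simpa using this

/-- Mixtures of log-convex functions are log-convex. -/
lemma log_convex_mixture {α : Type*} [MeasurableSpace α] (μ : Measure α) (φ : ℝ → α → ℝ)
    (hφ : ∀ z, ConvexOn ℝ univ (fun r => φ r z))
    (hi : ∀ r, Integrable (fun z => exp (φ r z)) μ)
    (hpos : ∀ r, 0 < ∫ z, exp (φ r z) ∂μ) :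
    ConvexOn ℝ univ (fun r => log (∫ z, exp (φ r z) ∂μ)) := by
  refine ⟨convex_univ, fun r _ q _ θ η hθ hη hs => ?_⟩
  set A := ∫ z, exp (φ r z) ∂μ with hA
  set B := ∫ z, exp (φ q z) ∂μ with hB
  have pA : 0 < A := hpos r
  have pB : 0 < B := hpos q
  simp only [smul_eq_mul]
  rw [log_le_iff_le_exp (hpos _)]
  set L := θ * log A + η * log B with hL
  have key : ∀ z, exp (φ (θ * r + η * q) z)
      ≤ exp L * (θ * (exp (φ r z) / A) + η * (exp (φ q z) / B)) := by
    intro z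
    have h1 := (hφ z).2 (mem_univ r) (mem_univ q) hθ hη hs
    have h2 := convexOn_exp.2 (mem_univ (φ r z - log A)) (mem_univ (φ q z - log B)) hθ hη hs
    simp only [smul_eq_mul, exp_sub, exp_log pA, exp_log pB] at h1 h2
    calc exp (φ (θ * r + η * q) z)
        ≤ exp (L + (θ * (φ r z - log A) + η * (φ q z - log B))) := by
          apply exp_le_exp.2; rw [hL]; linarith
      _ = exp L * exp (θ * (φ r z - log A) + η * (φ q z - log B)) := exp_add _ _
      _ ≤ _ := mul_le_mul_of_nonneg_left h2 (exp_pos _).le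
  have i1 := ((hi r).div_const A).const_mul θ
  have i2 := ((hi q).div_const B).const_mul η
  calc ∫ z, exp (φ (θ * r + η * q) z) ∂μ
      ≤ ∫ z, exp L * (θ * (exp (φ r z) / A) + η * (exp (φ q z) / B)) ∂μ :=
        integral_mono (hi _) ((i1.add i2).const_mul _) key
    _ = exp L * (θ * (A / A) + η * (B / B)) := by
        rw [integral_const_mul, integral_add i1 i2, integral_const_mul, integral_const_mul,
          integral_div, integral_div]
    _ = exp L := by rw [div_self pA.ne', div_self pB.ne']; simp [hs]

/-- The Hessian lower bound for the log of the Gaussian smoothing. -/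
lemma hess_log_lower {E : Type*} [NormedAddCommGroup E] [InnerProductSpace ℝ E]
    [FiniteDimensional ℝ E] [MeasurableSpace E] [BorelSpace E]
    (β : ℝ) (hβ : 0 < β) (U : E → ℝ) (hU_C2 : ContDiff ℝ 2 U)
    (hU_conv : ∀ y w : E, iteratedFDeriv ℝ 2 U y ![w, w] ≤ β * ‖w‖ ^ 2)
    (ν : Measure E) [IsProbabilityMeasure ν]
    (hν : ν = volume.withDensity (fun y => ENNReal.ofReal (exp (-U y))))
    (a b K : ℝ) (ha : 0 < a) (hK : 0 < K) (P : E → ℝ)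
    (hP : ∀ x, P x = ∫ y, K * exp (-‖x - b • y‖ ^ 2 / (2 * a ^ 2)) ∂ν) :
    Differentiable ℝ (fderiv ℝ (fun z => log (P z))) ∧
    ∀ x w, 0 ≤ fderiv ℝ (fderiv ℝ (fun z => log (P z))) x w w
      + β / (β * a ^ 2 + b ^ 2) * ‖w‖ ^ 2 := by
  set c : ℝ := 1 / (2 * a ^ 2) with hc
  have hc0 : 0 < c := by positivity
  set Z : E → ℝ := fun x => ∫ y, exp (-(c * ‖x - b • y‖ ^ 2)) ∂ν with hZ
  obtain ⟨dZ, dZ'⟩ := gauss_smooth ν b c hc0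
  have hPZ : ∀ x, P x = K * Z x := by
    intro x
    rw [hP, integral_const_mul]
    congr 2
    ext y
    congr 1
    rw [hc]; ring
  have iZ : ∀ x, Integrable (fun y => exp (-(c * ‖x - b • y‖ ^ 2))) ν := fun x =>
    Integrable.of_bound (by fun_prop) 1 (Filter.Eventually.of_forall fun y => by
      rw [norm_of_nonneg (exp_pos _).le]; exact gauss_le_one c hc0 _)
  have pZ : ∀ x, 0 < Z x := fun x => integral_exp_pos (iZ x)
  have hlog : (fun z => log (P z)) = fun z => log K + log (Z z) := by
    ext z; rw [hPZ, log_mul hK.ne' (pZ z).ne']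
  have hd1 : ∀ x, HasFDerivAt (fun z => log (P z)) ((Z x)⁻¹ • fderiv ℝ Z x) x := by
    intro x; rw [hlog]
    exact ((dZ x).hasFDerivAt.log (pZ x).ne').const_add _
  have hD1 : Differentiable ℝ (fun z => log (P z)) := fun x => (hd1 x).differentiableAt
  have hD2 : Differentiable ℝ (fderiv ℝ (fun z => log (P z))) := by
    rw [funext fun x => (hd1 x).fderiv]
    exact fun x => ((dZ x).inv (pZ x).ne').smul (dZ' x)
  refine ⟨hD2, fun x w => ?_⟩
  set D := β * a ^ 2 + b ^ 2 with hD
  have hD0 : 0 < D := by positivity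
  refine hess_of_line_convex _ _ hD1 hD2 x w ?_
  have hUc : Continuous U := hU_C2.continuous
  have hmeas : Measurable fun y => ENNReal.ofReal (exp (-U y)) := by fun_prop
  have hfin : ∀ᵐ y ∂(volume : Measure E), ENNReal.ofReal (exp (-U y)) < ⊤ :=
    Filter.Eventually.of_forall fun y => ENNReal.ofReal_lt_top
  -- the convex potential
  have hUd : Differentiable ℝ U := hU_C2.differentiable (by norm_num)
  have hUd' : Differentiable ℝ (fderiv ℝ U) :=
    (hU_C2.fderiv_right (m := 1) (by norm_num)).differentiable (by norm_num)
  have hneg : fderiv ℝ (fun y => -U y) = fun y => -fderiv ℝ U y := by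
    ext1 y; exact fderiv_fun_neg
  have hG := line_convex (fun y => -U y) β hUd.neg (by rw [hneg]; exact hUd'.neg) (by
    intro y u
    have h := hU_conv y u
    rw [iteratedFDeriv_two_apply] at h
    rw [hneg, fderiv_fun_neg]
    simp at h ⊢
    exact h)
  let φ : ℝ → E → ℝ := fun r z => -(D * c) * ‖z‖ ^ 2 + (-U (z + (b / D) • (x + r • w))
      + β / 2 * ‖z + (b / D) • (x + r • w)‖ ^ 2)
  have hφ : ∀ z, ConvexOn ℝ univ (fun r => φ r z) := by
    intro z
    have h := (convexOn_const (-(D * c) * ‖z‖ ^ 2) (convex_univ (𝕜 := ℝ) (E := ℝ))).add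
      (hG (z + (b / D) • x) ((b / D) • w))
    refine h.congr (fun r _ => ?_)
    have : z + (b / D) • x + r • (b / D) • w = z + (b / D) • (x + r • w) := by
      rw [smul_add, smul_comm r, add_assoc]
    simp only [Pi.add_apply, this, φ]
  have hid : ∀ r z, exp (φ r z) = exp (β / D / 2 * ‖x + r • w‖ ^ 2) *
      (fun y => (ENNReal.ofReal (exp (-U y))).toReal • exp (-(c * ‖(x + r • w) - b • y‖ ^ 2)))
        (z + (b / D) • (x + r • w)) := by
    intro r z
    simp only [smul_eq_mul]
    rw [ENNReal.toReal_ofReal (exp_pos _).le, ← exp_add, ← exp_add]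
    congr 1
    simp only [φ]
    generalize x + r • w = X
    have e1 : X - b • (z + (b / D) • X) = (1 - b * (b / D)) • X - b • z := by
      rw [smul_add, sub_smul, one_smul, smul_smul]; abel
    rw [e1, norm_sub_sq_real, norm_add_sq_real]
    simp only [norm_smul, inner_smul_left, inner_smul_right, mul_pow, norm_eq_abs, sq_abs,
      real_inner_comm X z]
    rw [hc]
    simp
    have hb : b ^ 2 = D - β * a ^ 2 := by rw [hD]; ring
    field_simp
    linear_combination (D ^ 2 * ‖z‖ ^ 2 + 2 * D * b * inner ℝ X z + (b ^ 2 - D) * ‖X‖ ^ 2) * hb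
  have hiY : ∀ r : ℝ, Integrable (fun y => (ENNReal.ofReal (exp (-U y))).toReal •
      exp (-(c * ‖(x + r • w) - b • y‖ ^ 2))) volume := fun r => by
    rw [← integrable_withDensity_iff_integrable_smul' hmeas hfin, ← hν]
    exact iZ _
  have hint : ∀ r, ∫ z, exp (φ r z) = exp (β / D / 2 * ‖x + r • w‖ ^ 2) * Z (x + r • w) := by
    intro r
    simp_rw [hid r]
    rw [integral_const_mul, integral_add_right_eq_self
      (fun y => (ENNReal.ofReal (exp (-U y))).toReal • exp (-(c * ‖(x + r • w) - b • y‖ ^ 2))),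
      ← integral_withDensity_eq_integral_toReal_smul hmeas hfin, ← hν]
  have hcv := log_convex_mixture volume φ hφ (fun r => by
    simp_rw [hid r]
    exact ((hiY r).comp_add_right _).const_mul _) (fun r => by
    rw [hint r]; exact mul_pos (exp_pos _) (pZ _))
  refine ((convexOn_const (log K) (convex_univ (𝕜 := ℝ) (E := ℝ))).add hcv).congr
    (fun r _ => ?_)
  have h1 : log (P (x + r • w)) = log K + log (Z (x + r • w)) := congrFun hlog _
  simp only [Pi.add_apply, h1]
  rw [hint r, log_mul (exp_pos _).ne' (pZ _).ne', log_exp]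
  ring

/-- **Lower Jacobian bound for β-semi-log-convex targets.** If `ν(dy) = exp(−U(y)) dy`
with `∇²U ⪯ β I` for some `β > 0`, then for all `t ∈ (0,1)` and `x`,
`∇_x v(t,x) ⪰ ((β a_t ȧ_t + b_t ḃ_t)/(β a_t² + b_t²)) I` (as quadratic forms). -/
theorem velocity_jacobian_lower_bound_semi_log_convex
    (d : ℕ) (hd : 1 ≤ d)
    (β : ℝ) (hβ : 0 < β)
    (U : EuclideanSpace ℝ (Fin d) → ℝ)
    (hU_C2 : ContDiff ℝ 2 U)
    (hU_conv : ∀ y : EuclideanSpace ℝ (Fin d), ∀ w : EuclideanSpace ℝ (Fin d),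
      iteratedFDeriv ℝ 2 U y ![w, w] ≤ β * ‖w‖ ^ 2)
    (ν : Measure (EuclideanSpace ℝ (Fin d))) [IsProbabilityMeasure ν]
    (hν : ν = volume.withDensity (fun y => ENNReal.ofReal (exp (-U y))))
    (hmom : Integrable (fun y => ‖y‖ ^ 2) ν)
    -- interpolation coefficients
    (a b : ℝ → ℝ)
    (ha'_nonpos : ∀ t ∈ Icc (0:ℝ) 1, deriv a t ≤ 0)
    (hb'_nonneg : ∀ t ∈ Icc (0:ℝ) 1, 0 ≤ deriv b t)
    (ha0 : 0 < a 0) (hb0 : 0 ≤ b 0) (ha1 : a 1 = 0) (hb1 : b 1 = 1)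
    (ha_pos : ∀ t ∈ Ioo (0:ℝ) 1, 0 < a t)
    (hb_pos : ∀ t ∈ Ioo (0:ℝ) 1, 0 < b t)
    (ha_C2 : ContDiffOn ℝ 2 a (Ico 0 1))
    (hb_C2 : ContDiffOn ℝ 2 b (Ico 0 1))
    (ha2_C1 : ContDiffOn ℝ 1 (fun t => (a t) ^ 2) (Icc 0 1))
    (hb_C1 : ContDiffOn ℝ 1 b (Icc 0 1))
    -- marginal density, score and velocity field
    (p : ℝ → EuclideanSpace ℝ (Fin d) → ℝ)
    (hp : ∀ t x, p t x =
      ∫ y, (2 * π * (a t) ^ 2) ^ (-(d:ℝ)/2) * exp (-‖x - b t • y‖ ^ 2 / (2 * (a t) ^ 2)) ∂ν)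
    (s : ℝ → EuclideanSpace ℝ (Fin d) → EuclideanSpace ℝ (Fin d))
    (hs : ∀ t ∈ Ioo (0:ℝ) 1, ∀ x, s t x = gradient (fun z => Real.log (p t z)) x)
    (v : ℝ → EuclideanSpace ℝ (Fin d) → EuclideanSpace ℝ (Fin d))
    (hv : ∀ t ∈ Ioo (0:ℝ) 1, ∀ x,
      v t x = (deriv b t / b t) • x
        + ((deriv b t / b t) * (a t) ^ 2 - deriv a t * a t) • s t x) :
    ∀ t ∈ Ioo (0:ℝ) 1, ∀ x, ∀ w : EuclideanSpace ℝ (Fin d),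
      ((β * a t * deriv a t + b t * deriv b t) / (β * (a t) ^ 2 + (b t) ^ 2)) * ‖w‖ ^ 2
        ≤ ⟪w, fderiv ℝ (v t) x w⟫ := by
  intro t ht x w
  have hat := ha_pos t ht
  have hbt := hb_pos t ht
  have hA := ha'_nonpos t (Ioo_subset_Icc_self ht)
  have hB := hb'_nonneg t (Ioo_subset_Icc_self ht)
  have hK : 0 < (2 * π * (a t) ^ 2) ^ (-(d:ℝ)/2) := by positivity
  obtain ⟨hd2, hess⟩ := hess_log_lower β hβ U hU_C2 hU_conv ν hν (a t) (b t) _ hat hK (p t) (hp t)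
  have hh := hess x w
  set H := fderiv ℝ (fderiv ℝ (fun z => log (p t z))) x with hH
  let T : (EuclideanSpace ℝ (Fin d) →L[ℝ] ℝ) →L[ℝ] EuclideanSpace ℝ (Fin d) :=
    { toFun := fun l => (InnerProductSpace.toDual ℝ (EuclideanSpace ℝ (Fin d))).symm l
      map_add' := fun l m => map_add _ l m
      map_smul' := fun c l => by simp
      cont := (InnerProductSpace.toDual ℝ (EuclideanSpace ℝ (Fin d))).symm.continuous }
  have hT : ∀ l, ⟪w, T l⟫ = l w := fun l => by
    rw [real_inner_comm]; exact InnerProductSpace.toDual_symm_apply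
  have hgr : HasFDerivAt (fun x => gradient (fun z => log (p t z)) x) (T.comp H) x :=
    T.hasFDerivAt.comp x (hd2 x).hasFDerivAt
  have hvt : v t = fun x => (deriv b t / b t) • x
        + ((deriv b t / b t) * (a t) ^ 2 - deriv a t * a t) •
          gradient (fun z => log (p t z)) x := by
    ext1 x; rw [hv t ht x, hs t ht x]
  have hfd := ((hasFDerivAt_id (𝕜 := ℝ) x).const_smul (deriv b t / b t)).add
    (hgr.const_smul ((deriv b t / b t) * (a t) ^ 2 - deriv a t * a t))
  have hfd' := hfd.fderiv
  have hval : ⟪w, fderiv ℝ (v t) x w⟫ = (deriv b t / b t) * ‖w‖ ^ 2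
      + ((deriv b t / b t) * (a t) ^ 2 - deriv a t * a t) * H w w := by
    rw [hvt]
    refine (congrArg (fun L => ⟪w, L w⟫) hfd').trans ?_
    simp [inner_add_right, inner_smul_right, hT]
  rw [hval]
  have hco : 0 ≤ (deriv b t / b t) * (a t) ^ 2 - deriv a t * a t := by
    have h1 : 0 ≤ (deriv b t / b t) * (a t) ^ 2 := by positivity
    have h2 := mul_nonneg (neg_nonneg.2 hA) hat.le
    linarith
  have h3 := mul_nonneg hco hh
  have hD0 : 0 < β * (a t) ^ 2 + (b t) ^ 2 := by positivity
  have h4 : (β * a t * deriv a t + b t * deriv b t) / (β * (a t) ^ 2 + (b t) ^ 2)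
      = deriv b t / b t - ((deriv b t / b t) * (a t) ^ 2 - deriv a t * a t) *
        (β / (β * (a t) ^ 2 + (b t) ^ 2)) := by
    field_simp
    ring
  rw [h4]
  linarith
end
end

section
/- Fix a probability measure ρ on ℝ^d supported on a closed Euclidean ball of radius R, let σ > 0, and let ν := γ_{d,σ²} * ρ be the convolution of ρ with the Gaussian N(0, σ² I_d). Then for every t ∈ (0,1) and every x ∈ ℝ^d, ((ȧ_t a_t + σ² ḃ_t b_t)/(a_t² + σ² b_t²)) I_d ⪯ ∇_x v(t,x) ⪯ ( (a_t b_t (a_t ḃ_t − ȧ_t b_t)/(a_t² + σ² b_t²)²) R² + (ȧ_t a_t + σ² ḃ_t b_t)/(a_t² + σ² b_t²) ) I_d. -/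
open MeasureTheory Real Set
open scoped RealInnerProductSpace ENNReal

noncomputable section

abbrev VE (d : ℕ) := EuclideanSpace ℝ (Fin d)

lemma vj_ek_le {d : ℕ} {A : ℝ} (hA : 0 < A) (u : VE d) : exp (-‖u‖ ^ 2 / (2 * A)) ≤ 1 := by
  rw [Real.exp_le_one_iff]
  apply div_nonpos_of_nonpos_of_nonneg
  · have := sq_nonneg ‖u‖
    linarith
  · linarith

lemma vj_integrable {d : ℕ} {F : Type*} [NormedAddCommGroup F] [NormedSpace ℝ F]
    [SecondCountableTopology F]
    (ρ : Measure (VE d)) [IsProbabilityMeasure ρ] {A : ℝ} (hA : 0 < A) (β : ℝ) (x : VE d)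
    (h : VE d → F) (hc : Continuous h) (C : ℝ) (hC : ∀ᵐ y ∂ρ, ‖h y‖ ≤ C) :
    Integrable (fun y => exp (-‖x - β • y‖ ^ 2 / (2 * A)) • h y) ρ := by
  refine Integrable.mono' (integrable_const C) ?_ ?_
  · apply Continuous.aestronglyMeasurable
    fun_prop
  · filter_upwards [hC] with y hy
    rw [norm_smul, Real.norm_of_nonneg (exp_pos _).le]
    calc _ ≤ 1 * ‖h y‖ := by
          gcongr
          exact vj_ek_le hA _
      _ ≤ C := by simpa using hy

lemma vj_hasFDerivAt_kernel {d : ℕ} {A : ℝ} (hA : 0 < A) (u x : VE d) :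
    HasFDerivAt (fun x : VE d => exp (-‖x - u‖ ^ 2 / (2 * A)))
      ((exp (-‖x - u‖ ^ 2 / (2 * A)) * (-1 / A)) • innerSL ℝ (x - u)) x := by
  have h1 : HasFDerivAt (fun x : VE d => ‖x - u‖ ^ 2) (2 • innerSL ℝ (x - u)) x := by
    have := ((hasFDerivAt_id x).sub_const u).norm_sq
    simpa using this
  have h2 := ((h1.const_mul (-1 / (2 * A))).exp)
  have e : (fun x : VE d => exp (-‖x - u‖ ^ 2 / (2 * A)))
      = fun x : VE d => exp (-1 / (2 * A) * ‖x - u‖ ^ 2) := by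
    funext z
    congr 1
    ring
  rw [e]
  refine h2.congr_fderiv ?_
  ext w
  simp only [smul_apply, smul_eq_mul, nsmul_eq_mul, innerSL_apply_apply]
  rw [show -‖x - u‖ ^ 2 / (2 * A) = -1 / (2 * A) * ‖x - u‖ ^ 2 by ring]
  push_cast
  field_simp

lemma vj_hasFDerivAt {d : ℕ} {F : Type*} [NormedAddCommGroup F] [NormedSpace ℝ F]
    [SecondCountableTopology F] [CompleteSpace F]
    (ρ : Measure (VE d)) [IsProbabilityMeasure ρ] {A : ℝ} (hA : 0 < A) (β : ℝ) (x : VE d)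
    (B : ℝ) (hB : ∀ᵐ y ∂ρ, ‖y‖ ≤ B)
    (h : VE d → F) (hc : Continuous h) (C : ℝ) (hC : ∀ᵐ y ∂ρ, ‖h y‖ ≤ C) :
    ∃ L : VE d →L[ℝ] F,
      HasFDerivAt (fun x => ∫ y, exp (-‖x - β • y‖ ^ 2 / (2 * A)) • h y ∂ρ) L x ∧
      ∀ w, L w = ∫ y, exp (-‖x - β • y‖ ^ 2 / (2 * A)) • (((-1 / A) * ⟪x - β • y, w⟫) • h y) ∂ρ := by
  let F' : VE d → VE d → (VE d →L[ℝ] F) := fun x y =>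
    ((exp (-‖x - β • y‖ ^ 2 / (2 * A)) * (-1 / A)) • innerSL ℝ (x - β • y)).smulRight (h y)
  have hF'c : ∀ z, Continuous (F' z) := by
    intro z
    have : F' z = fun y => ContinuousLinearMap.smulRightL ℝ (VE d) F
        ((exp (-‖z - β • y‖ ^ 2 / (2 * A)) * (-1 / A)) • innerSL ℝ (z - β • y)) (h y) := by
      funext y
      rfl
    rw [this]
    fun_prop
  have hb : ∀ᵐ y ∂ρ, ∀ z ∈ Metric.ball x 1, ‖F' z y‖ ≤ (1 / A) * (‖x‖ + 1 + |β| * B) * C := by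
    filter_upwards [hB, hC] with y hy hy2 z hz
    have hz' : ‖z‖ ≤ ‖x‖ + 1 := by
      have h1 : ‖z - x‖ < 1 := by simpa [dist_eq_norm] using hz
      have h2 : ‖z‖ ≤ ‖z - x‖ + ‖x‖ := by simpa using norm_add_le (z - x) x
      linarith
    simp only [F']
    rw [ContinuousLinearMap.norm_smulRight_apply, norm_smul, norm_mul, innerSL_apply_norm,
      Real.norm_of_nonneg (exp_pos _).le]
    have h3 : ‖z - β • y‖ ≤ ‖x‖ + 1 + |β| * B := by
      calc _ ≤ ‖z‖ + ‖β • y‖ := norm_sub_le _ _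
        _ = ‖z‖ + |β| * ‖y‖ := by rw [norm_smul, Real.norm_eq_abs]
        _ ≤ _ := by gcongr
    have h4 : ‖-1 / A‖ = 1 / A := by
      rw [norm_div, norm_neg, norm_one, Real.norm_of_nonneg hA.le]
    rw [h4]
    have h5 := vj_ek_le hA (z - β • y)
    have h6 : 0 ≤ 1 / A := by positivity
    have h7 := (norm_nonneg _).trans h3
    have h8 : 0 ≤ 1 * (1 / A) * (‖x‖ + 1 + |β| * B) := by positivity
    calc _ ≤ (1 * (1 / A)) * (‖x‖ + 1 + |β| * B) * C := by gcongr
      _ = _ := by ring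
  have hint : Integrable (F' x) ρ := by
    refine Integrable.mono' (integrable_const ((1 / A) * (‖x‖ + 1 + |β| * B) * C))
      (hF'c x).aestronglyMeasurable ?_
    filter_upwards [hb] with y hy
    exact hy x (Metric.mem_ball_self one_pos)
  refine ⟨∫ y, F' x y ∂ρ, ?_, ?_⟩
  · refine hasFDerivAt_integral_of_dominated_of_fderiv_le (Metric.ball_mem_nhds x one_pos) ?_
      (vj_integrable ρ hA β x h hc C hC) (hF'c x).aestronglyMeasurable hb
      (integrable_const _) ?_
    · refine Filter.Eventually.of_forall fun z => ?_
      exact (vj_integrable ρ hA β z h hc C hC).aestronglyMeasurable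
    · refine Filter.Eventually.of_forall fun y z _ => ?_
      exact (vj_hasFDerivAt_kernel hA (β • y) z).smul_const (h y)
  · intro w
    rw [ContinuousLinearMap.integral_apply hint]
    congr 1
    funext y
    simp only [F', ContinuousLinearMap.smulRight_apply, smul_apply, innerSL_apply_apply,
      smul_smul, smul_eq_mul, mul_assoc]

/-- Gaussian convolution in one step. -/
lemma vj_gauss {d : ℕ} {σ α β : ℝ} (hσ : 0 < σ) (hα : 0 < α) :
    ∃ K : ℝ, 0 < K ∧ ∀ u : VE d, ∫ z : VE d, exp (-‖z‖ ^ 2 / (2 * σ ^ 2)) *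
      exp (-‖u - β • z‖ ^ 2 / (2 * α ^ 2)) = K * exp (-‖u‖ ^ 2 / (2 * (α ^ 2 + σ ^ 2 * β ^ 2))) := by
  have hA : 0 < α ^ 2 + σ ^ 2 * β ^ 2 := by positivity
  set A := α ^ 2 + σ ^ 2 * β ^ 2 with hAdef
  have hk : 0 < A / (2 * σ ^ 2 * α ^ 2) := by positivity
  refine ⟨∫ z : VE d, exp (-(A / (2 * σ ^ 2 * α ^ 2)) * ‖z‖ ^ 2), ?_, fun u => ?_⟩
  · rw [GaussianFourier.integral_rexp_neg_mul_sq_norm hk]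
    positivity
  · rw [← integral_add_right_eq_self _ ((β * σ ^ 2 / A) • u), ← integral_mul_const]
    congr 1
    funext z
    rw [← exp_add, ← exp_add]
    congr 1
    rw [norm_sub_sq_real u, norm_smul, mul_pow, inner_smul_right, inner_add_right, norm_add_sq_real z,
      norm_smul, inner_smul_right, inner_smul_right, real_inner_self_eq_norm_sq,
      real_inner_comm z u, mul_pow, Real.norm_eq_abs, Real.norm_eq_abs, sq_abs, sq_abs]
    field_simp
    rw [hAdef]
    ring

lemma vj_density {d : ℕ} {σ α β : ℝ} (hσ : 0 < σ) (hα : 0 < α)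
    (ρ : Measure (VE d)) [IsProbabilityMeasure ρ]
    (ν : Measure (VE d)) [IsProbabilityMeasure ν] (γσ : Measure (VE d))
    (hγσ : γσ = volume.withDensity (fun z =>
      ENNReal.ofReal ((2 * π * σ ^ 2) ^ (-(d:ℝ)/2) * exp (-‖z‖ ^ 2 / (2 * σ ^ 2)))))
    (hν : ν = Measure.map (fun q : VE d × VE d => q.1 + q.2) (γσ.prod ρ)) :
    ∃ K : ℝ, 0 < K ∧ ∀ x : VE d,
      ∫ y, (2 * π * α ^ 2) ^ (-(d:ℝ)/2) * exp (-‖x - β • y‖ ^ 2 / (2 * α ^ 2)) ∂ν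
      = K * ∫ y, exp (-‖x - β • y‖ ^ 2 / (2 * (α ^ 2 + σ ^ 2 * β ^ 2))) ∂ρ := by
  obtain ⟨K, hK, hKu⟩ := vj_gauss (d := d) (β := β) hσ hα
  have hs : SFinite γσ := by
    rw [hγσ]
    infer_instance
  refine ⟨(2 * π * α ^ 2) ^ (-(d:ℝ)/2) * ((2 * π * σ ^ 2) ^ (-(d:ℝ)/2) * K), by positivity, ?_⟩
  intro x
  have hm : Measurable (fun q : VE d × VE d => q.1 + q.2) := by fun_prop
  have hint : Integrable (fun y : VE d => exp (-‖x - β • y‖ ^ 2 / (2 * α ^ 2))) ν := by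
    have := vj_integrable ν (by positivity : 0 < α ^ 2) β x (fun _ => (1 : ℝ))
      continuous_const 1 (by simp)
    simpa using this
  rw [integral_const_mul, mul_assoc ((2 * π * α ^ 2) ^ (-(d:ℝ)/2))]
  congr 1
  have hint2 := hint
  rw [hν] at hint2 ⊢
  rw [integrable_map_measure (by apply Continuous.aestronglyMeasurable; fun_prop) hm.aemeasurable]
    at hint2
  rw [integral_map hm.aemeasurable (by apply Continuous.aestronglyMeasurable; fun_prop),
    integral_prod_symm _ (by exact hint2), ← integral_const_mul]
  congr 1
  funext y
  rw [hγσ, integral_withDensity_eq_integral_toReal_smul (by fun_prop) (by simp),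
    mul_assoc _ K]
  have h1 := hKu (x - β • y)
  rw [← h1, ← integral_const_mul]
  congr 1
  funext z
  rw [ENNReal.toReal_ofReal (by positivity), smul_eq_mul, mul_assoc]
  congr 4
  rw [smul_add]
  congr 3
  abel

/-- Score Jacobian. -/
lemma vj_score {d : ℕ} (ρ : Measure (VE d)) [IsProbabilityMeasure ρ] {A K : ℝ} (hA : 0 < A)
    (hK : 0 < K) (β R : ℝ) (hR : 0 ≤ R) (c : VE d) (hc : ∀ᵐ y ∂ρ, ‖y - c‖ ≤ R) (x w : VE d)
    (s : VE d → VE d)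
    (hs : ∀ x, s x = gradient (fun z => Real.log
      (K * ∫ y, exp (-‖z - β • y‖ ^ 2 / (2 * A)) ∂ρ)) x) :
    DifferentiableAt ℝ s x ∧ ∃ V : ℝ, 0 ≤ V ∧ V ≤ R ^ 2 * ‖w‖ ^ 2 ∧
      ⟪w, fderiv ℝ s x w⟫ = -(1 / A) * ‖w‖ ^ 2 + β ^ 2 / A ^ 2 * V := by
  have hB : ∀ᵐ y ∂ρ, ‖y‖ ≤ R + ‖c‖ := by
    filter_upwards [hc] with y hy
    have : ‖y‖ ≤ ‖y - c‖ + ‖c‖ := by simpa using norm_add_le (y - c) c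
    linarith
  set B := R + ‖c‖ with hBdef
  have hB0 : 0 ≤ B := by positivity
  let e : VE d → VE d → ℝ := fun x y => exp (-‖x - β • y‖ ^ 2 / (2 * A))
  let Z : VE d → ℝ := fun x => ∫ y, e x y • (1 : ℝ) ∂ρ
  let N : VE d → VE d := fun x => ∫ y, e x y • y ∂ρ
  have hI1 : ∀ x, Integrable (fun y => e x y • (1 : ℝ)) ρ := fun x =>
    vj_integrable ρ hA β x (fun _ => (1 : ℝ)) continuous_const 1 (by simp)
  have hIN : ∀ x, Integrable (fun y => e x y • y) ρ := fun x =>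
    vj_integrable ρ hA β x (fun y => y) continuous_id B hB
  have hIl : ∀ x w, Integrable (fun y => e x y * ⟪y, w⟫) ρ := fun x w => by
    have := (hIN x).inner_const (𝕜 := ℝ) w
    simpa [real_inner_smul_left] using this
  have hIQv : ∀ x w, Integrable (fun y => e x y • (⟪y, w⟫ • y)) ρ := fun x w => by
    refine vj_integrable ρ hA β x (fun y => ⟪y, w⟫ • y) (by fun_prop) (B * ‖w‖ * B) ?_
    filter_upwards [hB] with y hy
    rw [norm_smul]
    have := norm_inner_le_norm (𝕜 := ℝ) y w
    calc _ ≤ (‖y‖ * ‖w‖) * ‖y‖ := by gcongr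
      _ ≤ _ := by gcongr
  have hIQ : ∀ x w, Integrable (fun y => e x y * ⟪y, w⟫ ^ 2) ρ := fun x w => by
    have := (hIQv x w).inner_const (𝕜 := ℝ) w
    simpa [real_inner_smul_left, pow_two] using this
  have hZpos : ∀ x, 0 < Z x := fun x => by
    have : 0 < ∫ y, e x y ∂ρ := integral_exp_pos (by simpa [e] using hI1 x)
    simpa [Z] using this
  have hZ1 : ∀ x, ∫ y, e x y ∂ρ = Z x := fun x => by simp [Z]
  have hI0 : ∀ x, Integrable (fun y => e x y) ρ := fun x => by simpa using hI1 x
  have hNl : ∀ x w, ∫ y, e x y * ⟪y, w⟫ ∂ρ = ⟪N x, w⟫ := fun x w => by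
    have := integral_inner (𝕜 := ℝ) (hIN x) w
    rw [real_inner_comm, ← this]
    congr 1
    funext y
    rw [real_inner_smul_right, real_inner_comm]
  have hZd : ∀ x, ∃ L : VE d →L[ℝ] ℝ, HasFDerivAt Z L x ∧
      ∀ w, L w = -(1 / A) * (⟪x, w⟫ * Z x - β * ⟪N x, w⟫) := fun x => by
    obtain ⟨L, h1, h2⟩ := vj_hasFDerivAt ρ hA β x B hB (fun _ => (1 : ℝ)) continuous_const 1 (by simp)
    refine ⟨L, h1, fun w => ?_⟩
    rw [h2, ← hZ1, ← hNl, ← integral_const_mul, ← integral_const_mul, ← integral_sub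
      ((hI0 x).const_mul _) ((hIl x w).const_mul _), ← integral_const_mul]
    congr 1
    funext y
    simp only [e, inner_sub_left, real_inner_smul_left, smul_eq_mul]
    ring
  obtain ⟨M, hM, hMw⟩ := vj_hasFDerivAt ρ hA β x B hB (fun y => y) continuous_id B hB
  have hMww : ⟪w, M w⟫ = -(1 / A) * (⟪x, w⟫ * ⟪N x, w⟫ - β * ∫ y, e x y * ⟪y, w⟫ ^ 2 ∂ρ) := by
    have h1 : M w = -(1 / A) • (⟪x, w⟫ • N x - β • ∫ y, e x y • (⟪y, w⟫ • y) ∂ρ) := by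
      rw [hMw, ← integral_smul, ← integral_smul, ← integral_sub (by exact (hIN x).smul ⟪x, w⟫) (by exact (hIQv x w).smul β),
        ← integral_smul]
      congr 1
      funext y
      simp only [e, inner_sub_left, real_inner_smul_left]
      module
    rw [h1, real_inner_smul_right, inner_sub_right, real_inner_smul_right, real_inner_smul_right,
      ← integral_inner (hIQv x w), real_inner_comm (N x) w]
    congr 4
    funext y
    rw [real_inner_smul_right, real_inner_smul_right, real_inner_comm y w, pow_two]
  have hse : s = fun x => -(1 / A) • (x - β • ((Z x)⁻¹ • N x)) := by
    funext x
    rw [hs]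
    obtain ⟨L, hL, hLw⟩ := hZd x
    apply HasGradientAt.gradient
    rw [hasGradientAt_iff_hasFDerivAt]
    have h1 := (hL.const_mul K).log (mul_pos hK (hZpos x)).ne'
    have h2 : (fun z => Real.log (K * ∫ y, exp (-‖z - β • y‖ ^ 2 / (2 * A)) ∂ρ))
        = fun z => Real.log (K * Z z) := by
      funext z
      rw [← hZ1]
    rw [h2]
    refine h1.congr_fderiv ?_
    ext w
    have := (hZpos x).ne'
    simp only [smul_apply, smul_eq_mul, InnerProductSpace.toDual_apply_apply,
      real_inner_smul_left, inner_sub_left, hLw]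
    field_simp
  obtain ⟨L, hL, hLw⟩ := hZd x
  have hz := (hZpos x)
  have hinv : HasFDerivAt (fun x => (Z x)⁻¹) (-((Z x) ^ 2)⁻¹ • L) x :=
    (hasDerivAt_inv hz.ne').comp_hasFDerivAt x hL
  have hsd := ((hasFDerivAt_id x).sub ((hinv.smul hM).const_smul β)).const_smul (-(1 / A))
  have hsd' := hsd.congr_of_eventuallyEq (f₁ := s)
    (Filter.Eventually.of_forall fun z => by rw [hse]; rfl)
  refine ⟨hsd'.differentiableAt, (∫ y, e x y * ⟪y, w⟫ ^ 2 ∂ρ) / Z x - (⟪N x, w⟫ / Z x) ^ 2,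
    ?_, ?_, ?_⟩
  rotate_left 2
  · rw [hsd'.fderiv]
    simp only [smul_apply, sub_apply,
      add_apply, ContinuousLinearMap.smulRight_apply,
      ContinuousLinearMap.id_apply, real_inner_smul_right, inner_sub_right, inner_add_right, hMww,
      hLw, real_inner_self_eq_norm_sq, smul_eq_mul]
    rw [show ⟪w, ∫ y, exp (-‖x - β • y‖ ^ 2 / (2 * A)) • y ∂ρ⟫ = ⟪N x, w⟫ from
      real_inner_comm _ _]
    field_simp
    ring
  all_goals
    have key : ∀ m : ℝ, ∫ y, e x y * (⟪y, w⟫ - m) ^ 2 ∂ρ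
        = (∫ y, e x y * ⟪y, w⟫ ^ 2 ∂ρ) - 2 * m * ⟪N x, w⟫ + m ^ 2 * Z x := fun m => by
      rw [← hNl, ← hZ1, ← integral_const_mul, ← integral_const_mul,
        ← integral_sub (hIQ x w) ((hIl x w).const_mul _), ← integral_add
        (by exact (hIQ x w).sub ((hIl x w).const_mul _)) ((hI0 x).const_mul _)]
      congr 1
      funext y
      ring
  · have h0 : 0 ≤ ∫ y, e x y * (⟪y, w⟫ - ⟪N x, w⟫ / Z x) ^ 2 ∂ρ :=
      integral_nonneg fun y => by positivity
    rw [key] at h0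
    have : (∫ y, e x y * ⟪y, w⟫ ^ 2 ∂ρ) / Z x - (⟪N x, w⟫ / Z x) ^ 2
      = ((∫ y, e x y * ⟪y, w⟫ ^ 2 ∂ρ) - 2 * (⟪N x, w⟫ / Z x) * ⟪N x, w⟫
        + (⟪N x, w⟫ / Z x) ^ 2 * Z x) / Z x := by
      field_simp
      ring
    rw [this]
    positivity
  · have h0 : ∫ y, e x y * (⟪y, w⟫ - ⟪c, w⟫) ^ 2 ∂ρ ≤ ∫ y, R ^ 2 * ‖w‖ ^ 2 * e x y ∂ρ := by
      apply integral_mono_of_nonneg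
      · exact Filter.Eventually.of_forall fun y => by positivity
      · exact (hI0 x).const_mul _
      · filter_upwards [hc] with y hy
        rw [mul_comm]
        have h1 := abs_real_inner_le_norm (y - c) w
        rw [← inner_sub_left, ← sq_abs, ← mul_pow]
        gcongr
        exact h1.trans (by gcongr)
    rw [key, integral_const_mul, hZ1] at h0
    have : (∫ y, e x y * ⟪y, w⟫ ^ 2 ∂ρ) / Z x - (⟪N x, w⟫ / Z x) ^ 2
      = ((∫ y, e x y * ⟪y, w⟫ ^ 2 ∂ρ) - 2 * ⟪c, w⟫ * ⟪N x, w⟫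
        + ⟪c, w⟫ ^ 2 * Z x) / Z x - (⟪N x, w⟫ / Z x - ⟪c, w⟫) ^ 2 := by
      field_simp
      ring
    rw [this]
    have h3 := (div_le_iff₀ hz).mpr h0
    have h4 := sq_nonneg (⟪N x, w⟫ / Z x - ⟪c, w⟫)
    linarith

/-- **Two-sided Jacobian bound for Gaussian-mollified targets.** If `ν = γ_{d,σ²} * ρ`
with `ρ` supported on a closed ball of radius `R`, then for all `t ∈ (0,1)` and `x`,
`((ȧ a + σ² ḃ b)/(a² + σ² b²)) I ⪯ ∇_x v(t,x)
  ⪯ ( a b (a ḃ − ȧ b)/(a² + σ² b²)² · R² + (ȧ a + σ² ḃ b)/(a² + σ² b²) ) I`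
(as quadratic forms). -/
theorem velocity_jacobian_bounds_gaussian_mixture
    (d : ℕ) (hd : 1 ≤ d)
    (R σ : ℝ) (hR : 0 ≤ R) (hσ : 0 < σ)
    (ρ : Measure (EuclideanSpace ℝ (Fin d))) [IsProbabilityMeasure ρ]
    (hρ_supp : ∃ c : EuclideanSpace ℝ (Fin d), ρ (Metric.closedBall c R)ᶜ = 0)
    -- the Gaussian measure N(0, σ² I_d)
    (γσ : Measure (EuclideanSpace ℝ (Fin d)))
    (hγσ : γσ = volume.withDensity (fun z =>
      ENNReal.ofReal ((2 * π * σ ^ 2) ^ (-(d:ℝ)/2) * exp (-‖z‖ ^ 2 / (2 * σ ^ 2)))))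
    -- the target measure ν = γ_{d,σ²} * ρ
    (ν : Measure (EuclideanSpace ℝ (Fin d))) [IsProbabilityMeasure ν]
    (hν : ν = Measure.map (fun q : EuclideanSpace ℝ (Fin d) × EuclideanSpace ℝ (Fin d) =>
      q.1 + q.2) (γσ.prod ρ))
    -- interpolation coefficients
    (a b : ℝ → ℝ)
    (ha'_nonpos : ∀ t ∈ Icc (0:ℝ) 1, deriv a t ≤ 0)
    (hb'_nonneg : ∀ t ∈ Icc (0:ℝ) 1, 0 ≤ deriv b t)
    (ha0 : 0 < a 0) (hb0 : 0 ≤ b 0) (ha1 : a 1 = 0) (hb1 : b 1 = 1)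
    (ha_pos : ∀ t ∈ Ioo (0:ℝ) 1, 0 < a t)
    (hb_pos : ∀ t ∈ Ioo (0:ℝ) 1, 0 < b t)
    (ha_C2 : ContDiffOn ℝ 2 a (Ico 0 1))
    (hb_C2 : ContDiffOn ℝ 2 b (Ico 0 1))
    (ha2_C1 : ContDiffOn ℝ 1 (fun t => (a t) ^ 2) (Icc 0 1))
    (hb_C1 : ContDiffOn ℝ 1 b (Icc 0 1))
    -- marginal density, score and velocity field
    (p : ℝ → EuclideanSpace ℝ (Fin d) → ℝ)
    (hp : ∀ t x, p t x =
      ∫ y, (2 * π * (a t) ^ 2) ^ (-(d:ℝ)/2) * exp (-‖x - b t • y‖ ^ 2 / (2 * (a t) ^ 2)) ∂ν)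
    (s : ℝ → EuclideanSpace ℝ (Fin d) → EuclideanSpace ℝ (Fin d))
    (hs : ∀ t ∈ Ioo (0:ℝ) 1, ∀ x, s t x = gradient (fun z => Real.log (p t z)) x)
    (v : ℝ → EuclideanSpace ℝ (Fin d) → EuclideanSpace ℝ (Fin d))
    (hv : ∀ t ∈ Ioo (0:ℝ) 1, ∀ x,
      v t x = (deriv b t / b t) • x
        + ((deriv b t / b t) * (a t) ^ 2 - deriv a t * a t) • s t x) :
    ∀ t ∈ Ioo (0:ℝ) 1, ∀ x, ∀ w : EuclideanSpace ℝ (Fin d),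
      ((deriv a t * a t + σ ^ 2 * deriv b t * b t) / ((a t) ^ 2 + σ ^ 2 * (b t) ^ 2))
          * ‖w‖ ^ 2
        ≤ ⟪w, fderiv ℝ (v t) x w⟫
      ∧ ⟪w, fderiv ℝ (v t) x w⟫
        ≤ (a t * b t * (a t * deriv b t - deriv a t * b t)
              / ((a t) ^ 2 + σ ^ 2 * (b t) ^ 2) ^ 2 * R ^ 2
            + (deriv a t * a t + σ ^ 2 * deriv b t * b t)
              / ((a t) ^ 2 + σ ^ 2 * (b t) ^ 2)) * ‖w‖ ^ 2 := by
  intro t ht x w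
  obtain ⟨c, hc⟩ := hρ_supp
  have hc' : ∀ᵐ y ∂ρ, ‖y - c‖ ≤ R := by
    rw [ae_iff]
    convert hc using 2
    ext y
    simp [dist_eq_norm]
  have hat := ha_pos t ht
  have hbt := hb_pos t ht
  have ht' := Ioo_subset_Icc_self ht
  have ha' := ha'_nonpos t ht'
  have hb' := hb'_nonneg t ht'
  have hA : 0 < (a t) ^ 2 + σ ^ 2 * (b t) ^ 2 := by positivity
  obtain ⟨K, hK, hKp⟩ := vj_density (β := b t) hσ hat ρ ν γσ hγσ hν
  obtain ⟨hd, V, hV0, hV1, hVe⟩ := vj_score ρ hA hK (b t) R hR c hc' x w (s t) (by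
    intro x
    rw [hs t ht]
    congr 1
    funext z
    rw [hp, hKp])
  have hvt : v t = fun x => (deriv b t / b t) • x
        + ((deriv b t / b t) * (a t) ^ 2 - deriv a t * a t) • s t x := funext (hv t ht)
  have hfd := ((hasFDerivAt_id (𝕜 := ℝ) x).const_smul (deriv b t / b t)).add
    (hd.hasFDerivAt.const_smul ((deriv b t / b t) * (a t) ^ 2 - deriv a t * a t))
  have hfd' := hfd.congr_of_eventuallyEq (f₁ := v t)
    (Filter.Eventually.of_forall fun z => by rw [hvt]; rfl)
  have hG : 0 ≤ a t * b t * (a t * deriv b t - deriv a t * b t)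
      / ((a t) ^ 2 + σ ^ 2 * (b t) ^ 2) ^ 2 := by
    have : 0 ≤ a t * deriv b t - deriv a t * b t := by nlinarith
    positivity
  have hmain : ⟪w, fderiv ℝ (v t) x w⟫ =
      (deriv a t * a t + σ ^ 2 * deriv b t * b t) / ((a t) ^ 2 + σ ^ 2 * (b t) ^ 2) * ‖w‖ ^ 2
      + a t * b t * (a t * deriv b t - deriv a t * b t)
      / ((a t) ^ 2 + σ ^ 2 * (b t) ^ 2) ^ 2 * V := by
    rw [hfd'.fderiv]
    simp only [smul_apply, add_apply,
      ContinuousLinearMap.id_apply, real_inner_smul_right, inner_add_right, hVe,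
      real_inner_self_eq_norm_sq]
    field_simp
    ring
  rw [hmain]
  have h1 := mul_nonneg hG hV0
  have h2 := mul_le_mul_of_nonneg_left hV1 hG
  constructor <;> linarith
end
end

section
/- Suppose ν is a probability measure on ℝ^d, absolutely continuous with finite second moment, such that the relative density f(x) := (dν/dγ_d)(x) with respect to the standard Gaussian γ_d = N(0, I_d) is L-log-Lipschitz for some L ≥ 0 (i.e. log f is L-Lipschitz). Then for every t ∈ (0,1) and every x ∈ ℝ^d, ( ((ḃ_t/b_t) a_t² − ȧ_t a_t)(−B_t − L² (b_t/(a_t² + b_t²))²) + (ȧ_t a_t + ḃ_t b_t)/(a_t² + b_t²) ) I_d ⪯ ∇_x v(t,x) ⪯ ( ((ḃ_t/b_t) a_t² − ȧ_t a_t) B_t + (ȧ_t a_t + ḃ_t b_t)/(a_t² + b_t²) ) I_d, where B_t := 5 L b_t (a_t² + b_t²)^{-3/2} ( L + (log(√(a_t² + b_t²)/b_t))^{-1/2} ). -/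
open MeasureTheory Real Set
open scoped RealInnerProductSpace ENNReal

noncomputable section

namespace VJ
variable {d : ℕ}
local notation "E" => EuclideanSpace ℝ (Fin d)

/-- exponential weight -/
def W (κ β : ℝ) (x y : EuclideanSpace ℝ (Fin d)) : ℝ := exp (κ * ⟪x, y⟫ - β * ‖y‖ ^ 2)

lemma W_pos (κ β : ℝ) (x y : E) : 0 < W κ β x y := exp_pos _

lemma W_cont (κ β : ℝ) (x : E) : Continuous (W κ β x) := by
  unfold W; fun_prop

lemma W_bound (κ β : ℝ) (hβ : 0 < β) (x y : E) (R : ℝ) (hx : ‖x‖ ≤ R) :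
    W κ β x y * exp (2 * ‖y‖) ≤ exp ((|κ| * R + 2) ^ 2 / (4 * β)) := by
  unfold W
  rw [← exp_add]
  apply exp_le_exp.2
  have h1 : κ * ⟪x, y⟫ ≤ |κ| * R * ‖y‖ := by
    calc κ * ⟪x, y⟫ ≤ |κ * ⟪x, y⟫| := le_abs_self _
      _ = |κ| * |⟪x, y⟫| := abs_mul _ _
      _ ≤ |κ| * (‖x‖ * ‖y‖) := by gcongr; exact abs_real_inner_le_norm x y
      _ ≤ |κ| * (R * ‖y‖) := by gcongr
      _ = _ := by ring
  rw [le_div_iff₀ (by positivity)]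
  nlinarith [sq_nonneg ((|κ| * R + 2) - 2 * β * ‖y‖)]

lemma integ {F : Type*} [NormedAddCommGroup F] [NormedSpace ℝ F]
    (ν : Measure E) [IsFiniteMeasure ν] (κ β : ℝ) (hβ : 0 < β) (x : E) (ψ : E → F)
    (hψ : AEStronglyMeasurable ψ ν) (C : ℝ) (hC : ∀ y, ‖ψ y‖ ≤ C * exp (2 * ‖y‖)) :
    Integrable (fun y => W κ β x y • ψ y) ν := by
  apply Integrable.mono' (integrable_const (C * exp ((|κ| * ‖x‖ + 2) ^ 2 / (4 * β))))
  · exact (W_cont κ β x).aestronglyMeasurable.smul hψ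
  · refine Filter.Eventually.of_forall fun y => ?_
    rw [norm_smul, Real.norm_of_nonneg (W_pos _ _ _ _).le]
    have hC0 : 0 ≤ C := by
      have := (norm_nonneg _).trans (hC 0)
      exact nonneg_of_mul_nonneg_left this (exp_pos _)
    calc W κ β x y * ‖ψ y‖ ≤ W κ β x y * (C * exp (2 * ‖y‖)) :=
          mul_le_mul_of_nonneg_left (hC y) (W_pos _ _ _ _).le
      _ = C * (W κ β x y * exp (2 * ‖y‖)) := by ring
      _ ≤ _ := mul_le_mul_of_nonneg_left (W_bound κ β hβ x y _ le_rfl) hC0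

lemma hasFDerivAt_Lam {F : Type*} [NormedAddCommGroup F] [NormedSpace ℝ F]
    [SecondCountableTopology F]
    (ν : Measure E) [IsFiniteMeasure ν] (κ β : ℝ) (hβ : 0 < β) (x : E) (ψ : E → F)
    (hψ : Continuous ψ) (C : ℝ) (hC0 : 0 ≤ C) (hb : ∀ y, ‖ψ y‖ ≤ C * (1 + ‖y‖)) :
    HasFDerivAt (fun x => ∫ y, W κ β x y • ψ y ∂ν)
      (∫ y, W κ β x y • (κ • (innerSL ℝ y).smulRight (ψ y)) ∂ν) x := by
  have hC : ∀ y : E, 1 + ‖y‖ ≤ exp ‖y‖ := fun y => by linarith [add_one_le_exp ‖y‖]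
  have hbd : ∀ y : E, ‖(κ • (innerSL ℝ y).smulRight (ψ y))‖ ≤ |κ| * C * exp (2 * ‖y‖) := by
    intro y
    rw [norm_smul, Real.norm_eq_abs, ContinuousLinearMap.norm_smulRight_apply, innerSL_apply_norm]
    rw [mul_assoc]
    refine mul_le_mul_of_nonneg_left ?_ (abs_nonneg _)
    calc ‖y‖ * ‖ψ y‖ ≤ exp ‖y‖ * (C * exp ‖y‖) := by
          gcongr
          · linarith [hC y]
          · exact (hb y).trans (mul_le_mul_of_nonneg_left (hC y) hC0)
      _ = C * (exp ‖y‖ * exp ‖y‖) := by ring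
      _ = C * exp (2 * ‖y‖) := by rw [← exp_add]; ring_nf
  have hcont : Continuous (fun y : E => (κ • (innerSL ℝ y).smulRight (ψ y))) := by
    refine Continuous.const_smul (?_ : Continuous fun y : E => (innerSL ℝ y).smulRight (ψ y)) κ
    exact (ContinuousLinearMap.smulRightL ℝ E F).continuous₂.comp₂ (innerSL ℝ).continuous hψ
  refine hasFDerivAt_integral_of_dominated_of_fderiv_le (𝕜 := ℝ) (μ := ν)
    (F := fun x y => W κ β x y • ψ y)
    (F' := fun x y => W κ β x y • (κ • (innerSL ℝ y).smulRight (ψ y)))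
    (s := Metric.ball x 1)
    (bound := fun _ => |κ| * C * exp ((|κ| * (‖x‖ + 1) + 2) ^ 2 / (4 * β)))
    (Metric.ball_mem_nhds _ one_pos) ?_ ?_ ?_ ?_ (integrable_const _) ?_
  · exact Filter.Eventually.of_forall fun x =>
      ((W_cont κ β x).smul hψ).aestronglyMeasurable
  · refine integ ν κ β hβ x ψ hψ.aestronglyMeasurable C fun y => ?_
    refine (hb y).trans (mul_le_mul_of_nonneg_left ((hC y).trans ?_) hC0)
    apply exp_le_exp.2; linarith [norm_nonneg y]
  · exact ((W_cont κ β x).smul hcont).aestronglyMeasurable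
  · refine Filter.Eventually.of_forall fun y x' hx' => ?_
    rw [norm_smul, Real.norm_of_nonneg (W_pos _ _ _ _).le]
    have hx2 : ‖x'‖ ≤ ‖x‖ + 1 := by
      rw [mem_ball_iff_norm] at hx'
      have := norm_add_le (x' - x) x
      simp only [sub_add_cancel] at this
      linarith
    calc _ ≤ W κ β x' y * (|κ| * C * exp (2 * ‖y‖)) :=
          mul_le_mul_of_nonneg_left (hbd y) (W_pos _ _ _ _).le
      _ = |κ| * C * (W κ β x' y * exp (2 * ‖y‖)) := by ring
      _ ≤ _ := mul_le_mul_of_nonneg_left (W_bound κ β hβ x' y _ hx2) (by positivity)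
  · refine Filter.Eventually.of_forall fun y x' _ => ?_
    have h1 : HasFDerivAt (fun x : E => W κ β x y) (W κ β x' y • (κ • innerSL ℝ y)) x' := by
      unfold W
      have h2 : HasFDerivAt (fun x : E => κ * ⟪x, y⟫ - β * ‖y‖ ^ 2) (κ • innerSL ℝ y) x' := by
        have h3 : HasFDerivAt (fun x : E => ⟪x, y⟫) (innerSL ℝ y) x' := by
          have := (innerSL ℝ y).hasFDerivAt (x := x')
          refine this.congr_of_eventuallyEq (Filter.Eventually.of_forall fun z => ?_)
          simp [real_inner_comm]
        exact (h3.const_mul κ).sub_const _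
      exact h2.exp
    have := h1.smul_const (ψ y)
    convert this using 1
    ext z
    simp [smul_smul, mul_assoc]

lemma deriv_bound (φ : ℝ → ℝ) (D c A : ℝ) (h : HasDerivAt φ D 0)
    (hb : ∀ ε : ℝ, 0 < ε → |φ ε - φ 0| ≤ (exp (c * ε) - 1) * A) : |D| ≤ c * A := by
  have hu : HasDerivAt (fun ε : ℝ => (exp (c * ε) - 1) * A) (c * A) 0 := by
    have h1 : HasDerivAt (fun ε : ℝ => c * ε) c 0 := by
      simpa using (hasDerivAt_id (0:ℝ)).const_mul c
    have := (h1.exp.sub_const 1).mul_const A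
    simpa using this
  have h1 := h.tendsto_slope_zero_right.abs
  have h2 := hu.tendsto_slope_zero_right
  refine le_of_tendsto_of_tendsto h1 h2 ?_
  filter_upwards [self_mem_nhdsWithin] with ε hε
  have hε : 0 < ε := hε
  simp only [zero_add, smul_eq_mul, mul_zero, exp_zero, sub_self, zero_mul, sub_zero]
  rw [abs_mul, abs_of_pos (inv_pos.2 hε)]
  exact mul_le_mul_of_nonneg_left (hb ε hε) (inv_pos.2 hε).le

lemma ratio_bound (L : ℝ) (f : E → ℝ) (hf_pos : ∀ x, 0 < f x)
    (hf : ∀ x y : E, |Real.log (f x) - Real.log (f y)| ≤ L * ‖x - y‖) (h y : E) :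
    |f (y + h) / f y - 1| ≤ exp (L * ‖h‖) - 1 := by
  have e : f (y + h) / f y = exp (Real.log (f (y + h)) - Real.log (f y)) := by
    rw [exp_sub, exp_log (hf_pos _), exp_log (hf_pos _)]
  have h1 := hf (y + h) y
  rw [add_sub_cancel_left] at h1
  rw [e]
  set u := Real.log (f (y + h)) - Real.log (f y)
  have h2 := abs_le.1 h1
  rw [abs_le]
  have h3 : exp u ≤ exp (L * ‖h‖) := exp_le_exp.2 h2.2
  have h4 : exp (-(L * ‖h‖)) ≤ exp u := exp_le_exp.2 h2.1
  have h5 : 2 ≤ exp (L * ‖h‖) + exp (-(L * ‖h‖)) := by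
    have := Real.one_le_cosh (L * ‖h‖)
    rw [Real.cosh_eq] at this
    linarith
  constructor <;> linarith

lemma f_cont (L : ℝ) (hL : 0 ≤ L) (f : E → ℝ) (hf_pos : ∀ x, 0 < f x)
    (hf : ∀ x y : E, |Real.log (f x) - Real.log (f y)| ≤ L * ‖x - y‖) : Continuous f := by
  have h : LipschitzWith ⟨L, hL⟩ (fun x => Real.log (f x)) := by
    apply LipschitzWith.of_dist_le_mul
    intro x y
    rw [Real.dist_eq, dist_eq_norm]; exact hf x y
  have : f = fun x => exp (Real.log (f x)) := by
    ext x; rw [exp_log (hf_pos x)]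
  rw [this]
  exact continuous_exp.comp h.continuous

/-- quasi-invariance -/
lemma QI (c : ℝ) (hc : 0 < c) (f : E → ℝ) (hf_pos : ∀ x, 0 < f x) (hfc : Continuous f)
    (ν : Measure E)
    (hν : ν = volume.withDensity (fun y => ENNReal.ofReal (c * exp (-‖y‖ ^ 2 / 2) * f y)))
    (β m : ℝ) (ψ : E → ℝ) (x u : E) :
    exp (-(m * (1 + 2 * β) * m / 2) * ‖x + u‖ ^ 2) *
      ∫ y, W (m * (1 + 2 * β)) β (x + u) y • ψ (y - m • (x + u)) ∂ν
    = exp (-(m * (1 + 2 * β) * m / 2) * ‖x‖ ^ 2) *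
      ∫ y, W (m * (1 + 2 * β)) β x y • (ψ (y - m • x) * (f (y + m • u) / f y)) ∂ν := by
  have key : ∀ g : E → ℝ, ∫ y, g y ∂ν = ∫ y, (c * exp (-‖y‖ ^ 2 / 2) * f y) * g y := by
    intro g
    rw [hν, integral_withDensity_eq_integral_toReal_smul]
    · refine integral_congr_ae (Filter.Eventually.of_forall fun y => ?_)
      simp only [smul_eq_mul]
      rw [ENNReal.toReal_ofReal]
      have := hf_pos y
      positivity
    · have : Continuous (fun y : E => c * exp (-‖y‖ ^ 2 / 2) * f y) := by fun_prop
      exact this.measurable.ennreal_ofReal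
    · exact Filter.Eventually.of_forall fun y => ENNReal.ofReal_lt_top
  rw [key, key, ← integral_add_right_eq_self _ (m • u), ← integral_const_mul, ← integral_const_mul]
  refine integral_congr_ae (Filter.Eventually.of_forall fun y => ?_)
  simp only [smul_eq_mul, W]
  have e1 : y + m • u - m • (x + u) = y - m • x := by rw [smul_add]; abel
  rw [e1]
  have hf := (hf_pos y).ne'
  have : exp (-(m * (1 + 2 * β) * m / 2) * ‖x + u‖ ^ 2) * (exp (-‖y + m • u‖ ^ 2 / 2) *
     exp (m * (1 + 2 * β) * ⟪x + u, y + m • u⟫ - β * ‖y + m • u‖ ^ 2))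
     = exp (-(m * (1 + 2 * β) * m / 2) * ‖x‖ ^ 2) * (exp (-‖y‖ ^ 2 / 2) *
     exp (m * (1 + 2 * β) * ⟪x, y⟫ - β * ‖y‖ ^ 2)) := by
    simp only [← exp_add]
    congr 1
    simp only [← real_inner_self_eq_norm_sq, inner_add_left, inner_add_right, inner_smul_left,
      inner_smul_right, real_inner_comm u y, real_inner_comm x u]
    simp only [real_inner_comm y u, real_inner_comm y x, real_inner_comm u x]
    simp
    ring
  have hr : f y * (f (y + m • u) / f y) = f (y + m • u) := by field_simp
  linear_combination c * f (y + m • u) * ψ (y - m • x) * this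
    - c * ψ (y - m • x) * (exp (-(m * (1 + 2 * β) * m / 2) * ‖x‖ ^ 2) * (exp (-‖y‖ ^ 2 / 2) *
     exp (m * (1 + 2 * β) * ⟪x, y⟫ - β * ‖y‖ ^ 2))) * hr

lemma exp_two_bound (y : E) : 1 + ‖y‖ ≤ exp (2 * ‖y‖) := by
  have := add_one_le_exp (2 * ‖y‖)
  linarith [norm_nonneg y]

lemma sq_bound (y : E) : (1 + ‖y‖) ^ 2 ≤ exp (2 * ‖y‖) := by
  have := add_one_le_exp ‖y‖
  calc (1 + ‖y‖) ^ 2 ≤ (exp ‖y‖) ^ 2 := by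
        apply pow_le_pow_left₀ (by positivity); linarith
    _ = _ := by rw [← exp_nat_mul]; norm_num

lemma Lam_apply {F : Type*} [NormedAddCommGroup F] [NormedSpace ℝ F]
    [SecondCountableTopology F] [CompleteSpace F]
    (ν : Measure E) [IsFiniteMeasure ν] (κ β : ℝ) (hβ : 0 < β) (x w : E) (ψ : E → F)
    (hψ : Continuous ψ) (C : ℝ) (hC0 : 0 ≤ C) (hb : ∀ y, ‖ψ y‖ ≤ C * (1 + ‖y‖)) :
    (∫ y, W κ β x y • (κ • (innerSL ℝ y).smulRight (ψ y)) ∂ν) w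
      = κ • ∫ y, W κ β x y • (⟪y, w⟫ • ψ y) ∂ν := by
  rw [ContinuousLinearMap.integral_apply, ← integral_smul]
  · refine integral_congr_ae (Filter.Eventually.of_forall fun y => ?_)
    simp only [smul_apply, ContinuousLinearMap.smulRight_apply,
      innerSL_apply_apply, smul_smul]
    congr 1
    ring
  · refine integ ν κ β hβ x _ ?_ (|κ| * C) fun y => ?_
    · apply Continuous.aestronglyMeasurable
      refine Continuous.const_smul (?_ : Continuous fun y : E => (innerSL ℝ y).smulRight (ψ y)) κ
      exact (ContinuousLinearMap.smulRightL ℝ E F).continuous₂.comp₂ (innerSL ℝ).continuous hψ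
    · rw [norm_smul, Real.norm_eq_abs, ContinuousLinearMap.norm_smulRight_apply,
        innerSL_apply_norm, mul_assoc]
      refine mul_le_mul_of_nonneg_left ?_ (abs_nonneg _)
      calc ‖y‖ * ‖ψ y‖ ≤ (1 + ‖y‖) * (C * (1 + ‖y‖)) := by
            gcongr
            · linarith
            · exact hb y
        _ = C * (1 + ‖y‖) ^ 2 := by ring
        _ ≤ _ := mul_le_mul_of_nonneg_left (sq_bound y) hC0

/-- derivative along a line -/
lemma line_deriv (ν : Measure E) [IsFiniteMeasure ν] (κ β : ℝ) (hβ : 0 < β) (x w : E) (ψ : E → ℝ)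
    (hψ : Continuous ψ) (C : ℝ) (hC0 : 0 ≤ C) (hb : ∀ y, ‖ψ y‖ ≤ C * (1 + ‖y‖)) :
    HasDerivAt (fun ε : ℝ => ∫ y, W κ β (x + ε • w) y • ψ y ∂ν)
      (κ * ∫ y, W κ β x y • (⟪y, w⟫ * ψ y) ∂ν) 0 := by
  have h1 := hasFDerivAt_Lam ν κ β hβ x ψ hψ C hC0 hb
  have h2 : HasDerivAt (fun ε : ℝ => x + ε • w) w 0 := by
    simpa using ((hasDerivAt_id (0:ℝ)).smul_const w).const_add x
  have h1' : HasFDerivAt (fun x => ∫ y, W κ β x y • ψ y ∂ν)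
      (∫ y, W κ β x y • (κ • (innerSL ℝ y).smulRight (ψ y)) ∂ν) (x + (0:ℝ) • w) := by
    simpa using h1
  have h3 := h1'.comp_hasDerivAt (0:ℝ) h2
  rw [Lam_apply ν κ β hβ x w ψ hψ C hC0 hb] at h3
  exact h3

lemma QI_bound (L : ℝ) (hL : 0 ≤ L) (c : ℝ) (hc : 0 < c) (f : E → ℝ) (hf_pos : ∀ x, 0 < f x)
    (hf : ∀ x y : E, |Real.log (f x) - Real.log (f y)| ≤ L * ‖x - y‖)
    (ν : Measure E) [IsFiniteMeasure ν]
    (hν : ν = volume.withDensity (fun y => ENNReal.ofReal (c * exp (-‖y‖ ^ 2 / 2) * f y)))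
    (β m : ℝ) (hβ : 0 < β) (hm : 0 < m) (ψ : E → ℝ) (x w : E) (hψ : Continuous ψ)
    (C : ℝ) (hb : ∀ y, ‖ψ (y - m • x)‖ ≤ C * exp (2 * ‖y‖)) (ε : ℝ) (hε : 0 < ε) :
    |exp (-(m * (1 + 2 * β) * m / 2) * ‖x + ε • w‖ ^ 2) *
      ∫ y, W (m * (1 + 2 * β)) β (x + ε • w) y • ψ (y - m • (x + ε • w)) ∂ν
    - exp (-(m * (1 + 2 * β) * m / 2) * ‖x + (0:ℝ) • w‖ ^ 2) *
      ∫ y, W (m * (1 + 2 * β)) β (x + (0:ℝ) • w) y • ψ (y - m • (x + (0:ℝ) • w)) ∂ν| ≤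
    (exp ((m * L * ‖w‖) * ε) - 1) * (exp (-(m * (1 + 2 * β) * m / 2) * ‖x‖ ^ 2) *
      ∫ y, W (m * (1 + 2 * β)) β x y • |ψ (y - m • x)| ∂ν) := by
  have hfc := f_cont L hL f hf_pos hf
  rw [QI c hc f hf_pos hfc ν hν β m ψ x (ε • w)]
  simp only [zero_smul, add_zero]
  have hr := ratio_bound L f hf_pos hf (m • (ε • w))
  have hn : L * ‖m • (ε • w)‖ = m * L * ‖w‖ * ε := by
    rw [norm_smul, norm_smul, Real.norm_of_nonneg hm.le, Real.norm_of_nonneg hε.le]; ring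
  rw [hn] at hr
  set M := exp (m * L * ‖w‖ * ε)
  have hψ' : Continuous fun y => ψ (y - m • x) := by fun_prop
  have i0 : Integrable (fun y => W (m * (1 + 2 * β)) β x y • ψ (y - m • x)) ν :=
    integ ν _ β hβ x _ hψ'.aestronglyMeasurable C hb
  have i1 : Integrable (fun y => W (m * (1 + 2 * β)) β x y • |ψ (y - m • x)|) ν :=
    integ ν _ β hβ x _ hψ'.abs.aestronglyMeasurable C (fun y => by
      rw [Real.norm_eq_abs, abs_abs]; exact hb y)
  have hrc : Continuous fun y => f (y + m • ε • w) / f y :=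
    (hfc.comp (by fun_prop)).div hfc fun y => (hf_pos y).ne'
  have i2 : Integrable (fun y => W (m * (1 + 2 * β)) β x y •
      (ψ (y - m • x) * (f (y + m • ε • w) / f y))) ν := by
    refine integ ν _ β hβ x _ (hψ'.mul hrc).aestronglyMeasurable (C * M) fun y => ?_
    have : |f (y + m • ε • w) / f y| ≤ M := by
      have h1 := hr y
      have h2 := abs_add_le (f (y + m • ε • w) / f y - 1) 1
      simp only [sub_add_cancel, abs_one] at h2
      linarith
    rw [norm_mul, Real.norm_eq_abs (f _ / _)]
    calc _ ≤ (C * exp (2 * ‖y‖)) * M := by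
          gcongr
          · exact (norm_nonneg _).trans (hb y)
          · exact hb y
      _ = _ := by ring
  rw [← mul_sub, ← integral_sub i2 i0, abs_mul, abs_of_pos (exp_pos _), mul_left_comm]
  gcongr
  rw [← integral_const_mul, ← Real.norm_eq_abs]
  refine norm_integral_le_of_norm_le (i1.const_mul (M - 1)) (Filter.Eventually.of_forall fun y => ?_)
  simp only [smul_eq_mul]
  have : W (m * (1 + 2 * β)) β x y * (ψ (y - m • x) * (f (y + m • ε • w) / f y)) -
      W (m * (1 + 2 * β)) β x y * ψ (y - m • x)
      = W (m * (1 + 2 * β)) β x y * ψ (y - m • x) * (f (y + m • ε • w) / f y - 1) := by ring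
  rw [this, Real.norm_eq_abs, abs_mul, abs_mul, abs_of_pos (W_pos _ _ _ _), mul_comm]
  exact mul_le_mul_of_nonneg_right (hr y) (mul_nonneg (W_pos _ _ _ _).le (abs_nonneg _))

lemma alg (L n k m A S X : ℝ) (hL : 0 ≤ L) (hn : 0 ≤ n) (hk : 0 < k)
    (hAS : A ^ 2 ≤ S) (h2 : |k * S - n ^ 2| ≤ L * n * A)
    (h1 : |k * X| ≤ L * n) :
    (m * k) ^ 2 * (S - X ^ 2) ≤ (m ^ 2 * k + (m ^ 2 * L * √k + m ^ 2 * L ^ 2)) * n ^ 2 ∧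
    (m ^ 2 * k - (m ^ 2 * L * √k + m ^ 2 * L ^ 2) - m ^ 2 * L ^ 2) * n ^ 2 ≤
      (m * k) ^ 2 * (S - X ^ 2) := by
  obtain ⟨t, ht, rfl⟩ : ∃ t : ℝ, 0 < t ∧ k = t ^ 2 := ⟨√k, sqrt_pos.2 hk, (sq_sqrt hk.le).symm⟩
  rw [sqrt_sq ht.le]
  have hAb : t ^ 2 * A ≤ n * (t + L) := by
    by_contra! h
    have e1 : t ^ 2 * A - L * n > n * t := by linarith
    have e2 : A * (t ^ 2 * A - L * n) ≤ n ^ 2 := by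
      have := (abs_le.1 h2).2
      nlinarith [mul_le_mul_of_nonneg_left hAS (sq_nonneg t)]
    have e3 : t * A > n := by
      have h1 : t * (t * A) > t * n := by nlinarith [mul_nonneg hn hL]
      exact lt_of_mul_lt_mul_left h1 ht.le
    have e4 : 0 < A := by
      by_contra! h'
      nlinarith
    nlinarith [mul_lt_mul_of_pos_left e1 e4, mul_nonneg hn hn, mul_le_mul_of_nonneg_left e3.le hn]
  have h2' := abs_le.1 h2
  have h1' : (t ^ 2 * X) ^ 2 ≤ (L * n) ^ 2 := by
    rw [← sq_abs]; exact pow_le_pow_left₀ (abs_nonneg _) h1 2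
  have e5 : t ^ 2 * (L * n * A) ≤ L * n ^ 2 * (t + L) := by
    nlinarith [mul_le_mul_of_nonneg_left hAb (mul_nonneg hL hn)]
  have e6 : t ^ 2 * (t ^ 2 * S) ≤ t ^ 2 * n ^ 2 + L * n ^ 2 * (t + L) := by
    nlinarith [mul_le_mul_of_nonneg_left h2'.2 (sq_nonneg t)]
  have e7 : t ^ 2 * n ^ 2 - L * n ^ 2 * (t + L) ≤ t ^ 2 * (t ^ 2 * S) := by
    nlinarith [mul_le_mul_of_nonneg_left h2'.1 (sq_nonneg t)]
  have e8 : t ^ 2 * (t ^ 2 * S) - (t ^ 2 * X) ^ 2 ≤ t ^ 2 * n ^ 2 + L * n ^ 2 * (t + L) := by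
    nlinarith [sq_nonneg (t ^ 2 * X)]
  have e9 : t ^ 2 * n ^ 2 - L * n ^ 2 * (t + L) - (L * n) ^ 2 ≤
    t ^ 2 * (t ^ 2 * S) - (t ^ 2 * X) ^ 2 := by linarith
  constructor
  · have := mul_le_mul_of_nonneg_left e8 (sq_nonneg m)
    linarith
  · have := mul_le_mul_of_nonneg_left e9 (sq_nonneg m)
    linarith

lemma core (L : ℝ) (hL : 0 ≤ L) (c : ℝ) (hc : 0 < c) (f : E → ℝ) (hf_pos : ∀ x, 0 < f x)
    (hf : ∀ x y : E, |Real.log (f x) - Real.log (f y)| ≤ L * ‖x - y‖)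
    (ν : Measure E) [IsProbabilityMeasure ν]
    (hν : ν = volume.withDensity (fun y => ENNReal.ofReal (c * exp (-‖y‖ ^ 2 / 2) * f y)))
    (β m κ : ℝ) (hβ : 0 < β) (hm : 0 < m) (hκ : κ = m * (1 + 2 * β)) (x w : E) (Z N Q : ℝ)
    (hZ0 : 0 < Z)
    (hZ : Z = ∫ y, W κ β x y • (1:ℝ) ∂ν)
    (hN : N = ∫ y, W κ β x y • ⟪y, w⟫ ∂ν)
    (hQ : Q = ∫ y, W κ β x y • (⟪y, w⟫ * ⟪y, w⟫) ∂ν) :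
    κ ^ 2 * (Q / Z - (N / Z) ^ 2) ≤
      (m ^ 2 * (1 + 2 * β) + (m ^ 2 * L * √(1 + 2 * β) + m ^ 2 * L ^ 2)) * ‖w‖ ^ 2 ∧
    (m ^ 2 * (1 + 2 * β) - (m ^ 2 * L * √(1 + 2 * β) + m ^ 2 * L ^ 2) - m ^ 2 * L ^ 2) * ‖w‖ ^ 2 ≤
      κ ^ 2 * (Q / Z - (N / Z) ^ 2) := by
  have hwb : ∀ y : E, ‖⟪y, w⟫‖ ≤ ‖w‖ * (1 + ‖y‖) := fun y => by
    have := abs_real_inner_le_norm y w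
    rw [Real.norm_eq_abs]; nlinarith [norm_nonneg w]
  have ib : ∀ (x : E), Integrable (fun y => W κ β x y • (1:ℝ)) ν := fun x =>
    integ ν κ β hβ x _ continuous_const.aestronglyMeasurable 1 fun y => by
      simp
  have i1 : ∀ (x : E), Integrable (fun y => W κ β x y • ⟪y, w⟫) ν := fun x =>
    integ ν κ β hβ x _ (by fun_prop) ‖w‖ fun y => (hwb y).trans
      (mul_le_mul_of_nonneg_left (exp_two_bound y) (norm_nonneg w))
  have i2 : ∀ (x : E), Integrable (fun y => W κ β x y • (⟪y, w⟫ * ⟪y, w⟫)) ν := fun x =>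
    integ ν κ β hβ x _ (by fun_prop) (‖w‖ ^ 2) fun y => by
      rw [norm_mul]
      calc _ ≤ (‖w‖ * (1 + ‖y‖)) * (‖w‖ * (1 + ‖y‖)) :=
            mul_le_mul (hwb y) (hwb y) (norm_nonneg _) (by positivity)
        _ = ‖w‖ ^ 2 * (1 + ‖y‖) ^ 2 := by ring
        _ ≤ _ := mul_le_mul_of_nonneg_left (sq_bound y) (by positivity)
  -- line derivatives
  have hsq : HasDerivAt (fun ε : ℝ => exp (-(κ * m / 2) * ‖x + ε • w‖ ^ 2))
      (exp (-(κ * m / 2) * ‖x‖ ^ 2) * (-(κ * m) * ⟪x, w⟫)) 0 := by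
    have h2 : HasDerivAt (fun ε : ℝ => x + ε • w) w 0 := by
      simpa using ((hasDerivAt_id (0:ℝ)).smul_const w).const_add x
    have h3 := (h2.norm_sq.const_mul (-(κ * m / 2))).exp
    convert h3 using 1
    simp only [zero_smul, add_zero]
    ring
  have hlin : HasDerivAt (fun ε : ℝ => m * ⟪x + ε • w, w⟫) (m * ‖w‖ ^ 2) 0 := by
    have : (fun ε : ℝ => m * ⟪x + ε • w, w⟫) = fun ε : ℝ => m * (⟪x, w⟫ + ε * ‖w‖ ^ 2) := by
      ext ε
      rw [inner_add_left, real_inner_smul_left, real_inner_self_eq_norm_sq]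
    rw [this]
    simpa using (((hasDerivAt_id (0:ℝ)).mul_const (‖w‖ ^ 2)).const_add ⟪x, w⟫).const_mul m
  have d0 := line_deriv ν κ β hβ x w (fun _ => (1:ℝ)) continuous_const 1 zero_le_one
    (fun y => by simp)
  have d1 := line_deriv ν κ β hβ x w (fun y => ⟪y, w⟫) (by fun_prop) ‖w‖ (norm_nonneg w) hwb
  simp only [mul_one] at d0
  rw [← hN] at d0
  rw [← hQ] at d1
  -- first function
  have φ0 := hsq.mul d0
  have b0 := deriv_bound _ _ (m * L * ‖w‖) (exp (-(κ * m / 2) * ‖x‖ ^ 2) * Z) φ0 (by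
    intro ε hε
    have := QI_bound L hL c hc f hf_pos hf ν hν β m hβ hm (fun _ => (1:ℝ)) x w continuous_const 1
      (fun y => by simp) ε hε
    rw [← hκ] at this
    simp only [abs_one] at this
    rw [← hZ] at this
    exact this)
  have hshift : ∀ x' : E, ∫ y, W κ β x' y • ⟪y - m • x', w⟫ ∂ν
      = ∫ y, W κ β x' y • ⟪y, w⟫ ∂ν - m * ⟪x', w⟫ * ∫ y, W κ β x' y • (1:ℝ) ∂ν := by
    intro x'
    rw [← integral_const_mul, ← integral_sub (i1 x') ((ib x').const_mul _)]
    refine integral_congr_ae (Filter.Eventually.of_forall fun y => ?_)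
    simp only [inner_sub_left, real_inner_smul_left, smul_eq_mul]
    ring
  have φ1 := hsq.mul (d1.sub (hlin.mul d0))
  have hXb : ∀ y : E, ‖⟪y - m • x, w⟫‖ ≤ (‖w‖ * (1 + ‖m • x‖)) * (1 + ‖y‖) := fun y => by
    have h1 := hwb (y - m • x)
    have h2 := norm_sub_le y (m • x)
    refine h1.trans ?_
    rw [mul_assoc]
    refine mul_le_mul_of_nonneg_left ?_ (norm_nonneg w)
    nlinarith [norm_nonneg y, norm_nonneg (m • x), mul_nonneg (norm_nonneg y) (norm_nonneg (m • x))]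
  have hXb' : ∀ y : E, ‖⟪y - m • x, w⟫‖ ≤ (‖w‖ * (1 + ‖m • x‖)) * exp (2 * ‖y‖) := fun y =>
    (hXb y).trans (mul_le_mul_of_nonneg_left (exp_two_bound y) (by positivity))
  obtain ⟨A, hA⟩ : ∃ A, A = ∫ y, W κ β x y • |⟪y - m • x, w⟫| ∂ν := ⟨_, rfl⟩
  have b1 := deriv_bound _ _ (m * L * ‖w‖) (exp (-(κ * m / 2) * ‖x‖ ^ 2) * A) φ1 (by
    intro ε hε
    have := QI_bound L hL c hc f hf_pos hf ν hν β m hβ hm (fun y => ⟪y, w⟫) x w (by fun_prop) _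
      hXb' ε hε
    rw [← hκ] at this
    simp only [hshift] at this
    rw [← hA] at this
    exact this)
  simp only [zero_smul, add_zero, Pi.sub_apply, Pi.mul_apply] at b0 b1
  rw [← hZ] at b0 b1
  rw [← hN] at b1
  -- second moment of X
  obtain ⟨S, hS⟩ : ∃ S, S = Q - 2 * (m * ⟪x, w⟫) * N + (m * ⟪x, w⟫) ^ 2 * Z := ⟨_, rfl⟩
  have i3 : Integrable (fun y => W κ β x y • (⟪y, w⟫ * ⟪y, w⟫)
      - 2 * (m * ⟪x, w⟫) * W κ β x y • ⟪y, w⟫) ν := (i2 x).sub ((i1 x).const_mul _)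
  have hS' : S = ∫ y, W κ β x y • (⟪y - m • x, w⟫ ^ 2) ∂ν := by
    rw [hS, hQ, hN, hZ, ← integral_const_mul, ← integral_const_mul,
      ← integral_sub (i2 x) ((i1 x).const_mul _),
      ← integral_add i3 ((ib x).const_mul _)]
    refine integral_congr_ae (Filter.Eventually.of_forall fun y => ?_)
    simp only [inner_sub_left, real_inner_smul_left, smul_eq_mul]
    ring
  have iA : Integrable (fun y => W κ β x y • |⟪y - m • x, w⟫|) ν :=
    integ ν κ β hβ x _ (by fun_prop) _ fun y => by
      rw [Real.norm_eq_abs, abs_abs]; exact hXb' y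
  have iS : Integrable (fun y => W κ β x y • (⟪y - m • x, w⟫ ^ 2)) ν :=
    integ ν κ β hβ x _ (by fun_prop) ((‖w‖ * (1 + ‖m • x‖)) ^ 2) fun y => by
      rw [norm_pow]
      calc _ ≤ ((‖w‖ * (1 + ‖m • x‖)) * (1 + ‖y‖)) ^ 2 :=
            pow_le_pow_left₀ (norm_nonneg _) (hXb y) 2
        _ = (‖w‖ * (1 + ‖m • x‖)) ^ 2 * (1 + ‖y‖) ^ 2 := by ring
        _ ≤ _ := mul_le_mul_of_nonneg_left (sq_bound y) (by positivity)
  have hA0 : 0 ≤ A := by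
    rw [hA]; exact integral_nonneg fun y => mul_nonneg (W_pos _ _ _ _).le (abs_nonneg _)
  have hCS : A ^ 2 ≤ S * Z := by
    have := discrim_le_zero (a := Z) (b := -2 * A) (c := S) (fun l => by
      have i4 : Integrable (fun y => W κ β x y • (1:ℝ) * (l * l)
          + -2 * W κ β x y • |⟪y - m • x, w⟫| * l) ν :=
        ((ib x).mul_const _).add ((iA.const_mul _).mul_const _)
      have e : Z * (l * l) + (-2 * A) * l + S =
          ∫ y, W κ β x y • ((l - |⟪y - m • x, w⟫|) ^ 2) ∂ν := by
        rw [hS', hA, hZ, ← integral_mul_const, ← integral_const_mul, ← integral_mul_const,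
          ← integral_add ((ib x).mul_const _) ((iA.const_mul _).mul_const _),
          ← integral_add i4 iS]
        refine integral_congr_ae (Filter.Eventually.of_forall fun y => ?_)
        simp only [smul_eq_mul]
        rw [← sq_abs ⟪y - m • x, w⟫]
        ring
      rw [e]
      exact integral_nonneg fun y => mul_nonneg (W_pos _ _ _ _).le (sq_nonneg _))
    rw [discrim] at this
    linarith
  have he := exp_pos (-(κ * m / 2) * ‖x‖ ^ 2)
  set e := exp (-(κ * m / 2) * ‖x‖ ^ 2)
  have b0' : |κ * (N - m * ⟪x, w⟫ * Z)| ≤ m * L * ‖w‖ * Z := by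
    have h : e * |κ * (N - m * ⟪x, w⟫ * Z)| ≤ e * (m * L * ‖w‖ * Z) := by
      rw [← abs_of_pos he, ← abs_mul, abs_of_pos he]
      convert b0 using 1
      · congr 1; ring
      · ring
    exact le_of_mul_le_mul_left h he
  have b1' : |κ * S - m * ‖w‖ ^ 2 * Z| ≤ m * L * ‖w‖ * A := by
    have h : e * |κ * S - m * ‖w‖ ^ 2 * Z| ≤ e * (m * L * ‖w‖ * A) := by
      rw [← abs_of_pos he, ← abs_mul, abs_of_pos he, hS]
      convert b1 using 1
      · congr 1; ring
      · ring
    exact le_of_mul_le_mul_left h he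
  have fin := alg L ‖w‖ (1 + 2 * β) m (A / Z) (S / Z) ((N - m * ⟪x, w⟫ * Z) / Z) hL (norm_nonneg w)
    (by positivity)
    (by rw [div_pow, div_le_div_iff₀ (by positivity) hZ0]; nlinarith)
    (by
      have : (1 + 2 * β) * (S / Z) - ‖w‖ ^ 2 = (κ * S - m * ‖w‖ ^ 2 * Z) / (m * Z) := by
        rw [hκ]; field_simp
      rw [this, abs_div, abs_of_pos (mul_pos hm hZ0), div_le_iff₀ (mul_pos hm hZ0)]
      refine b1'.trans (le_of_eq ?_)
      field_simp)
    (by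
      have : (1 + 2 * β) * ((N - m * ⟪x, w⟫ * Z) / Z) = (κ * (N - m * ⟪x, w⟫ * Z)) / (m * Z) := by
        rw [hκ]; field_simp
      rw [this, abs_div, abs_of_pos (mul_pos hm hZ0), div_le_iff₀ (mul_pos hm hZ0)]
      refine b0'.trans (le_of_eq ?_)
      ring)
  rw [← hκ] at fin
  have e2 : S / Z - ((N - m * ⟪x, w⟫ * Z) / Z) ^ 2 = Q / Z - (N / Z) ^ 2 := by
    rw [hS]; field_simp; ring
  rw [e2] at fin
  exact fin

lemma B_bound (L a b : ℝ) (hL : 0 ≤ L) (ha : 0 < a) (hb : 0 < b) :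
    (b / (a ^ 2 + b ^ 2)) ^ 2 * L * √(1 + 2 * (b ^ 2 / (2 * a ^ 2)))
      + (b / (a ^ 2 + b ^ 2)) ^ 2 * L ^ 2 ≤
    5 * L * b * (a ^ 2 + b ^ 2) ^ (-(3:ℝ)/2)
        * (L + (Real.log (Real.sqrt (a ^ 2 + b ^ 2) / b)) ^ (-(1:ℝ)/2)) := by
  have hσ2 : 0 < a ^ 2 + b ^ 2 := by positivity
  obtain ⟨σ, hσ, e⟩ : ∃ σ : ℝ, 0 < σ ∧ a ^ 2 + b ^ 2 = σ ^ 2 :=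
    ⟨√(a ^ 2 + b ^ 2), sqrt_pos.2 hσ2, (sq_sqrt hσ2.le).symm⟩
  have hbσ : b < σ := by
    apply lt_of_pow_lt_pow_left₀ 2 hσ.le
    have : 0 < a ^ 2 := by positivity
    linarith
  have e1 : 1 + 2 * (b ^ 2 / (2 * a ^ 2)) = (σ / a) ^ 2 := by
    rw [div_pow, ← e]; field_simp
  rw [e1, e, sqrt_sq (by positivity), sqrt_sq hσ.le]
  have e2 : (σ ^ 2) ^ (-(3:ℝ)/2) = 1 / σ ^ 3 := by
    rw [← Real.rpow_natCast σ 2, ← Real.rpow_mul hσ.le]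
    norm_num
  rw [e2]
  have hs : 0 < Real.log (σ / b) := Real.log_pos (by rwa [one_lt_div hb])
  have hs2 : Real.log (σ / b) ≤ (a / b) ^ 2 := by
    have h1 : Real.log ((σ / b) ^ 2) ≤ (σ / b) ^ 2 - 1 := Real.log_le_sub_one_of_pos (by positivity)
    rw [Real.log_pow] at h1
    have h2 : (σ / b) ^ 2 - 1 = (a / b) ^ 2 := by
      rw [div_pow, div_pow, ← e]; field_simp; ring
    rw [h2] at h1
    push_cast at h1
    linarith
  have hs3 : b / a ≤ (Real.log (σ / b)) ^ (-(1:ℝ)/2) := by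
    have h1 : (-(1:ℝ)/2) = -(1/2) := by ring
    rw [h1, Real.rpow_neg hs.le, ← Real.sqrt_eq_rpow]
    have h2 : √(Real.log (σ / b)) ≤ a / b := Real.sqrt_le_iff.2 ⟨by positivity, hs2⟩
    have h3 := inv_anti₀ (sqrt_pos.2 hs) h2
    rwa [inv_div] at h3
  set r := (Real.log (σ / b)) ^ (-(1:ℝ)/2)
  have hr : 0 ≤ r := le_trans (by positivity) hs3
  have f1 : (b / σ ^ 2) ^ 2 * L * (σ / a) = L * b * (1 / σ ^ 3) * (b / a) := by
    field_simp
  have f2 : (b / σ ^ 2) ^ 2 * L ^ 2 = L * b * (1 / σ ^ 3) * (L * (b / σ)) := by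
    field_simp
  have f3 : b / σ ≤ 1 := by rw [div_le_one hσ]; exact hbσ.le
  rw [f1, f2, ← mul_add]
  have g : 0 ≤ L * b * (1 / σ ^ 3) := by positivity
  have g2 : b / a + L * (b / σ) ≤ L + r := by nlinarith
  have g3 := mul_le_mul_of_nonneg_left g2 g
  have g4 : 0 ≤ L * b * (1 / σ ^ 3) * (L + r) := mul_nonneg g (by positivity)
  linarith

lemma final_alg (a b a' b' n T Bd B L : ℝ) (ha : 0 < a) (hb : 0 < b) (ha' : a' ≤ 0) (hb' : 0 ≤ b')
    (hBd : Bd ≤ B)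
    (h1 : T ≤ ((b / (a ^ 2 + b ^ 2)) ^ 2 * (1 + 2 * (b ^ 2 / (2 * a ^ 2))) + Bd) * n ^ 2)
    (h2 : ((b / (a ^ 2 + b ^ 2)) ^ 2 * (1 + 2 * (b ^ 2 / (2 * a ^ 2))) - Bd
      - (b / (a ^ 2 + b ^ 2)) ^ 2 * L ^ 2) * n ^ 2 ≤ T) :
    (((b' / b) * a ^ 2 - a' * a) * (-B - L ^ 2 * (b / (a ^ 2 + b ^ 2)) ^ 2)
          + (a' * a + b' * b) / (a ^ 2 + b ^ 2)) * n ^ 2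
        ≤ (b' / b) * n ^ 2 + ((b' / b) * a ^ 2 - a' * a) * (-(1 / a ^ 2) * n ^ 2 + T)
    ∧ (b' / b) * n ^ 2 + ((b' / b) * a ^ 2 - a' * a) * (-(1 / a ^ 2) * n ^ 2 + T)
      ≤ (((b' / b) * a ^ 2 - a' * a) * B + (a' * a + b' * b) / (a ^ 2 + b ^ 2)) * n ^ 2 := by
  have hc : 0 ≤ (b' / b) * a ^ 2 - a' * a := by
    have : 0 ≤ b' / b * a ^ 2 := by positivity
    nlinarith
  have key : (a' * a + b' * b) / (a ^ 2 + b ^ 2) = b' / b + ((b' / b) * a ^ 2 - a' * a) *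
      (-(1 / a ^ 2) + (b / (a ^ 2 + b ^ 2)) ^ 2 * (1 + 2 * (b ^ 2 / (2 * a ^ 2)))) := by
    field_simp
    ring
  rw [key]
  set c := (b' / b) * a ^ 2 - a' * a
  set k := (b / (a ^ 2 + b ^ 2)) ^ 2 * (1 + 2 * (b ^ 2 / (2 * a ^ 2)))
  have hB2 : Bd * n ^ 2 ≤ B * n ^ 2 := mul_le_mul_of_nonneg_right hBd (sq_nonneg n)
  constructor
  · have : (k - B - (b / (a ^ 2 + b ^ 2)) ^ 2 * L ^ 2) * n ^ 2 ≤ T := by linarith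
    linarith [mul_le_mul_of_nonneg_left this hc]
  · have : T ≤ (k + B) * n ^ 2 := by linarith
    linarith [mul_le_mul_of_nonneg_left this hc]

lemma Z_pos (ν : Measure E) [IsProbabilityMeasure ν] (κ β : ℝ) (hβ : 0 < β) (x : E) :
    0 < ∫ y, W κ β x y • (1:ℝ) ∂ν := by
  have i : Integrable (fun y => W κ β x y • (1:ℝ)) ν :=
    integ ν κ β hβ x _ continuous_const.aestronglyMeasurable 1 fun y => by simp
  simp only [smul_eq_mul, mul_one] at i ⊢
  exact integral_exp_pos i

lemma N_integ (ν : Measure E) [IsProbabilityMeasure ν] (κ β : ℝ) (hβ : 0 < β) (x : E) :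
    Integrable (fun y => W κ β x y • y) ν :=
  integ ν κ β hβ x _ continuous_id.aestronglyMeasurable 1 fun y => by
    have := exp_two_bound y
    linarith

lemma N_inner (ν : Measure E) [IsProbabilityMeasure ν] (κ β : ℝ) (hβ : 0 < β) (x w : E) :
    ⟪∫ y, W κ β x y • y ∂ν, w⟫ = ∫ y, W κ β x y • ⟪y, w⟫ ∂ν := by
  rw [real_inner_comm, ← integral_inner (N_integ ν κ β hβ x)]
  refine integral_congr_ae (Filter.Eventually.of_forall fun y => ?_)
  simp only [real_inner_smul_right, smul_eq_mul, real_inner_comm]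

lemma Z_fderiv (ν : Measure E) [IsProbabilityMeasure ν] (κ β : ℝ) (hβ : 0 < β) (x : E) :
    HasFDerivAt (fun x => ∫ y, W κ β x y • (1:ℝ) ∂ν)
      (κ • innerSL ℝ (∫ y, W κ β x y • y ∂ν)) x := by
  have h := hasFDerivAt_Lam ν κ β hβ x (fun _ => (1:ℝ)) continuous_const 1 zero_le_one
    (fun y => by simp)
  refine h.congr_fderiv ?_
  ext1 w
  rw [Lam_apply ν κ β hβ x w (fun _ => (1:ℝ)) continuous_const 1 zero_le_one (fun y => by simp)]
  simp only [smul_apply, innerSL_apply_apply, N_inner ν κ β hβ, smul_eq_mul,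
    mul_one]

lemma grad_log (ν : Measure E) [IsProbabilityMeasure ν] (κ β C q : ℝ) (hβ : 0 < β) (hC : 0 < C)
    (x : E) :
    gradient (fun z : E => Real.log (C * exp (-(‖z‖ ^ 2) / (2 * q)) * ∫ y, W κ β z y • (1:ℝ) ∂ν)) x
      = -(1 / q) • x + (κ / ∫ y, W κ β x y • (1:ℝ) ∂ν) • ∫ y, W κ β x y • y ∂ν := by
  apply HasGradientAt.gradient
  rw [hasGradientAt_iff_hasFDerivAt]
  have e : (fun z : E => Real.log (C * exp (-(‖z‖ ^ 2) / (2 * q)) * ∫ y, W κ β z y • (1:ℝ) ∂ν))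
      = fun z : E => (Real.log C + (-(1 / (2 * q))) * ‖z‖ ^ 2)
        + Real.log (∫ y, W κ β z y • (1:ℝ) ∂ν) := by
    ext z
    rw [Real.log_mul (mul_pos hC (exp_pos _)).ne' (Z_pos ν κ β hβ z).ne',
      Real.log_mul hC.ne' (exp_pos _).ne', Real.log_exp]
    ring
  rw [e]
  have h1 : HasFDerivAt (fun z : E => ‖z‖ ^ 2) (2 • innerSL ℝ x) x :=
    (hasStrictFDerivAt_norm_sq x).hasFDerivAt
  have h2 := ((h1.const_mul (-(1 / (2 * q)))).const_add (Real.log C)).add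
    ((Z_fderiv ν κ β hβ x).log (Z_pos ν κ β hβ x).ne')
  refine h2.congr_fderiv ?_
  ext1 w
  simp
  ring

lemma vel_inner (ν : Measure E) [IsProbabilityMeasure ν] (κ β r c q : ℝ) (hβ : 0 < β) (x w : E) :
    ⟪w, fderiv ℝ (fun z : E => r • z + c • (-(1 / q) • z +
      (κ / ∫ y, W κ β z y • (1:ℝ) ∂ν) • ∫ y, W κ β z y • y ∂ν)) x w⟫
    = r * ‖w‖ ^ 2 + c * (-(1 / q) * ‖w‖ ^ 2 + κ ^ 2 *
      ((∫ y, W κ β x y • (⟪y, w⟫ * ⟪y, w⟫) ∂ν) / (∫ y, W κ β x y • (1:ℝ) ∂ν)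
        - ((∫ y, W κ β x y • ⟪y, w⟫ ∂ν) / (∫ y, W κ β x y • (1:ℝ) ∂ν)) ^ 2)) := by
  have hN := hasFDerivAt_Lam ν κ β hβ x (fun y => y) continuous_id 1 zero_le_one
    (fun y => by linarith)
  have hNw := Lam_apply ν κ β hβ x w (fun y => y) continuous_id 1 zero_le_one
    (fun y => by linarith)
  have hZ := Z_fderiv ν κ β hβ x
  have hZ0 := Z_pos ν κ β hβ x
  have hinv := ((hasDerivAt_inv hZ0.ne').comp_hasFDerivAt x hZ).const_mul κ
  have hQ : ⟪w, ∫ y, W κ β x y • (⟪y, w⟫ • y) ∂ν⟫ = ∫ y, W κ β x y • (⟪y, w⟫ * ⟪y, w⟫) ∂ν := by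
    have i : Integrable (fun y => W κ β x y • (⟪y, w⟫ • y)) ν :=
      integ ν κ β hβ x _ (by fun_prop) ‖w‖ fun y => by
        rw [norm_smul]
        have h1 := abs_real_inner_le_norm y w
        calc ‖⟪y, w⟫‖ * ‖y‖ ≤ (‖y‖ * ‖w‖) * ‖y‖ := by
              apply mul_le_mul_of_nonneg_right h1 (norm_nonneg _)
          _ = ‖w‖ * ‖y‖ ^ 2 := by ring
          _ ≤ _ := by
            apply mul_le_mul_of_nonneg_left _ (norm_nonneg _)
            refine le_trans ?_ (sq_bound y)
            nlinarith [norm_nonneg y]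
    rw [← integral_inner i]
    refine integral_congr_ae (Filter.Eventually.of_forall fun y => ?_)
    simp only [real_inner_smul_right, smul_eq_mul, real_inner_comm]
  have hv := ((hasFDerivAt_id (𝕜 := ℝ) x).const_smul r).add
    ((((hasFDerivAt_id (𝕜 := ℝ) x).const_smul (-(1 / q))).add (hinv.smul hN)).const_smul c)
  have hv' := hv.fderiv
  refine Eq.trans (congrArg (fun l : E →L[ℝ] E => ⟪w, l w⟫) hv') ?_
  have hNi := N_inner ν κ β hβ x w
  have hNi' : ⟪w, ∫ y, W κ β x y • y ∂ν⟫ = ∫ y, W κ β x y • ⟪y, w⟫ ∂ν := by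
    rw [← hNi, real_inner_comm]
  simp only [add_apply, smul_apply,
    ContinuousLinearMap.smulRight_apply, hNw, inner_add_right, real_inner_smul_right, hQ,
    ContinuousLinearMap.id_apply, innerSL_apply_apply, smul_eq_mul, hNi, hNi',
    real_inner_self_eq_norm_sq, Function.comp_apply]
  field_simp
  ring
end VJ

/-- **Two-sided Jacobian bound for log-Lipschitz perturbations of the Gaussian.**
If `f = dν/dγ_d` is `L`-log-Lipschitz, then for all `t ∈ (0,1)` and `x`,
`(c_t(−B_t − L² (b_t/(a_t²+b_t²))²) + (ȧ a + ḃ b)/(a²+b²)) I ⪯ ∇_x v(t,x)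
  ⪯ (c_t B_t + (ȧ a + ḃ b)/(a²+b²)) I`, where `c_t = (ḃ_t/b_t) a_t² − ȧ_t a_t` and
`B_t = 5 L b_t (a_t²+b_t²)^{-3/2} (L + (log(√(a_t²+b_t²)/b_t))^{-1/2})`
(as quadratic forms). -/
theorem velocity_jacobian_bounds_log_lipschitz
    (d : ℕ) (hd : 1 ≤ d)
    (L : ℝ) (hL : 0 ≤ L)
    -- the standard Gaussian measure γ_d
    (γ : Measure (EuclideanSpace ℝ (Fin d)))
    (hγ : γ = volume.withDensity (fun z =>
      ENNReal.ofReal ((2 * π) ^ (-(d:ℝ)/2) * exp (-‖z‖ ^ 2 / 2))))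
    -- the target measure ν with L-log-Lipschitz relative density f = dν/dγ_d
    (f : EuclideanSpace ℝ (Fin d) → ℝ) (hf_pos : ∀ x, 0 < f x)
    (hf_logLip : ∀ x y : EuclideanSpace ℝ (Fin d),
      |Real.log (f x) - Real.log (f y)| ≤ L * ‖x - y‖)
    (ν : Measure (EuclideanSpace ℝ (Fin d))) [IsProbabilityMeasure ν]
    (hν : ν = γ.withDensity (fun x => ENNReal.ofReal (f x)))
    (hmom : Integrable (fun y => ‖y‖ ^ 2) ν)
    -- interpolation coefficients
    (a b : ℝ → ℝ)
    (ha'_nonpos : ∀ t ∈ Icc (0:ℝ) 1, deriv a t ≤ 0)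
    (hb'_nonneg : ∀ t ∈ Icc (0:ℝ) 1, 0 ≤ deriv b t)
    (ha0 : 0 < a 0) (hb0 : 0 ≤ b 0) (ha1 : a 1 = 0) (hb1 : b 1 = 1)
    (ha_pos : ∀ t ∈ Ioo (0:ℝ) 1, 0 < a t)
    (hb_pos : ∀ t ∈ Ioo (0:ℝ) 1, 0 < b t)
    (ha_C2 : ContDiffOn ℝ 2 a (Ico 0 1))
    (hb_C2 : ContDiffOn ℝ 2 b (Ico 0 1))
    (ha2_C1 : ContDiffOn ℝ 1 (fun t => (a t) ^ 2) (Icc 0 1))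
    (hb_C1 : ContDiffOn ℝ 1 b (Icc 0 1))
    -- marginal density, score and velocity field
    (p : ℝ → EuclideanSpace ℝ (Fin d) → ℝ)
    (hp : ∀ t x, p t x =
      ∫ y, (2 * π * (a t) ^ 2) ^ (-(d:ℝ)/2) * exp (-‖x - b t • y‖ ^ 2 / (2 * (a t) ^ 2)) ∂ν)
    (s : ℝ → EuclideanSpace ℝ (Fin d) → EuclideanSpace ℝ (Fin d))
    (hs : ∀ t ∈ Ioo (0:ℝ) 1, ∀ x, s t x = gradient (fun z => Real.log (p t z)) x)
    (v : ℝ → EuclideanSpace ℝ (Fin d) → EuclideanSpace ℝ (Fin d))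
    (hv : ∀ t ∈ Ioo (0:ℝ) 1, ∀ x,
      v t x = (deriv b t / b t) • x
        + ((deriv b t / b t) * (a t) ^ 2 - deriv a t * a t) • s t x)
    -- the quantity B_t
    (B : ℝ → ℝ)
    (hB : ∀ t ∈ Ioo (0:ℝ) 1, B t =
      5 * L * b t * ((a t) ^ 2 + (b t) ^ 2) ^ (-(3:ℝ)/2)
        * (L + (Real.log (Real.sqrt ((a t) ^ 2 + (b t) ^ 2) / b t)) ^ (-(1:ℝ)/2))) :
    ∀ t ∈ Ioo (0:ℝ) 1, ∀ x, ∀ w : EuclideanSpace ℝ (Fin d),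
      (((deriv b t / b t) * (a t) ^ 2 - deriv a t * a t)
            * (-B t - L ^ 2 * (b t / ((a t) ^ 2 + (b t) ^ 2)) ^ 2)
          + (deriv a t * a t + deriv b t * b t) / ((a t) ^ 2 + (b t) ^ 2)) * ‖w‖ ^ 2
        ≤ ⟪w, fderiv ℝ (v t) x w⟫
      ∧ ⟪w, fderiv ℝ (v t) x w⟫
        ≤ (((deriv b t / b t) * (a t) ^ 2 - deriv a t * a t) * B t
            + (deriv a t * a t + deriv b t * b t) / ((a t) ^ 2 + (b t) ^ 2)) * ‖w‖ ^ 2 := by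
  intro t ht x w
  have hat := ha_pos t ht
  have hbt := hb_pos t ht
  have ht' : t ∈ Icc (0:ℝ) 1 := ⟨ht.1.le, ht.2.le⟩
  have hβ : 0 < b t ^ 2 / (2 * a t ^ 2) := by positivity
  have hm : 0 < b t / (a t ^ 2 + b t ^ 2) := by positivity
  have hκ : b t / a t ^ 2 = b t / (a t ^ 2 + b t ^ 2) * (1 + 2 * (b t ^ 2 / (2 * a t ^ 2))) := by
    field_simp
  have hc : (0:ℝ) < (2 * π) ^ (-(d:ℝ)/2) := by positivity
  have hfc := VJ.f_cont L hL f hf_pos hf_logLip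
  have hν' : ν = volume.withDensity (fun y =>
      ENNReal.ofReal ((2 * π) ^ (-(d:ℝ)/2) * exp (-‖y‖ ^ 2 / 2) * f y)) := by
    rw [hν, hγ, ← withDensity_mul]
    · congr 1
      ext y
      simp only [Pi.mul_apply]
      rw [← ENNReal.ofReal_mul (by positivity)]
    · apply Measurable.ennreal_ofReal
      apply Continuous.measurable
      fun_prop
    · exact hfc.measurable.ennreal_ofReal
  have hp' : p t = fun z => (2 * π * (a t) ^ 2) ^ (-(d:ℝ)/2) * exp (-(‖z‖ ^ 2) / (2 * a t ^ 2)) *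
      ∫ y, VJ.W (b t / a t ^ 2) (b t ^ 2 / (2 * a t ^ 2)) z y • (1:ℝ) ∂ν := by
    ext z
    rw [hp, ← integral_const_mul]
    refine integral_congr_ae (Filter.Eventually.of_forall fun y => ?_)
    simp only [VJ.W, smul_eq_mul, mul_one]
    rw [mul_assoc ((2 * π * (a t) ^ 2) ^ (-(d:ℝ)/2)), ← exp_add, norm_sub_sq_real, real_inner_smul_right, norm_smul,
      Real.norm_of_nonneg hbt.le]
    congr 2
    field_simp
    ring
  have hv' : v t = fun z => (deriv b t / b t) • z
      + ((deriv b t / b t) * (a t) ^ 2 - deriv a t * a t) • (-(1 / a t ^ 2) • z +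
      ((b t / a t ^ 2) / ∫ y, VJ.W (b t / a t ^ 2) (b t ^ 2 / (2 * a t ^ 2)) z y • (1:ℝ) ∂ν) •
        ∫ y, VJ.W (b t / a t ^ 2) (b t ^ 2 / (2 * a t ^ 2)) z y • y ∂ν) := by
    ext1 z
    rw [hv t ht z, hs t ht z]
    have := VJ.grad_log ν (b t / a t ^ 2) (b t ^ 2 / (2 * a t ^ 2))
      ((2 * π * (a t) ^ 2) ^ (-(d:ℝ)/2)) (a t ^ 2) hβ (by positivity) z
    rw [← this]
    simp only [hp']
  rw [hv', VJ.vel_inner ν _ _ _ _ _ hβ]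
  have hcore := VJ.core L hL _ hc f hf_pos hf_logLip ν hν' _ _ _ hβ hm hκ x w _ _ _
    (VJ.Z_pos ν _ _ hβ x) rfl rfl rfl
  have hBb := VJ.B_bound L (a t) (b t) hL hat hbt
  rw [← hB t ht] at hBb
  exact VJ.final_alg (a t) (b t) (deriv a t) (deriv b t) ‖w‖ _ _ (B t) L hat hbt
    (ha'_nonpos t ht') (hb'_nonneg t ht') hBb hcore.1 hcore.2
end
end

section
/- (Poincaré inequality along the interpolation) Let ν be a probability measure on ℝ^d satisfying the Poincaré inequality with constant C_P(ν) > 0: Var_ν(g) ≤ C_P(ν) ∫ ‖∇g‖² dν for all continuously differentiable g with the relevant integrals finite. Fix real numbers α, β ≥ 0 and let μ := Law(α Z + β X_1) with Z ~ N(0, I_d) independent of X_1 ~ ν. Then μ satisfies the Poincaré inequality with constant α² + β² C_P(ν): for every continuously differentiable f ∈ L²(μ) with ∫‖∇f‖² dμ < ∞, Var_μ(f) ≤ (α² + β² C_P(ν)) ∫ ‖∇f‖² dμ. In particular, for the Gaussian interpolation marginal p_t = Law(a_t Z + b_t X_1), C_P(p_t) ≤ a_t² + b_t² C_P(ν). 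-/
open MeasureTheory Real Set
open scoped ENNReal
noncomputable section

lemma var_nonneg_aux {X : Type*} [MeasurableSpace X] (μ : Measure X) [IsProbabilityMeasure μ]
    (f : X → ℝ) (hf : MemLp f 2 μ) : (∫ x, f x ∂μ) ^ 2 ≤ ∫ x, (f x) ^ 2 ∂μ := by
  have h := ProbabilityTheory.variance_nonneg f μ
  rw [ProbabilityTheory.variance_eq_sub hf] at h
  have : ∫ x, (f ^ 2) x ∂μ = ∫ x, (f x) ^ 2 ∂μ := rfl
  linarith

lemma integral_sub_const_sq {X : Type*} [MeasurableSpace X] (μ : Measure X) [IsProbabilityMeasure μ]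
    (f : X → ℝ) (hf : MemLp f 2 μ) (c : ℝ) :
    ∫ x, (f x - c) ^ 2 ∂μ = (∫ x, (f x) ^ 2 ∂μ) - 2 * c * (∫ x, f x ∂μ) + c ^ 2 := by
  have h1 : Integrable f μ := hf.integrable (by norm_num)
  have h2 : Integrable (fun x => f x ^ 2) μ := hf.integrable_sq
  have : ∀ x, (f x - c) ^ 2 = (f x ^ 2 - 2 * c * f x) + c ^ 2 := fun x => by ring
  simp_rw [this]
  have h3 : Integrable (fun x => f x ^ 2 - 2 * c * f x) μ := h2.sub (h1.const_mul _)
  rw [integral_add h3 (integrable_const _),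
    integral_sub h2 (h1.const_mul _), integral_const_mul]
  simp

/-- conditional expectation on a product is in L2 -/
lemma memLp_slice {X Y : Type*} [MeasurableSpace X] [MeasurableSpace Y]
    (μ : Measure X) (ν : Measure Y) [IsProbabilityMeasure μ] [IsProbabilityMeasure ν]
    (F : X × Y → ℝ) (hF : MemLp F 2 (μ.prod ν)) :
    (∀ᵐ x ∂μ, MemLp (fun y => F (x, y)) 2 ν) ∧ MemLp (fun x => ∫ y, F (x, y) ∂ν) 2 μ := by
  have h2 : Integrable (fun z => F z ^ 2) (μ.prod ν) := hF.integrable_sq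
  have hs : ∀ᵐ x ∂μ, MemLp (fun y => F (x, y)) 2 ν := by
    filter_upwards [h2.prod_right_ae, hF.1.prodMk_left] with x hx hm
    exact (memLp_two_iff_integrable_sq hm).2 hx
  refine ⟨hs, ?_⟩
  have hm : AEStronglyMeasurable (fun x => ∫ y, F (x, y) ∂ν) μ := hF.1.integral_prod_right'
  rw [memLp_two_iff_integrable_sq hm]
  refine Integrable.mono' h2.integral_prod_left (hm.pow 2) ?_
  filter_upwards [hs] with x hx
  rw [Real.norm_eq_abs, abs_of_nonneg (sq_nonneg _)]
  exact var_nonneg_aux ν _ hx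

lemma efron {X Y : Type*} [MeasurableSpace X] [MeasurableSpace Y]
    (μ : Measure X) (ν : Measure Y) [IsProbabilityMeasure μ] [IsProbabilityMeasure ν]
    (F G₁ G₂ : X × Y → ℝ) (hF : MemLp F 2 (μ.prod ν))
    (hG₁ : Integrable G₁ (μ.prod ν)) (hG₂ : Integrable G₂ (μ.prod ν))
    (h₂ : ∀ᵐ x ∂μ, MemLp (fun y => F (x, y)) 2 ν → Integrable (fun y => G₂ (x, y)) ν →
      (∫ y, F (x, y) ^ 2 ∂ν) - (∫ y, F (x, y) ∂ν) ^ 2 ≤ ∫ y, G₂ (x, y) ∂ν)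
    (h₁ : ∀ᵐ y ∂ν, MemLp (fun x => F (x, y)) 2 μ → Integrable (fun x => G₁ (x, y)) μ →
      (∫ x, F (x, y) ^ 2 ∂μ) - (∫ x, F (x, y) ∂μ) ^ 2 ≤ ∫ x, G₁ (x, y) ∂μ) :
    (∫ z, F z ^ 2 ∂(μ.prod ν)) - (∫ z, F z ∂(μ.prod ν)) ^ 2
      ≤ (∫ z, G₁ z ∂(μ.prod ν)) + ∫ z, G₂ z ∂(μ.prod ν) := by
  have hF1 : Integrable F (μ.prod ν) := hF.integrable (by norm_num)
  have hF2 : Integrable (fun z => F z ^ 2) (μ.prod ν) := hF.integrable_sq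
  obtain ⟨hsx, hA⟩ := memLp_slice μ ν F hF
  have hFs : MemLp (fun z : Y × X => F z.swap) 2 (ν.prod μ) :=
    hF.comp_measurePreserving Measure.measurePreserving_swap
  obtain ⟨hsy, hB⟩ := memLp_slice ν μ (fun z => F z.swap) hFs
  simp only [Prod.swap_prod_mk] at hsy hB
  set A : X → ℝ := fun x => ∫ y, F (x, y) ∂ν with hAdef
  set B : Y → ℝ := fun y => ∫ x, F (x, y) ∂μ with hBdef
  set m := ∫ z, F z ∂(μ.prod ν) with hm
  have hmB : ∫ y, B y ∂ν = m := (integral_prod_symm F hF1).symm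
  have hmA : ∫ x, A x ∂μ = m := (integral_prod F hF1).symm
  have eA : (∫ z, F z ^ 2 ∂(μ.prod ν)) - ∫ x, A x ^ 2 ∂μ ≤ ∫ z, G₂ z ∂(μ.prod ν) := by
    rw [integral_prod _ hF2, integral_prod _ hG₂, ← integral_sub hF2.integral_prod_left hA.integrable_sq]
    refine integral_mono_ae (hF2.integral_prod_left.sub hA.integrable_sq) hG₂.integral_prod_left ?_
    filter_upwards [hsx, h₂, hG₂.prod_right_ae] with x a b c using b a c
  have eB : (∫ z, F z ^ 2 ∂(μ.prod ν)) - ∫ y, B y ^ 2 ∂ν ≤ ∫ z, G₁ z ∂(μ.prod ν) := by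
    rw [integral_prod_symm _ hF2, integral_prod_symm _ hG₁, ← integral_sub hF2.integral_prod_right hB.integrable_sq]
    refine integral_mono_ae (hF2.integral_prod_right.sub hB.integrable_sq) hG₁.integral_prod_right ?_
    filter_upwards [hsy, h₁, hG₁.prod_left_ae] with x a b c using b a c
  -- D = F - A
  have hA' : MemLp (fun z : X × Y => A z.1) 2 (μ.prod ν) :=
    hA.comp_measurePreserving measurePreserving_fst
  have hD : MemLp (fun z : X × Y => F z - A z.1) 2 (μ.prod ν) := hF.sub hA'
  have e1 : ∫ z, (F z - A z.1) ^ 2 ∂(μ.prod ν) = (∫ z, F z ^ 2 ∂(μ.prod ν)) - ∫ x, A x ^ 2 ∂μ := by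
    rw [integral_prod _ hD.integrable_sq, integral_prod _ hF2,
      ← integral_sub hF2.integral_prod_left hA.integrable_sq]
    refine integral_congr_ae ?_
    filter_upwards [hsx] with x hx
    rw [integral_sub_const_sq ν _ hx]
    simp only [hAdef]; ring
  have e2 : ∫ y, (B y - m) ^ 2 ∂ν = (∫ y, B y ^ 2 ∂ν) - m ^ 2 := by
    rw [integral_sub_const_sq ν _ hB, hmB]; ring
  have e3 : ∫ y, (B y - m) ^ 2 ∂ν ≤ ∫ z, (F z - A z.1) ^ 2 ∂(μ.prod ν) := by
    rw [integral_prod_symm _ hD.integrable_sq]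
    refine integral_mono_ae (hB.sub (memLp_const m)).integrable_sq hD.integrable_sq.integral_prod_right ?_
    have hDs : MemLp (fun z : Y × X => F z.swap - A z.2) 2 (ν.prod μ) :=
      hD.comp_measurePreserving Measure.measurePreserving_swap
    filter_upwards [hsy, (memLp_slice ν μ _ hDs).1] with y hy hy'
    have := var_nonneg_aux μ _ hy'
    simp only [Prod.swap_prod_mk] at this
    rwa [integral_sub (hy.integrable (by norm_num)) (hA.integrable (by norm_num)), hmA] at this
  linarith

lemma cs_interval (f : ℝ → ℝ) (hf : ContDiff ℝ 1 f) (x y : ℝ) (h : y ≤ x) :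
    (f x - f y) ^ 2 ≤ (x - y) * ∫ s in y..x, (deriv f s) ^ 2 := by
  have hd : Continuous (deriv f) := hf.continuous_deriv le_rfl
  rcases h.eq_or_lt with rfl | hlt
  · simp
  have hpos : 0 < x - y := by linarith
  have hI : ∫ s in y..x, deriv f s = f x - f y :=
    intervalIntegral.integral_deriv_eq_sub (fun s _ => (hf.differentiable one_ne_zero) s)
      (hd.intervalIntegrable _ _)
  set c := (f x - f y) / (x - y) with hc
  have h0 : 0 ≤ ∫ s in y..x, (deriv f s - c) ^ 2 :=
    intervalIntegral.integral_nonneg h (fun s _ => sq_nonneg _)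
  have hE : ∫ s in y..x, (deriv f s - c) ^ 2
      = (∫ s in y..x, (deriv f s) ^ 2) - 2 * c * (f x - f y) + c ^ 2 * (x - y) := by
    have : ∀ s, (deriv f s - c) ^ 2 = (deriv f s ^ 2 - 2 * c * deriv f s) + c ^ 2 := fun s => by ring
    simp_rw [this]
    rw [intervalIntegral.integral_add (by apply Continuous.intervalIntegrable; fun_prop)
      (by apply Continuous.intervalIntegrable; fun_prop),
      intervalIntegral.integral_sub (by apply Continuous.intervalIntegrable; fun_prop)
      (by apply Continuous.intervalIntegrable; fun_prop), intervalIntegral.integral_const_mul, hI]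
    simp; ring
  have hcx : c * (x - y) = f x - f y := by rw [hc]; field_simp
  rw [hE, ← hcx] at h0
  rw [← hcx]
  nlinarith

/-- one half of the kernel -/
def kerK (x y s : ℝ) : ℝ≥0∞ :=
  ENNReal.ofReal (x - s) * (Iio s).indicator 1 y + (Ici s).indicator 1 x * ENNReal.ofReal (s - y)

lemma kerK_meas : Measurable (fun p : (ℝ × ℝ) × ℝ => kerK p.1.1 p.1.2 p.2) := by
  unfold kerK
  have h1 : Measurable (fun p : (ℝ × ℝ) × ℝ => (Iio p.2).indicator (1 : ℝ → ℝ≥0∞) p.1.2) := by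
    have : (fun p : (ℝ × ℝ) × ℝ => (Iio p.2).indicator (1 : ℝ → ℝ≥0∞) p.1.2)
      = {p : (ℝ × ℝ) × ℝ | p.1.2 < p.2}.indicator 1 := by
      ext p; simp [indicator]
    rw [this]
    exact measurable_one.indicator (measurableSet_lt (by fun_prop) (by fun_prop))
  have h2 : Measurable (fun p : (ℝ × ℝ) × ℝ => (Ici p.2).indicator (1 : ℝ → ℝ≥0∞) p.1.1) := by
    have : (fun p : (ℝ × ℝ) × ℝ => (Ici p.2).indicator (1 : ℝ → ℝ≥0∞) p.1.1)
      = {p : (ℝ × ℝ) × ℝ | p.2 ≤ p.1.1}.indicator 1 := by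
      ext p; simp [indicator]
    rw [this]
    exact measurable_one.indicator (measurableSet_le (by fun_prop) (by fun_prop))
  fun_prop

lemma cs_lintegral_le (f : ℝ → ℝ) (hf : ContDiff ℝ 1 f) (x y : ℝ) (h : y ≤ x) :
    ENNReal.ofReal ((f x - f y) ^ 2) ≤
      ∫⁻ s, kerK x y s * ENNReal.ofReal ((deriv f s) ^ 2) := by
  have hd : Continuous (deriv f) := hf.continuous_deriv le_rfl
  calc ENNReal.ofReal ((f x - f y) ^ 2)
      ≤ ENNReal.ofReal ((x - y) * ∫ s in y..x, (deriv f s) ^ 2) :=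
        ENNReal.ofReal_le_ofReal (cs_interval f hf x y h)
    _ = ENNReal.ofReal (x - y) * ∫⁻ s in Ioc y x, ENNReal.ofReal ((deriv f s) ^ 2) := by
        rw [ENNReal.ofReal_mul (by linarith), intervalIntegral.integral_of_le h,
          ofReal_integral_eq_lintegral_ofReal]
        · exact ((hd.pow 2).integrableOn_Icc).mono_set Ioc_subset_Icc_self
        · exact Filter.Eventually.of_forall (fun s => sq_nonneg _)
    _ = ∫⁻ s in Ioc y x, ENNReal.ofReal (x - y) * ENNReal.ofReal ((deriv f s) ^ 2) := by
        rw [lintegral_const_mul]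
        exact ((hd.pow 2).measurable).ennreal_ofReal
    _ ≤ ∫⁻ s in Ioc y x, kerK x y s * ENNReal.ofReal ((deriv f s) ^ 2) := by
        refine setLIntegral_mono' measurableSet_Ioc (fun s hs => ?_)
        gcongr
        have h1 : y < s := hs.1
        have h2 : s ≤ x := hs.2
        simp only [kerK, indicator, mem_Iio, h1, mem_Ici, h2, if_true, Pi.one_apply, mul_one, one_mul]
        rw [← ENNReal.ofReal_add (by linarith) (by linarith)]
        apply ENNReal.ofReal_le_ofReal; linarith
    _ ≤ _ := setLIntegral_le_lintegral _ _

lemma cs_lintegral (f : ℝ → ℝ) (hf : ContDiff ℝ 1 f) (x y : ℝ) :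
    ENNReal.ofReal ((f x - f y) ^ 2) ≤
      ∫⁻ s, (kerK x y s + kerK y x s) * ENNReal.ofReal ((deriv f s) ^ 2) := by
  rcases le_total y x with h | h
  · refine (cs_lintegral_le f hf x y h).trans (lintegral_mono fun s => ?_)
    gcongr; exact le_self_add
  · rw [← neg_sub, neg_sq]
    refine (cs_lintegral_le f hf y x h).trans (lintegral_mono fun s => ?_)
    gcongr; exact le_add_self

open ProbabilityTheory in
lemma pdf_hasDeriv (x : ℝ) :
    HasDerivAt (gaussianPDFReal 0 1) (-(x * gaussianPDFReal 0 1 x)) x := by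
  have e : gaussianPDFReal 0 1 = fun x => (√(2 * π))⁻¹ * rexp (-x ^ 2 / 2) := by
    ext x; simp [gaussianPDFReal]
  rw [e]
  have h : HasDerivAt (fun x : ℝ => -x ^ 2 / 2) (-x) x := by
    have := ((hasDerivAt_pow 2 x).neg).div_const 2
    convert! this using 1
    simp; ring
  convert! (h.exp.const_mul (√(2 * π))⁻¹) using 1
  ring

open ProbabilityTheory in
lemma pdf_tendsto : Filter.Tendsto (gaussianPDFReal 0 1) Filter.atTop (nhds 0) := by
  have e : gaussianPDFReal 0 1 = fun x => (√(2 * π))⁻¹ * rexp (-x ^ 2 / 2) := by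
    ext x; simp [gaussianPDFReal]
  rw [e, ← mul_zero (√(2 * π))⁻¹]
  refine Filter.Tendsto.const_mul _ (Real.tendsto_exp_atBot.comp ?_)
  have : Filter.Tendsto (fun x : ℝ => x ^ 2 / 2) Filter.atTop Filter.atTop :=
    (Filter.tendsto_pow_atTop two_ne_zero).atTop_div_const two_pos
  convert! Filter.tendsto_neg_atTop_atBot.comp this using 2
  simp [neg_div]

open ProbabilityTheory in
lemma gauss_tail (s : ℝ) : ∫ x in Ioi s, x ∂(gaussianReal 0 1) = gaussianPDFReal 0 1 s := by
  have hint : Integrable (fun x : ℝ => x) (gaussianReal 0 1) := IsGaussian.integrable_id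
  rw [gaussianReal_of_var_ne_zero 0 one_ne_zero] at hint ⊢
  rw [integrable_withDensity_iff_integrable_smul₀' (by fun_prop)
    (Filter.Eventually.of_forall fun x => gaussianPDF_lt_top)] at hint
  rw [setIntegral_withDensity_eq_setIntegral_toReal_smul (by fun_prop)
    (Filter.Eventually.of_forall fun x => gaussianPDF_lt_top) _ measurableSet_Ioi]
  simp only [toReal_gaussianPDF, smul_eq_mul] at hint ⊢
  have := integral_Ioi_of_hasDerivAt_of_tendsto' (a := s) (f := gaussianPDFReal 0 1)
    (fun x _ => pdf_hasDeriv x) (by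
      refine (Integrable.integrableOn ?_)
      refine hint.neg.congr (Filter.Eventually.of_forall fun x => ?_)
      simp [mul_comm]) pdf_tendsto
  rw [integral_neg] at this
  simp_rw [mul_comm _ (_ : ℝ)] at this ⊢
  linarith

open ProbabilityTheory in
lemma ker_int (s : ℝ) : ∫⁻ z : ℝ × ℝ, kerK z.1 z.2 s ∂((gaussianReal 0 1).prod (gaussianReal 0 1))
    = gaussianPDF 0 1 s := by
  set g := gaussianReal 0 1 with hg
  have hint : Integrable (fun x : ℝ => x) g := IsGaussian.integrable_id
  have hna : NullSingletonClass g := nullSingletonClass_gaussianReal one_ne_zero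
  have hxs : Integrable (fun x : ℝ => x - s) g := hint.sub (integrable_const s)
  have hsx : Integrable (fun x : ℝ => s - x) g := (integrable_const s).sub hint
  unfold kerK
  have mi : Measurable ((Iio s).indicator (1 : ℝ → ℝ≥0∞)) := measurable_one.indicator measurableSet_Iio
  have mi' : Measurable ((Ici s).indicator (1 : ℝ → ℝ≥0∞)) := measurable_one.indicator measurableSet_Ici
  rw [lintegral_add_left (by fun_prop),
    lintegral_prod_mul (f := fun x => ENNReal.ofReal (x - s)) (by fun_prop) mi.aemeasurable,
    lintegral_prod_mul (g := fun y => ENNReal.ofReal (s - y)) mi'.aemeasurable (by fun_prop),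
    lintegral_indicator_one measurableSet_Iio, lintegral_indicator_one measurableSet_Ici]
  have hP : ∫⁻ x, ENNReal.ofReal (x - s) ∂g = ENNReal.ofReal (∫ x, max (x - s) 0 ∂g) := by
    rw [ofReal_integral_eq_lintegral_ofReal hxs.pos_part
      (Filter.Eventually.of_forall fun x => le_max_right _ _)]
    refine lintegral_congr fun x => ?_
    simp
  have hN : ∫⁻ x, ENNReal.ofReal (s - x) ∂g = ENNReal.ofReal (∫ x, max (s - x) 0 ∂g) := by
    rw [ofReal_integral_eq_lintegral_ofReal hsx.pos_part
      (Filter.Eventually.of_forall fun x => le_max_right _ _)]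
    refine lintegral_congr fun x => ?_
    simp
  have hp0 : 0 ≤ ∫ x, max (x - s) 0 ∂g := integral_nonneg fun x => le_max_right _ _
  have hn0 : 0 ≤ ∫ x, max (s - x) 0 ∂g := integral_nonneg fun x => le_max_right _ _
  have hPv : ∫ x, max (x - s) 0 ∂g = gaussianPDFReal 0 1 s - s * g.real (Ioi s) := by
    have : ∀ x, max (x - s) 0 = (Ioi s).indicator (fun x => x - s) x := by
      intro x
      by_cases h : s < x
      · simp [indicator, h, h.le]
      · simp only [indicator, mem_Ioi, h, if_false]
        exact max_eq_right (by linarith)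
    simp_rw [this]
    rw [integral_indicator measurableSet_Ioi, integral_sub hint.integrableOn (integrable_const s).integrableOn,
      gauss_tail]
    simp [mul_comm]
  have hPN : (∫ x, max (x - s) 0 ∂g) - ∫ x, max (s - x) 0 ∂g = - s := by
    rw [← integral_sub hxs.pos_part hsx.pos_part]
    have : ∀ x, max (x - s) 0 - max (s - x) 0 = x - s := by
      intro x
      rcases le_total x s with h | h
      · rw [max_eq_right (by linarith), max_eq_left (by linarith)]; ring
      · rw [max_eq_left (by linarith), max_eq_right (by linarith)]; ring
    simp_rw [this]
    rw [integral_sub hint (integrable_const s)]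
    have : ∫ x, x ∂g = 0 := by rw [hg, integral_id_gaussianReal]
    simp [this]
  have hpq : g.real (Iio s) + g.real (Ici s) = 1 := by
    have := probReal_add_probReal_compl (μ := g) (s := Iio s) measurableSet_Iio
    simpa using this
  have hcl : g.real (Ici s) = g.real (Ioi s) := by
    simp only [Measure.real, measure_congr (Ioi_ae_eq_Ici (a := s) (μ := g))]
  rw [hP, hN, ← ofReal_measureReal (μ := g) (s := Iio s), ← ofReal_measureReal (μ := g) (s := Ici s),
    ← ENNReal.ofReal_mul hp0, ← ENNReal.ofReal_mul (by positivity), ← ENNReal.ofReal_add (by positivity) (by positivity),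
    gaussianPDF]
  congr 1
  rw [hcl] at hpq ⊢
  set P := ∫ x, max (x - s) 0 ∂g
  have : ∫ x, max (s - x) 0 ∂g = P + s := by linarith
  rw [this]
  have : P * g.real (Iio s) + g.real (Ioi s) * (P + s) = P * (g.real (Iio s) + g.real (Ioi s)) + s * g.real (Ioi s) := by ring
  rw [this, hpq, hPv]; ring

open ProbabilityTheory in
theorem gauss_poincare_one (f : ℝ → ℝ) (hf : ContDiff ℝ 1 f)
    (h2 : MemLp f 2 (gaussianReal 0 1))
    (hd2 : Integrable (fun s => deriv f s ^ 2) (gaussianReal 0 1)) :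
    (∫ x, f x ^ 2 ∂(gaussianReal 0 1)) - (∫ x, f x ∂(gaussianReal 0 1)) ^ 2
      ≤ ∫ x, deriv f x ^ 2 ∂(gaussianReal 0 1) := by
  have hd : Continuous (deriv f) := hf.continuous_deriv le_rfl
  have hmd : Measurable (fun s => ENNReal.ofReal (deriv f s ^ 2)) :=
    ((hd.pow 2).measurable).ennreal_ofReal
  set g := gaussianReal 0 1 with hg
  have hfst : MemLp (fun z : ℝ × ℝ => f z.1) 2 (g.prod g) :=
    h2.comp_measurePreserving measurePreserving_fst
  have hsnd : MemLp (fun z : ℝ × ℝ => f z.2) 2 (g.prod g) :=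
    h2.comp_measurePreserving measurePreserving_snd
  have hD : MemLp (fun z : ℝ × ℝ => f z.1 - f z.2) 2 (g.prod g) := hfst.sub hsnd
  have e1 : ∫ z : ℝ × ℝ, (f z.1 - f z.2) ^ 2 ∂(g.prod g)
      = 2 * ((∫ x, f x ^ 2 ∂g) - (∫ x, f x ∂g) ^ 2) := by
    rw [integral_prod _ hD.integrable_sq]
    have : ∀ x, ∫ y, (f x - f y) ^ 2 ∂g
        = (f x - (∫ y, f y ∂g)) ^ 2 + ((∫ y, f y ^ 2 ∂g) - (∫ y, f y ∂g) ^ 2) := by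
      intro x
      have : ∀ y, (f x - f y) ^ 2 = (f y - f x) ^ 2 := fun y => by ring
      simp_rw [this]
      rw [integral_sub_const_sq g f h2]; ring
    simp_rw [this]
    have h3 : Integrable (fun x => (f x - ∫ y, f y ∂g) ^ 2) g :=
      (h2.sub (memLp_const _)).integrable_sq
    rw [integral_add h3 (integrable_const _),
      integral_sub_const_sq g f h2]
    simp; ring
  have e2 : ENNReal.ofReal (∫ z : ℝ × ℝ, (f z.1 - f z.2) ^ 2 ∂(g.prod g))
      ≤ ENNReal.ofReal (2 * ∫ x, deriv f x ^ 2 ∂g) := by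
    rw [ofReal_integral_eq_lintegral_ofReal hD.integrable_sq
      (Filter.Eventually.of_forall fun z => sq_nonneg _)]
    have k1 := kerK_meas
    have k2 : Measurable (fun p : (ℝ × ℝ) × ℝ => kerK p.1.2 p.1.1 p.2) :=
      kerK_meas.comp (f := fun p : (ℝ × ℝ) × ℝ => ((p.1.2, p.1.1), p.2)) (by fun_prop)
    calc ∫⁻ z : ℝ × ℝ, ENNReal.ofReal ((f z.1 - f z.2) ^ 2) ∂(g.prod g)
        ≤ ∫⁻ z : ℝ × ℝ, (∫⁻ s, (kerK z.1 z.2 s + kerK z.2 z.1 s) * ENNReal.ofReal ((deriv f s) ^ 2))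
            ∂(g.prod g) := lintegral_mono fun z => cs_lintegral f hf z.1 z.2
      _ = ∫⁻ s, ∫⁻ z : ℝ × ℝ, (kerK z.1 z.2 s + kerK z.2 z.1 s) * ENNReal.ofReal ((deriv f s) ^ 2)
            ∂(g.prod g) := by
          rw [lintegral_lintegral_swap]
          exact ((k1.add k2).mul (hmd.comp measurable_snd)).aemeasurable
      _ = ∫⁻ s, 2 * (gaussianPDF 0 1 s * ENNReal.ofReal ((deriv f s) ^ 2)) := by
          refine lintegral_congr fun s => ?_
          have m1 : Measurable (fun z : ℝ × ℝ => kerK z.1 z.2 s) :=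
            k1.comp (f := fun z : ℝ × ℝ => (z, s)) (by fun_prop)
          have m2 : Measurable (fun z : ℝ × ℝ => kerK z.2 z.1 s) :=
            k2.comp (f := fun z : ℝ × ℝ => (z, s)) (by fun_prop)
          rw [lintegral_mul_const _ (by fun_prop), lintegral_add_left m1, ker_int]
          have : ∫⁻ z : ℝ × ℝ, kerK z.2 z.1 s ∂(g.prod g) = gaussianPDF 0 1 s := by
            rw [← ker_int, ← lintegral_prod_swap]; rfl
          rw [this]; ring
      _ = 2 * ∫⁻ s, ENNReal.ofReal ((deriv f s) ^ 2) ∂g := by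
          rw [lintegral_const_mul _ (by fun_prop), hg, gaussianReal_of_var_ne_zero 0 one_ne_zero,
            lintegral_withDensity_eq_lintegral_mul _ (by fun_prop) hmd]
          rfl
      _ = _ := by
          rw [ENNReal.ofReal_mul (by norm_num), ofReal_integral_eq_lintegral_ofReal hd2
            (Filter.Eventually.of_forall fun z => sq_nonneg _)]
          simp
  have h0 : 0 ≤ ∫ x, deriv f x ^ 2 ∂g := integral_nonneg fun x => sq_nonneg _
  rw [ENNReal.ofReal_le_ofReal_iff (by positivity), e1] at e2
  linarith

/-- insertion of a first zero coordinate -/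
def consL (n : ℕ) : (Fin n → ℝ) →L[ℝ] (Fin (n + 1) → ℝ) :=
  ContinuousLinearMap.pi (Fin.cases 0 (fun i => ContinuousLinearMap.proj i))

lemma consL_zero (n : ℕ) (y : Fin n → ℝ) : consL n y 0 = 0 := by simp [consL]
lemma consL_succ (n : ℕ) (y : Fin n → ℝ) (i : Fin n) : consL n y i.succ = y i := by simp [consL]

lemma consL_single (n : ℕ) (i : Fin n) : consL n (Pi.single i 1) = Pi.single i.succ 1 := by
  ext j
  refine Fin.cases ?_ (fun j => ?_) j
  · simp [consL_zero, Pi.single_apply, (Fin.succ_ne_zero i).symm]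
  · simp [consL_succ, Pi.single_apply]

lemma piFin_symm (n : ℕ) (p : ℝ × (Fin n → ℝ)) :
    (MeasurableEquiv.piFinSuccAbove (fun _ : Fin (n + 1) => ℝ) 0).symm p
      = p.1 • (Pi.single 0 1 : Fin (n + 1) → ℝ) + consL n p.2 := by
  ext j
  refine Fin.cases ?_ (fun j => ?_) j
  · simp [consL_zero, MeasurableEquiv.piFinSuccAbove, Fin.insertNthEquiv]
  · simp [consL_succ, MeasurableEquiv.piFinSuccAbove, Fin.insertNthEquiv]

open ProbabilityTheory in
theorem gauss_poincare_pi (n : ℕ) : ∀ (f : (Fin n → ℝ) → ℝ), ContDiff ℝ 1 f →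
    MemLp f 2 (Measure.pi fun _ : Fin n => gaussianReal 0 1) →
    (∀ i, Integrable (fun x => (fderiv ℝ f x (Pi.single i 1)) ^ 2)
      (Measure.pi fun _ : Fin n => gaussianReal 0 1)) →
    (∫ x, f x ^ 2 ∂(Measure.pi fun _ : Fin n => gaussianReal 0 1))
      - (∫ x, f x ∂(Measure.pi fun _ : Fin n => gaussianReal 0 1)) ^ 2
      ≤ ∫ x, ∑ i, (fderiv ℝ f x (Pi.single i 1)) ^ 2
        ∂(Measure.pi fun _ : Fin n => gaussianReal 0 1) := by
  induction n with
  | zero =>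
    intro f hf h2 hd
    have : ∀ x : Fin 0 → ℝ, f x = f 0 := fun x => by rw [Subsingleton.elim x 0]
    simp [this]
  | succ n ih =>
    intro f hf h2 hd
    set g := gaussianReal 0 1 with hg
    set e := MeasurableEquiv.piFinSuccAbove (fun _ : Fin (n + 1) => ℝ) 0 with he
    have hmp : MeasurePreserving e.symm (g.prod (Measure.pi fun _ : Fin n => g))
        (Measure.pi fun _ : Fin (n + 1) => g) :=
      (measurePreserving_piFinSuccAbove (fun _ : Fin (n + 1) => g) 0).symm
    have hes : ∀ p, e.symm p = p.1 • (Pi.single 0 1 : Fin (n + 1) → ℝ) + consL n p.2 := piFin_symm n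
    have hdf : Differentiable ℝ f := hf.differentiable one_ne_zero
    have hsum : ∀ x, ∑ i, (fderiv ℝ f x (Pi.single i 1)) ^ 2
        = (fderiv ℝ f x (Pi.single 0 1)) ^ 2
          + ∑ i : Fin n, (fderiv ℝ f x (Pi.single i.succ 1)) ^ 2 := fun x => Fin.sum_univ_succ _
    simp_rw [hsum]
    rw [integral_add (hd 0) (integrable_finset_sum _ fun i _ => hd _)]
    rw [← hmp.integral_comp' (g := fun x => f x ^ 2), ← hmp.integral_comp' (g := f),
      ← hmp.integral_comp' (g := fun x => (fderiv ℝ f x (Pi.single 0 1)) ^ 2),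
      ← hmp.integral_comp' (g := fun x => ∑ i : Fin n, (fderiv ℝ f x (Pi.single i.succ 1)) ^ 2)]
    have hi : ∀ i, Integrable (fun p => (fderiv ℝ f (e.symm p) (Pi.single i 1)) ^ 2)
        (g.prod (Measure.pi fun _ : Fin n => g)) := fun i =>
      (hmp.integrable_comp_emb e.symm.measurableEmbedding).2 (hd i)
    have hi2 : ∀ᵐ t ∂g, ∀ i, Integrable (fun y => (fderiv ℝ f (e.symm (t, y)) (Pi.single i 1)) ^ 2)
        (Measure.pi fun _ : Fin n => g) := by
      rw [ae_all_iff]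
      exact fun i => (hi i).prod_right_ae
    refine efron g (Measure.pi fun _ : Fin n => g) (fun p => f (e.symm p))
      (fun p => (fderiv ℝ f (e.symm p) (Pi.single 0 1)) ^ 2)
      (fun p => ∑ i : Fin n, (fderiv ℝ f (e.symm p) (Pi.single i.succ 1)) ^ 2)
      (h2.comp_measurePreserving hmp) (hi 0) (integrable_finset_sum _ fun i _ => hi _) ?_ ?_
    · filter_upwards [hi2] with t ht hm _
      have hfd : ∀ y, HasFDerivAt (fun y => f (e.symm (t, y)))
          ((fderiv ℝ f (e.symm (t, y))).comp (consL n)) y := by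
        intro y
        have h1 : HasFDerivAt (fun y => e.symm (t, y)) (consL n) y := by
          simp_rw [hes]
          exact (consL n).hasFDerivAt.const_add _
        exact (hdf _).hasFDerivAt.comp y h1
      have hfe : ∀ y (i : Fin n), fderiv ℝ (fun y => f (e.symm (t, y))) y (Pi.single i 1)
          = fderiv ℝ f (e.symm (t, y)) (Pi.single i.succ 1) := by
        intro y i
        rw [(hfd y).fderiv, ContinuousLinearMap.comp_apply, consL_single]
      have hc : ContDiff ℝ 1 (fun y => f (e.symm (t, y))) := by
        simp_rw [hes]
        exact hf.comp (contDiff_const.add (consL n).contDiff)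
      have := ih (fun y => f (e.symm (t, y))) hc hm (fun i => by simp_rw [hfe]; exact ht _)
      simpa only [hfe] using this
    · refine Filter.Eventually.of_forall fun y hm hint => ?_
      have hfd : ∀ t, HasDerivAt (fun t => f (e.symm (t, y)))
          (fderiv ℝ f (e.symm (t, y)) (Pi.single 0 1)) t := by
        intro t
        have h1 : HasDerivAt (fun t => e.symm (t, y)) (Pi.single 0 1 : Fin (n + 1) → ℝ) t := by
          simp_rw [hes]
          simpa using ((hasDerivAt_id t).smul_const (Pi.single 0 1 : Fin (n + 1) → ℝ)).add_const
            (consL n y)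
        exact (hdf _).hasFDerivAt.comp_hasDerivAt t h1
      have hfe : ∀ t, deriv (fun t => f (e.symm (t, y))) t
          = fderiv ℝ f (e.symm (t, y)) (Pi.single 0 1) := fun t => (hfd t).deriv
      have hc : ContDiff ℝ 1 (fun t => f (e.symm (t, y))) := by
        simp_rw [hes]
        exact hf.comp ((contDiff_id.smul contDiff_const).add contDiff_const)
      have := gauss_poincare_one (fun t => f (e.symm (t, y))) hc hm (by simpa only [hfe] using hint)
      simpa only [hfe] using this

open ProbabilityTheory in
lemma pi_gauss_density (d : ℕ) :
    (Measure.pi fun _ : Fin d => gaussianReal 0 1)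
      = (volume : Measure (Fin d → ℝ)).withDensity
        (fun x => ENNReal.ofReal (∏ i, gaussianPDFReal 0 1 (x i))) := by
  symm
  refine (Measure.pi_eq fun s hs => ?_).symm
  rw [withDensity_apply _ (MeasurableSet.univ_pi hs), volume_pi, Measure.restrict_pi_pi,
    ← ofReal_integral_eq_lintegral_ofReal]
  · rw [integral_fintype_prod_eq_prod (f := fun _ x => gaussianPDFReal 0 1 x),
      ENNReal.ofReal_prod_of_nonneg]
    · refine Finset.prod_congr rfl fun i _ => ?_
      rw [gaussianReal_apply_eq_integral _ one_ne_zero]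
    · exact fun i _ => integral_nonneg fun x => gaussianPDFReal_nonneg _ _ _
  · exact Integrable.fintype_prod fun i => (integrable_gaussianPDFReal 0 1).restrict
  · exact Filter.Eventually.of_forall fun x => Finset.prod_nonneg fun i _ => gaussianPDFReal_nonneg _ _ _

open ProbabilityTheory in
lemma gamma_eq (d : ℕ) :
    (volume : Measure (EuclideanSpace ℝ (Fin d))).withDensity (fun z =>
      ENNReal.ofReal ((2 * π) ^ (-(d:ℝ)/2) * exp (-‖z‖ ^ 2 / 2)))
    = Measure.map (MeasurableEquiv.toLp 2 (Fin d → ℝ)) (Measure.pi fun _ : Fin d => gaussianReal 0 1) := by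
  have hp : ∀ x : Fin d → ℝ, ∏ i, gaussianPDFReal 0 1 (x i)
      = (2 * π) ^ (-(d:ℝ)/2) * exp (-‖WithLp.toLp 2 x‖ ^ 2 / 2) := by
    intro x
    simp only [gaussianPDFReal, Finset.prod_mul_distrib, ← Real.exp_sum]
    congr 1
    · simp only [NNReal.coe_one, mul_one, Finset.prod_const, Finset.card_univ, Fintype.card_fin]
      rw [Real.sqrt_eq_rpow, ← Real.rpow_neg (by positivity), ← Real.rpow_natCast,
        ← Real.rpow_mul (by positivity)]
      congr 1; ring
    · congr 1
      rw [EuclideanSpace.norm_sq_eq]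
      simp [neg_div, Finset.sum_div]
  rw [pi_gauss_density]
  have hmp := EuclideanSpace.volume_preserving_symm_measurableEquiv_toLp (Fin d)
  simp_rw [hp]
  ext s hs
  rw [withDensity_apply _ hs, Measure.map_apply (MeasurableEquiv.measurable _) hs,
    withDensity_apply _ ((MeasurableEquiv.measurable _) hs)]
  have hmp2 := hmp.symm
  rw [← hmp2.setLIntegral_comp_preimage_emb (MeasurableEquiv.measurableEmbedding _)]
  rfl

theorem gauss_poincare_E (d : ℕ) (f : EuclideanSpace ℝ (Fin d) → ℝ) (hf : ContDiff ℝ 1 f)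
    (γ : Measure (EuclideanSpace ℝ (Fin d)))
    (hγ : γ = volume.withDensity (fun z =>
      ENNReal.ofReal ((2 * π) ^ (-(d:ℝ)/2) * exp (-‖z‖ ^ 2 / 2))))
    (h2 : MemLp f 2 γ) (hd : Integrable (fun x => ‖gradient f x‖ ^ 2) γ) :
    (∫ x, f x ^ 2 ∂γ) - (∫ x, f x ∂γ) ^ 2 ≤ ∫ x, ‖gradient f x‖ ^ 2 ∂γ := by
  rw [gamma_eq] at hγ
  have hemb := (MeasurableEquiv.toLp 2 (Fin d → ℝ)).measurableEmbedding
  rw [hγ, hemb.integral_map, hemb.integral_map, hemb.integral_map]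
  rw [hγ, hemb.memLp_map_measure_iff] at h2
  rw [hγ, hemb.integrable_map_iff] at hd
  have hdf : Differentiable ℝ f := hf.differentiable one_ne_zero
  let L : (Fin d → ℝ) →L[ℝ] EuclideanSpace ℝ (Fin d) :=
    (PiLp.continuousLinearEquiv 2 ℝ (fun _ : Fin d => ℝ)).symm.toContinuousLinearMap
  have hfe : ∀ x i, fderiv ℝ (fun x => f (MeasurableEquiv.toLp 2 (Fin d → ℝ) x)) x (Pi.single i 1)
      = gradient f (MeasurableEquiv.toLp 2 (Fin d → ℝ) x) i := by
    intro x i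
    have h1 : HasFDerivAt (fun x => f (L x)) ((fderiv ℝ f (L x)).comp L) x :=
      (hdf _).hasFDerivAt.comp x L.hasFDerivAt
    have h3 : fderiv ℝ (fun x => f (MeasurableEquiv.toLp 2 (Fin d → ℝ) x)) x
      = (fderiv ℝ f (L x)).comp L := h1.fderiv
    rw [h3, ContinuousLinearMap.comp_apply]
    have h4 : L (Pi.single i 1) = EuclideanSpace.single i (1 : ℝ) := rfl
    have h5 := ((hdf (L x)).hasGradientAt).hasFDerivAt.fderiv
    rw [h4, h5, InnerProductSpace.toDual_apply_apply, EuclideanSpace.inner_single_right]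
    simp; rfl
  have hs : ∀ x, ∑ i, (gradient f (MeasurableEquiv.toLp 2 (Fin d → ℝ) x) i) ^ 2
      = ‖gradient f (MeasurableEquiv.toLp 2 (Fin d → ℝ) x)‖ ^ 2 := by
    intro x; rw [EuclideanSpace.norm_sq_eq]; simp
  have hc : ContDiff ℝ 1 (fun x => f (MeasurableEquiv.toLp 2 (Fin d → ℝ) x)) :=
    hf.comp L.contDiff
  have key := gauss_poincare_pi d (fun x => f (MeasurableEquiv.toLp 2 (Fin d → ℝ) x)) hc h2 ?_
  · simp only [hfe, hs] at key
    exact key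
  · intro i
    simp only [hfe]
    have hcg : Continuous (gradient f) := by
      unfold gradient
      exact (LinearIsometryEquiv.continuous _).comp (hf.continuous_fderiv one_ne_zero)
    have hcm : Continuous (fun x : Fin d → ℝ => gradient f (MeasurableEquiv.toLp 2 (Fin d → ℝ) x) i) :=
      (EuclideanSpace.proj (𝕜 := ℝ) i).continuous.comp (hcg.comp L.continuous)
    refine Integrable.mono' hd (hcm.pow 2).aestronglyMeasurable ?_
    refine Filter.Eventually.of_forall fun x => ?_
    rw [Real.norm_eq_abs, abs_of_nonneg (sq_nonneg _), Function.comp_apply, ← hs]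
    exact Finset.single_le_sum (f := fun i => (gradient f (MeasurableEquiv.toLp 2 (Fin d → ℝ) x) i) ^ 2)
      (fun j _ => sq_nonneg _) (Finset.mem_univ i)

lemma grad_slice (d : ℕ) (f : EuclideanSpace ℝ (Fin d) → ℝ) (hf : ContDiff ℝ 1 f) (a : ℝ)
    (c x : EuclideanSpace ℝ (Fin d)) :
    gradient (fun z => f (a • z + c)) x = a • gradient f (a • x + c) := by
  have hdf : Differentiable ℝ f := hf.differentiable one_ne_zero
  have h1 : HasFDerivAt (fun z : EuclideanSpace ℝ (Fin d) => a • z + c)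
      (a • ContinuousLinearMap.id ℝ (EuclideanSpace ℝ (Fin d))) x :=
    ((hasFDerivAt_id x).const_smul a).add_const c
  have h2 := (hdf (a • x + c)).hasFDerivAt.comp x h1
  have h3 : fderiv ℝ (fun z => f (a • z + c)) x = a • fderiv ℝ f (a • x + c) := by
    have := h2.fderiv
    simp only [ContinuousLinearMap.comp_smul, ContinuousLinearMap.comp_id] at this
    exact this
  unfold gradient
  rw [h3, map_smulₛₗ]; simp

/-- **Poincaré inequality along the Gaussian interpolation.** If `ν` satisfies a
Poincaré inequality with constant `C > 0`, then `μ = Law(α Z + β X₁)` (with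
`Z ~ N(0, I_d)` independent of `X₁ ~ ν`) satisfies a Poincaré inequality with
constant `α² + β² C`. -/
theorem poincare_along_gaussian_interpolation
    (d : ℕ)
    (ν : Measure (EuclideanSpace ℝ (Fin d))) [IsProbabilityMeasure ν]
    (C : ℝ) (hC : 0 < C)
    -- ν satisfies the Poincaré inequality with constant C
    (hPI : ∀ g : EuclideanSpace ℝ (Fin d) → ℝ, ContDiff ℝ 1 g →
      Integrable (fun x => (g x) ^ 2) ν →
      Integrable (fun x => ‖gradient g x‖ ^ 2) ν →
      (∫ x, (g x) ^ 2 ∂ν) - (∫ x, g x ∂ν) ^ 2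
        ≤ C * ∫ x, ‖gradient g x‖ ^ 2 ∂ν)
    (α β : ℝ) (hα : 0 ≤ α) (hβ : 0 ≤ β)
    -- the standard Gaussian measure γ_d
    (γ : Measure (EuclideanSpace ℝ (Fin d)))
    (hγ : γ = volume.withDensity (fun z =>
      ENNReal.ofReal ((2 * π) ^ (-(d:ℝ)/2) * exp (-‖z‖ ^ 2 / 2))))
    -- μ = Law(α Z + β X₁)
    (μ : Measure (EuclideanSpace ℝ (Fin d)))
    (hμ : μ = Measure.map (fun q : EuclideanSpace ℝ (Fin d) × EuclideanSpace ℝ (Fin d) =>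
      α • q.1 + β • q.2) (γ.prod ν)) :
    ∀ f : EuclideanSpace ℝ (Fin d) → ℝ, ContDiff ℝ 1 f →
      Integrable (fun x => (f x) ^ 2) μ →
      Integrable (fun x => ‖gradient f x‖ ^ 2) μ →
      (∫ x, (f x) ^ 2 ∂μ) - (∫ x, f x ∂μ) ^ 2
        ≤ (α ^ 2 + β ^ 2 * C) * ∫ x, ‖gradient f x‖ ^ 2 ∂μ := by
  intro f hf h2 hd
  have hγp : IsProbabilityMeasure γ := by
    rw [hγ, gamma_eq]
    exact Measure.isProbabilityMeasure_map (MeasurableEquiv.measurable _).aemeasurable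
  have hT : Measurable (fun q : EuclideanSpace ℝ (Fin d) × EuclideanSpace ℝ (Fin d) =>
      α • q.1 + β • q.2) := by fun_prop
  have hcg : Continuous (gradient f) := by
    unfold gradient
    exact (LinearIsometryEquiv.continuous _).comp (hf.continuous_fderiv one_ne_zero)
  have hcf : Continuous f := hf.continuous
  have hmf2 : AEStronglyMeasurable (fun x => f x ^ 2) μ := (hcf.pow 2).aestronglyMeasurable
  have hmf : AEStronglyMeasurable f μ := hcf.aestronglyMeasurable
  have hmg : AEStronglyMeasurable (fun x => ‖gradient f x‖ ^ 2) μ :=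
    (hcg.norm.pow 2).aestronglyMeasurable
  rw [hμ] at hmf2 hmf hmg h2 hd ⊢
  rw [integral_map hT.aemeasurable hmf2, integral_map hT.aemeasurable hmf,
    integral_map hT.aemeasurable hmg]
  rw [integrable_map_measure hmf2 hT.aemeasurable] at h2
  rw [integrable_map_measure hmg hT.aemeasurable] at hd
  have hF : MemLp (fun q : EuclideanSpace ℝ (Fin d) × EuclideanSpace ℝ (Fin d) =>
      f (α • q.1 + β • q.2)) 2 (γ.prod ν) :=
    (memLp_two_iff_integrable_sq (hcf.measurable.comp hT).aestronglyMeasurable).2 h2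
  have key := efron γ ν (fun q => f (α • q.1 + β • q.2))
    (fun q => α ^ 2 * ‖gradient f (α • q.1 + β • q.2)‖ ^ 2)
    (fun q => C * (β ^ 2 * ‖gradient f (α • q.1 + β • q.2)‖ ^ 2)) hF
    (hd.const_mul _) ((hd.const_mul _).const_mul _) ?_ ?_
  · rw [integral_const_mul, integral_const_mul, integral_const_mul] at key
    linarith
  · refine Filter.Eventually.of_forall fun z hm hint => ?_
    have hg : ∀ x, ‖gradient (fun x => f (α • z + β • x)) x‖ ^ 2
        = β ^ 2 * ‖gradient f (α • z + β • x)‖ ^ 2 := by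
      intro x
      simp_rw [add_comm (α • z)]
      rw [grad_slice d f hf β (α • z) x, norm_smul, mul_pow, Real.norm_eq_abs, sq_abs]
    have hint' : Integrable (fun x => β ^ 2 * ‖gradient f (α • z + β • x)‖ ^ 2) ν := by
      have := hint.const_mul C⁻¹
      simpa only [inv_mul_cancel_left₀ hC.ne'] using this
    have := hPI (fun x => f (α • z + β • x))
      (hf.comp (contDiff_const.add (contDiff_id.const_smul β))) hm.integrable_sq
      (by simpa only [hg] using hint')
    simp only [hg] at this
    rwa [integral_const_mul C]
  · refine Filter.Eventually.of_forall fun x hm hint => ?_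
    have hg : ∀ z, ‖gradient (fun z => f (α • z + β • x)) z‖ ^ 2
        = α ^ 2 * ‖gradient f (α • z + β • x)‖ ^ 2 := by
      intro z
      rw [grad_slice d f hf α (β • x) z, norm_smul, mul_pow, Real.norm_eq_abs, sq_abs]
    have := gauss_poincare_E d (fun z => f (α • z + β • x))
      (hf.comp ((contDiff_id.const_smul α).add contDiff_const)) γ hγ hm
      (by simpa only [hg] using hint)
    simpa only [hg] using this
end
end
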